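/- Let p ≥ 3 be a prime, let d be an integer with 2 ≤ d ≤ p−1, and let K be a number field containing a primitive p-th root of unity. Then there exists an infinite set of intermediate fields L of a fixed algebraic closure K̄ over K, pairwise non-isomorphic as K-algebras, each satisfying [L:K] = d and rank_p Cl(L) ≥ 3 + rank_p Cl(K). -/

import Mathlib

/-!
Put `m = d - 1`, and let `L = K(y)` for a root `y` of `(Y - 1)^m (Y - v^p) = a^p Y`, with parameters
`a`, `v` in the ring of integers of `K` subject to congruence conditions. The field `L` carries three
elements that generate unramified extensions of exponent `p` up to a controlled set of primes: `y`,
`y - v^p`, and an element `α` that descends, from `L(X)` with `X^p = y` and up to `p`-th powers, the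
resolvent `∏ (ζ^j X - 1)^(jm) ∏ (ζ^j X - v)^j` (`ClRank.exists_alpha`; the descent is Hilbert 90).

An integer `n` is fixed that is divisible by all primes over `p` and lies in ideals representing all
classes of `K`. The defining equation forces the three elements to have valuations divisible by `p` at
places prime to `n` (`ClRank.away`), and to be local `p`-th powers at places dividing `n`
(`ClRank.near`). They are independent modulo `p`-th powers, as is tested at three auxiliary places
(`ClRank.indep`).

From such elements the rank bound follows (`ClRank.rank_main`). Since `p` is prime to `d`, the norm
makes `Cl(K)/p` a direct factor of `Cl(L)/p` (`ClRank.index_sup`). Let `H ≤ Cl(L)` be generated by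
`p`-th powers and the classes of the primes dividing `n`; it contains the image of `Cl(K)`. If the rank
of `Cl(L)` were less than `3` more than that of `Cl(K)`, then `H` together with the classes of two
primes would be all of `Cl(L)` (`ClRank.exists_few`). The residue symbols at these two primes
(`ClRank.exists_symbol`) have a common nontrivial kernel on the span of the three elements, which
contains some `β`. The extension `L(β^{1/p})/L` is everywhere unramified, and all the primes above
split completely in it, so the norm on class groups is surjective. This is impossible in an
unramified cyclic extension of degree `p` (`ClRank.norm_not_surj`): surjectivity would bound the class
number of `L` by the number of ambiguous classes, which conflicts with the Herbrand quotient of the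
units (`ClRank.units_ineq`), via Hilbert 90. No class field theory is used.

The parameters come from the Chinese remainder theorem (`ClRank.exists_data`). One more condition, at a
place `l` of large residue characteristic `q` where `a` is a uniformizer and `v^p - 1` is divisible by
`a^p`, makes `l` totally ramified in `L`. Hence `[L : K] = d`, and `q` divides the discriminant of `L`
(`ClRank.degree_discr`), so the discriminants are unbounded and the fields fall into infinitely many
isomorphism classes.
-/

open NumberField

/-- The `n`-rank of a commutative group `G`: the largest `r` such that `G` contains a
subgroup isomorphic to `(ℤ/nℤ)^r`, i.e. such that there is an injective homomorphism
`(ℤ/nℤ)^r → G`. -/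
noncomputable def nRank (n : ℕ) (G : Type*) [CommGroup G] : ℕ :=
  sSup {r : ℕ | ∃ φ : (Fin r → ZMod n) →+ Additive G, Function.Injective φ}

/-! ### Indices in finitely generated abelian groups and the Herbrand quotient -/

namespace ClRank

/-- A finitely generated abelian group `A` satisfies `[A : pA] = p ^ rank A * #A[p]`. -/
lemma index_range_nsmul_eq (A : Type*) [AddCommGroup A] [Module.Finite ℤ A] (p : ℕ) (hp : p ≠ 0) :
    (nsmulAddMonoidHom p : A →+ A).range.index =
      p ^ Module.finrank ℤ A * Nat.card (nsmulAddMonoidHom p : A →+ A).ker := by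
  set T := Submodule.torsion ℤ A with hT
  set n : A →+ A := nsmulAddMonoidHom p with hn
  have hTfin : Finite T := Module.finite_of_fg_torsion T (Submodule.torsion_isTorsion)
  let q : A →+ A ⧸ T := T.mkQ.toAddMonoidHom
  have hq : Function.Surjective q := T.mkQ_surjective
  have hqk : q.ker = T.toAddSubgroup := by
    ext x; simp [q, AddMonoidHom.mem_ker]
  have h1 : (n.range ⊔ T.toAddSubgroup).index = p ^ Module.finrank ℤ A := by
    have := AddSubgroup.index_map n.range q
    rw [hqk, AddMonoidHom.range_eq_top.2 hq, AddSubgroup.index_top, mul_one] at this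
    rw [← this]
    have h2 : n.range.map q = (nsmulAddMonoidHom p : (A ⧸ T) →+ (A ⧸ T)).range := by
      ext y
      simp only [AddSubgroup.mem_map, AddMonoidHom.mem_range, hn, nsmulAddMonoidHom_apply]
      constructor
      · rintro ⟨_, ⟨x, rfl⟩, rfl⟩
        exact ⟨q x, by simp⟩
      · rintro ⟨x, rfl⟩
        obtain ⟨x, rfl⟩ := hq x
        exact ⟨_, ⟨x, rfl⟩, by simp⟩
    rw [h2, AddSubgroup.index_range_nsmul]
    congr 1
    have := Submodule.finrank_quotient_add_finrank T
    have h3 : Module.finrank ℤ T = 0 := by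
      rw [Module.finrank_eq_zero_iff_isTorsion]; exact Submodule.torsion_isTorsion
    omega
  have h2 : n.range.relIndex T.toAddSubgroup = Nat.card n.ker := by
    have h3 : n.range ⊓ T.toAddSubgroup = T.toAddSubgroup.map n := by
      ext x
      simp only [AddSubgroup.mem_inf, AddMonoidHom.mem_range, AddSubgroup.mem_map,
        Submodule.mem_toAddSubgroup]
      constructor
      · rintro ⟨⟨y, rfl⟩, h⟩
        refine ⟨y, ?_, rfl⟩
        rw [hT, Submodule.mem_torsion_iff] at h ⊢
        obtain ⟨a, ha⟩ := h
        refine ⟨a * ⟨p, by simpa using hp⟩, ?_⟩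
        rw [mul_smul]
        have : ((⟨p, by simpa using hp⟩ : nonZeroDivisors ℤ)) • y = p • y := by
          rw [Submonoid.mk_smul]; exact natCast_zsmul y p
        rw [this]; exact ha
      · rintro ⟨y, hy, rfl⟩
        exact ⟨⟨y, rfl⟩, T.smul_of_tower_mem p hy⟩
    rw [← AddSubgroup.inf_relIndex_right, h3, AddSubgroup.relIndex]
    rw [AddSubgroup.addSubgroupOf_map_nsmulAddMonoidHom_eq_range]
    have : Finite T.toAddSubgroup := hTfin
    rw [AddSubgroup.index_range]
    refine Nat.card_congr ⟨fun x => ⟨x.1.1, ?_⟩, fun x => ⟨⟨x.1, ?_⟩, ?_⟩, fun _ => rfl, fun _ => rfl⟩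
    · have := x.2
      rw [AddMonoidHom.mem_ker] at this ⊢
      exact congrArg Subtype.val this
    · have := x.2
      rw [AddMonoidHom.mem_ker] at this
      rw [Submodule.mem_toAddSubgroup, hT, Submodule.mem_torsion_iff]
      refine ⟨⟨p, by simpa using hp⟩, ?_⟩
      rw [Submonoid.mk_smul, natCast_zsmul]; exact this
    · have := x.2
      rw [AddMonoidHom.mem_ker] at this
      rw [AddMonoidHom.mem_ker]
      exact Subtype.ext this
  have h4 := AddSubgroup.relIndex_mul_index (le_sup_left : n.range ≤ n.range ⊔ T.toAddSubgroup)
  have h5 : n.range.relIndex (n.range ⊔ T.toAddSubgroup) = n.range.relIndex T.toAddSubgroup :=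
    AddSubgroup.relIndex_sup_left _ _
  rw [← h4, h5, h1, h2, mul_comm]

/-- Modulo `p`, the polynomial `(X - 1) ^ (p - 1)` is `1 + X + ⋯ + X ^ (p - 1)`. -/
lemma sub_one_pow_poly (p : ℕ) (hp : p.Prime) : ∃ h : Polynomial ℤ,
    (Polynomial.X - 1) ^ (p - 1) = (∑ i ∈ Finset.range p, (Polynomial.X : Polynomial ℤ) ^ i)
      + Polynomial.C (p : ℤ) * h := by
  have := Fact.mk hp
  have h1 : Polynomial.C (p : ℤ) ∣ (Polynomial.X - 1 : Polynomial ℤ) ^ (p - 1) -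
      (∑ i ∈ Finset.range p, (Polynomial.X : Polynomial ℤ) ^ i) := by
    rw [Polynomial.C_dvd_iff_dvd_coeff]
    intro i
    rw [← ZMod.intCast_zmod_eq_zero_iff_dvd, ← eq_intCast (Int.castRingHom (ZMod p)),
      ← Polynomial.coeff_map]
    have : Polynomial.map (Int.castRingHom (ZMod p)) ((Polynomial.X - 1 : Polynomial ℤ) ^ (p - 1) -
      (∑ i ∈ Finset.range p, (Polynomial.X : Polynomial ℤ) ^ i)) = 0 := by
      have hne : (Polynomial.X - 1 : Polynomial (ZMod p)) ≠ 0 := Polynomial.X_sub_C_ne_zero 1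
      apply mul_right_cancel₀ hne
      simp only [Polynomial.map_sub, Polynomial.map_pow, Polynomial.map_X, Polynomial.map_one,
        Polynomial.map_sum, sub_mul, zero_mul, geom_sum_mul]
      rw [← pow_succ, Nat.sub_add_cancel hp.one_le, sub_pow_char, one_pow, sub_self]
    rw [this, Polynomial.coeff_zero]
  obtain ⟨h, hh⟩ := h1
  exact ⟨h, by rw [← hh]; ring⟩
end ClRank

namespace ClRank

/-- The index `[B : pB]` for a subgroup `B` containing the `p`-torsion of the ambient group. -/
lemma relIndex_map_nsmul_eq {A : Type*} [AddCommGroup A] [Module.Finite ℤ A] (p : ℕ) (hp : p ≠ 0)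
    (B : AddSubgroup A) (hB : (nsmulAddMonoidHom p : A →+ A).ker ≤ B) :
    (B.map (nsmulAddMonoidHom p : A →+ A)).relIndex B =
      p ^ Module.finrank ℤ B * Nat.card (nsmulAddMonoidHom p : A →+ A).ker := by
  have : Module.Finite ℤ B := inferInstanceAs (Module.Finite ℤ B.toIntSubmodule)
  rw [AddSubgroup.relIndex, AddSubgroup.addSubgroupOf_map_nsmulAddMonoidHom_eq_range,
    index_range_nsmul_eq _ _ hp]
  congr 1
  refine Nat.card_congr ⟨fun x => ⟨x.1.1, ?_⟩, fun x => ⟨⟨x.1, hB x.2⟩, ?_⟩, fun _ => rfl,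
    fun _ => rfl⟩
  · have := x.2
    rw [AddMonoidHom.mem_ker] at this ⊢
    exact congrArg Subtype.val this
  · have := x.2
    rw [AddMonoidHom.mem_ker] at this ⊢
    exact Subtype.ext this

lemma map_le_range' {A B : Type*} [AddCommGroup A] [AddCommGroup B] (f : A →+ B)
    (S : AddSubgroup A) : S.map f ≤ f.range := by
  rintro _ ⟨a, -, rfl⟩; exact ⟨a, rfl⟩

open Polynomial in
/-- Lower bound for the order of `H⁻¹` in terms of `H⁰` for a lattice with the ranks of the unit
group of an extension of degree `p` of totally complex fields. -/
lemma herbrand {A : Type*} [AddCommGroup A] [Module.Finite ℤ A] (p : ℕ) (hp : p.Prime)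
    (σ D N : A →+ A) (hσ : ∀ a, (σ : A → A)^[p] a = a) (hD : ∀ a, D a = σ a - a)
    (hN : ∀ a, N a = ∑ i ∈ Finset.range p, (σ : A → A)^[i] a)
    (R : ℕ) (hA : Module.finrank ℤ A + 1 = p * R) (hC : Module.finrank ℤ D.ker + 1 = R)
    (tA : Nat.card (nsmulAddMonoidHom p : A →+ A).ker = p)
    (tC : (nsmulAddMonoidHom p : A →+ A).ker ≤ D.ker) :
    N.range.relIndex D.ker ≠ 0 ∧ p * N.range.relIndex D.ker ≤ D.range.relIndex N.ker := by
  set n := (nsmulAddMonoidHom p : A →+ A) with hn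
  have hnx : ∀ x, n x = p • x := fun _ => rfl
  have hp0 := hp.ne_zero
  have hNC : ∀ a ∈ D.ker, N a = n a := by
    intro a ha
    rw [AddMonoidHom.mem_ker, hD, sub_eq_zero] at ha
    have : ∀ i, (σ : A → A)^[i] a = a := fun i => Function.iterate_fixed ha i
    simp [hN, this, hnx]
  have hσN : ∀ a, σ (N a) = N a := by
    intro a
    have h1 : σ (N a) = ∑ i ∈ Finset.range p, (σ : A → A)^[i+1] a := by
      simp [hN, map_sum, Function.iterate_succ_apply']
    have h2 := Finset.sum_range_succ' (fun i => (σ : A → A)^[i] a) p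
    rw [Finset.sum_range_succ, hσ, Function.iterate_zero, id] at h2
    rw [h1, hN]; exact (add_right_cancel h2).symm
  have hσi : ∀ i a, N ((σ : A → A)^[i] a) = N a := by
    intro i a
    have h0 : ∀ b, N (σ b) = N b := by
      intro b
      rw [← hσN b, hN, hN, map_sum]
      exact Finset.sum_congr rfl fun i _ => by
        rw [← Function.iterate_succ_apply, Function.iterate_succ_apply']
    induction i with
    | zero => rfl
    | succ i ih => rw [Function.iterate_succ_apply', h0, ih]
  have hND : ∀ a, N (D a) = 0 := by
    intro a; rw [hD, map_sub, sub_eq_zero]; exact hσi 1 a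
  have hDN : ∀ a, D (N a) = 0 := by
    intro a; rw [hD, hσN, sub_self]
  have hDB : D.range ≤ N.ker := by rintro _ ⟨a, rfl⟩; exact hND a
  have hNC' : N.range ≤ D.ker := by rintro _ ⟨a, rfl⟩; exact hDN a
  have tB : n.ker ≤ N.ker := by
    intro a ha
    have := hNC a (tC ha)
    rw [AddMonoidHom.mem_ker] at ha ⊢
    rw [this, ha]
  -- Since `N = p` on `ker D`, and `D ^ (p - 1) = N + p h(σ)`, so that `D ^ (p - 1)` is divisible by `p` on
  -- `ker N`, both Tate groups are compared through indices of multiples of `p`.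
  have e1 : D.ker.map N = D.ker.map n := by
    ext x; simp only [AddSubgroup.mem_map]
    constructor
    · rintro ⟨y, hy, rfl⟩; exact ⟨y, hy, (hNC y hy).symm⟩
    · rintro ⟨y, hy, rfl⟩; exact ⟨y, hy, (hNC y hy)⟩
  have i1 : (D.ker.map N).relIndex D.ker = p ^ R := by
    rw [e1, relIndex_map_nsmul_eq p hp0 _ tC, tA, ← pow_succ, hC]
  have i2 : (D.ker.map N).relIndex N.range * N.range.relIndex D.ker = p ^ R := by
    rw [AddSubgroup.relIndex_mul_relIndex _ _ _ (map_le_range' N D.ker) hNC', i1]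
  have i3 : (D.ker.map N).relIndex N.range = (D.ker ⊔ N.ker).index := by
    rw [AddMonoidHom.range_eq_map, AddSubgroup.relIndex_map_map]
    simp
  have i4 : (N.ker.map D).relIndex D.range = (D.ker ⊔ N.ker).index := by
    rw [AddMonoidHom.range_eq_map, AddSubgroup.relIndex_map_map]
    simp [sup_comm]
  have i5 : (N.ker.map D).relIndex D.range * D.range.relIndex N.ker =
      (N.ker.map D).relIndex N.ker :=
    AddSubgroup.relIndex_mul_relIndex _ _ _ (map_le_range' D N.ker) hDB
  have rB : (p - 1) * R ≤ Module.finrank ℤ N.ker := by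
    have h1 := Submodule.finrank_quotient_add_finrank N.toIntLinearMap.ker
    rw [N.toIntLinearMap.quotKerEquivRange.finrank_eq] at h1
    have h2 : Module.finrank ℤ N.toIntLinearMap.range ≤ Module.finrank ℤ D.toIntLinearMap.ker :=
      Submodule.finrank_mono hNC'
    change Module.finrank ℤ N.toIntLinearMap.range ≤ Module.finrank ℤ D.ker at h2
    change _ + Module.finrank ℤ N.ker = _ at h1
    rw [Nat.sub_mul]
    have : R ≥ 1 := by omega
    omega
  have i6 : p ^ ((p - 1) * R + 1) ≤ (N.ker.map n).relIndex N.ker := by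
    rw [relIndex_map_nsmul_eq p hp0 _ tB, tA, ← pow_succ]
    exact Nat.pow_le_pow_right hp.pos (by omega)
  have hDBle : N.ker.map D ≤ N.ker := (map_le_range' D N.ker).trans hDB
  let s : Module.End ℤ A := σ.toIntLinearMap
  have hs1 : ∀ a, aeval s (X - C 1 : ℤ[X]) a = D a := by
    intro a; simp [s, hD]
  have hsi : ∀ i a, (s ^ i) a = (σ : A → A)^[i] a := by
    intro i a; rw [Module.End.coe_pow]; rfl
  have hsN : ∀ a, aeval s (∑ i ∈ Finset.range p, X ^ i : ℤ[X]) a = N a := by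
    intro a
    rw [hN, map_sum, LinearMap.sum_apply]
    exact Finset.sum_congr rfl fun i _ => by rw [map_pow, aeval_X, hsi]
  have hcomm : ∀ (h : ℤ[X]) a, a ∈ N.ker → aeval s h a ∈ N.ker := by
    intro h a ha
    rw [AddMonoidHom.mem_ker] at ha ⊢
    rw [← hsN, ← Module.End.mul_apply, ← map_mul, mul_comm, map_mul, Module.End.mul_apply, hsN, ha,
      map_zero]
  have hC0 : ∀ (z : ℤ) a, aeval s (C z : ℤ[X]) a = z • a := by
    intro z a; simp
  let d : ℕ → (A →+ A) := fun k => (aeval s ((X - C 1) ^ k : ℤ[X])).toAddMonoidHom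
  have hd : ∀ k a, d k a = aeval s ((X - C 1) ^ k : ℤ[X]) a := fun _ _ => rfl
  have i7 : ∃ t, (N.ker.map D).relIndex N.ker = p ^ t := by
    have : N.ker.map n ≤ N.ker.map D := by
      rintro _ ⟨a, ha, rfl⟩
      obtain ⟨q, hq⟩ : (X - C 1 : ℤ[X]) ∣ C (p : ℤ) - ∑ i ∈ Finset.range p, X ^ i := by
        rw [dvd_iff_isRoot]; simp [IsRoot, eval_finsetSum]
      refine ⟨aeval s q a, hcomm q a ha, ?_⟩
      have h1 := congrArg (fun f => aeval s f a) hq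
      simp only [map_sub, map_mul, LinearMap.sub_apply, Module.End.mul_apply, hsN, hC0] at h1
      have h2 : N a = 0 := ha
      rw [h2, sub_zero, natCast_zsmul] at h1
      rw [hnx, h1, ← hs1]; simp
    have h2 := AddSubgroup.relIndex_dvd_of_le_left N.ker this
    rw [relIndex_map_nsmul_eq p hp0 _ tB, tA, ← pow_succ] at h2
    obtain ⟨t, -, ht⟩ := (Nat.dvd_prime_pow hp).1 h2
    exact ⟨t, ht⟩
  obtain ⟨t, ht⟩ := i7
  have i8 : ∀ k, (N.ker.map (d k)).relIndex N.ker ≠ 0 ∧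
      (N.ker.map (d k)).relIndex N.ker ≤ (p ^ t) ^ k := by
    intro k
    induction k with
    | zero =>
      have : N.ker.map (d 0) = N.ker := by
        have : d 0 = AddMonoidHom.id A := by ext a; simp [hd]
        rw [this]; exact AddSubgroup.map_id _
      rw [this]; simp
    | succ k ih =>
      have h1 : N.ker.map (d (k + 1)) =
        (N.ker.map D).map (d k) := by
        rw [AddSubgroup.map_map]; congr 1; ext a
        simp only [hd, AddMonoidHom.comp_apply, pow_succ, map_mul, Module.End.mul_apply, hs1]
      have h2 : (N.ker.map D).map (d k) ≤ N.ker.map (d k) :=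
        AddSubgroup.map_mono hDBle
      have h4 : N.ker.map (d k) ≤ N.ker := by
        rintro _ ⟨a, ha, rfl⟩
        exact hcomm _ _ ha
      have h3 := AddSubgroup.relIndex_mul_relIndex _ _ _ h2 h4
      rw [h1, ← h3, AddSubgroup.relIndex_map_map]
      have h5 : (N.ker.map D ⊔ (d k).ker).relIndex
          (N.ker ⊔ (d k).ker) ∣ p ^ t := by
        have e : N.ker ⊔ (d k).ker = N.ker ⊔ (N.ker.map D ⊔ (d k).ker) := by
          rw [← sup_assoc, sup_eq_left.2 hDBle]
        rw [← ht, e, AddSubgroup.relIndex_sup_right]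
        exact AddSubgroup.relIndex_dvd_of_le_left _ le_sup_left
      have h6 := Nat.pos_of_dvd_of_pos h5 (pow_pos hp.pos t)
      refine ⟨mul_ne_zero h6.ne' ih.1, ?_⟩
      rw [pow_succ']
      exact Nat.mul_le_mul (Nat.le_of_dvd (pow_pos hp.pos t) h5) ih.2
  have i9 : N.ker.map (d (p-1)) ≤ N.ker.map n := by
    obtain ⟨h, hh⟩ := sub_one_pow_poly p hp
    rintro _ ⟨a, ha, rfl⟩
    refine ⟨aeval s h a, hcomm h a ha, ?_⟩
    have h1 := congrArg (fun f => aeval s f a) hh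
    rw [← C_1] at h1
    simp only [map_add, map_mul, LinearMap.add_apply, Module.End.mul_apply, hsN, hC0] at h1
    have h2 : N a = 0 := ha
    rw [hd, h1, h2, zero_add, hnx, natCast_zsmul]
  have i10 : p ^ ((p - 1) * R + 1) ≤ p ^ (t * (p - 1)) := by
    refine i6.trans ?_
    rw [pow_mul]
    exact (AddSubgroup.relIndex_le_of_le_left i9 (i8 _).1).trans (i8 _).2
  have hs2 : R + 1 ≤ t := by
    have := (Nat.pow_le_pow_iff_right hp.one_lt).1 i10
    by_contra h
    have h3 : t ≤ R := by omega
    have := Nat.mul_le_mul_right (p - 1) h3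
    nlinarith
  rw [i3] at i2
  rw [i4, ht] at i5
  have hpos : 0 < p ^ R := by positivity
  have hx : (D.ker ⊔ N.ker).index ≠ 0 := by rintro h; rw [h] at i2; omega
  refine ⟨by rintro h; rw [h] at i2; omega, ?_⟩
  have : p ^ (R + 1) ≤ p ^ t := Nat.pow_le_pow_right hp.pos hs2
  have h8 : (D.ker ⊔ N.ker).index * (p * N.range.relIndex D.ker) ≤
      (D.ker ⊔ N.ker).index * D.range.relIndex N.ker := by
    rw [i5, mul_left_comm, i2, ← pow_succ']
    exact this
  exact Nat.le_of_mul_le_mul_left h8 (by omega)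
end ClRank

/-! ### Units in cyclic extensions -/

namespace ClRank

/-- Hilbert's Theorem 90 for a cyclic group of automorphisms. -/
lemma hilbert90 {L M : Type*} [Field L] [Field M] [Algebra L M] (σ : M ≃ₐ[L] M) (p : ℕ)
    (hσ : orderOf σ = p) (hp : p ≠ 0) (η : M) (hη : ∏ i ∈ Finset.range p, (σ ^ i) η = 1) :
    ∃ κ : M, κ ≠ 0 ∧ σ κ = η * κ := by
  have hinj : Function.Injective (fun i : Fin p => ((σ ^ (i : ℕ) : M ≃ₐ[L] M) : M →* M)) := by
    intro i j hij
    have : σ ^ (i : ℕ) = σ ^ (j : ℕ) := by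
      ext x; exact DFunLike.congr_fun hij x
    have h2 := pow_injOn_Iio_orderOf (x := σ) (by simp [hσ]) (by simp [hσ]) this
    exact Fin.ext h2
  have hlin := (linearIndependent_monoidHom M M).comp _ hinj
  let c : ℕ → M := fun i => ∏ j ∈ Finset.range i, (σ ^ j) η
  have hc0 : c 0 = 1 := by simp [c]
  obtain ⟨θ, hθ⟩ : ∃ θ : M, ∑ i ∈ Finset.range p, c i * (σ ^ i) θ ≠ 0 := by
    by_contra! h
    rw [Fintype.linearIndependent_iff] at hlin
    have := hlin (fun i => c i) (by
      ext θ
      have := h θ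
      rw [← Fin.sum_univ_eq_sum_range (fun i => c i * (σ ^ i) θ)] at this
      simpa [Finset.sum_apply] using this) ⟨0, Nat.pos_of_ne_zero hp⟩
    simp [hc0] at this
  set y := ∑ i ∈ Finset.range p, c i * (σ ^ i) θ with hy
  have hcs : ∀ i, η * σ (c i) = c (i + 1) := by
    intro i
    simp only [c, map_prod]
    rw [Finset.prod_range_succ']
    simp only [pow_zero, AlgEquiv.one_apply, pow_succ', AlgEquiv.mul_apply]
    ring
  have key : η * σ y = y := by
    rw [hy, map_sum, Finset.mul_sum]
    have : ∀ i ∈ Finset.range p, η * σ (c i * (σ ^ i) θ) = c (i + 1) * (σ ^ (i + 1)) θ := by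
      intro i _
      rw [map_mul, ← mul_assoc, hcs, pow_succ', AlgEquiv.mul_apply]
    rw [Finset.sum_congr rfl this]
    have h1 := Finset.sum_range_succ (fun i => c i * (σ ^ i) θ) p
    have h2 := Finset.sum_range_succ' (fun i => c i * (σ ^ i) θ) p
    have hcp : c p = 1 := hη
    have hsp : σ ^ p = 1 := by rw [← hσ]; exact pow_orderOf_eq_one σ
    rw [hcp, hsp] at h1
    rw [hc0, pow_zero, h1] at h2
    exact (add_right_cancel h2).symm
  refine ⟨y⁻¹, inv_ne_zero hθ, ?_⟩
  have hs : σ y ≠ 0 := by simpa using hθ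
  have hη0 : η ≠ 0 := by rintro rfl; rw [zero_mul] at key; exact hθ key.symm
  rw [map_inv₀]
  nth_rewrite 2 [← key]
  field_simp

/-- Dirichlet's unit theorem for a field containing `ζ_p`, `p ≥ 3`: such a field is totally complex. -/
lemma unit_rank (F : Type*) [Field F] [NumberField F] (p : ℕ) (hp3 : 3 ≤ p) (ζ : F)
    (hζ : IsPrimitiveRoot ζ p) :
    2 * (Module.finrank ℤ (Additive (𝓞 F)ˣ) + 1) = Module.finrank ℚ F := by
  rw [NumberField.Units.finrank_eq, NumberField.Units.rank]
  have h1 := NumberField.InfinitePlace.card_eq_nrRealPlaces_add_nrComplexPlaces F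
  have h2 := NumberField.InfinitePlace.card_add_two_mul_card_eq_rank F
  have h3 := NumberField.InfinitePlace.IsPrimitiveRoot.nrRealPlaces_eq_zero_of_two_lt (by omega : 2 < p) hζ
  have h4 : 0 < Fintype.card (NumberField.InfinitePlace F) := Fintype.card_pos
  omega

lemma fixed_mem {L M : Type*} [Field L] [Field M] [Algebra L M] [FiniteDimensional L M]
    [IsGalois L M] (σ : M ≃ₐ[L] M)
    (hσ : orderOf σ = Module.finrank L M) (x : M) (hx : σ x = x) : ∃ y : L, algebraMap L M y = x := by
  have hcard : Nat.card (M ≃ₐ[L] M) = orderOf σ := by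
    rw [hσ, IsGalois.card_aut_eq_finrank]
  have htop : Subgroup.zpowers σ = ⊤ := by
    apply Subgroup.eq_top_of_card_eq
    rw [Nat.card_zpowers, hcard]
  have : ∀ τ : M ≃ₐ[L] M, τ x = x := by
    intro τ
    have hτ : τ ∈ Subgroup.zpowers σ := htop ▸ Subgroup.mem_top τ
    have h : σ ∈ MulAction.stabilizer (M ≃ₐ[L] M) x := hx
    exact (Subgroup.zpowers_le.2 h) hτ
  have h := (IsGalois.mem_range_algebraMap_iff_fixed (F := L) x).2 this
  exact h

lemma fixed_int {L M : Type*} [Field L] [Field M] [NumberField L] [NumberField M] [Algebra L M]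
    [IsGalois L M] (σ : M ≃ₐ[L] M)
    (hσ : orderOf σ = Module.finrank L M) (x : 𝓞 M) (hx : σ x = x) :
    ∃ y : 𝓞 L, algebraMap (𝓞 L) (𝓞 M) y = x := by
  obtain ⟨y, hy⟩ := fixed_mem σ hσ x hx
  have hyi : IsIntegral ℤ y := by
    have : IsIntegral ℤ (x : M) := x.isIntegral_coe
    rw [← hy] at this
    exact (isIntegral_algebraMap_iff (algebraMap L M).injective).1 this
  refine ⟨⟨y, hyi⟩, ?_⟩
  ext
  exact hy

/-- The endomorphism of the (additively written) unit group induced by an automorphism. -/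
noncomputable def uS {L M : Type*} [Field L] [Field M] [Algebra L M] (σ : M ≃ₐ[L] M) :
    Additive (𝓞 M)ˣ →+ Additive (𝓞 M)ˣ :=
  MonoidHom.toAdditive (Units.map (RingOfIntegers.mapRingHom (σ : M →+* M) : 𝓞 M →* 𝓞 M))

/-- The endomorphism `u ↦ σ u / u` of the unit group. -/
noncomputable def uD {L M : Type*} [Field L] [Field M] [Algebra L M] (σ : M ≃ₐ[L] M) :
    Additive (𝓞 M)ˣ →+ Additive (𝓞 M)ˣ := uS σ - AddMonoidHom.id _

/-- The norm `u ↦ ∏_{i<p} σ^i u` on the unit group. -/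
noncomputable def uN {L M : Type*} [Field L] [Field M] [Algebra L M] (σ : M ≃ₐ[L] M) (p : ℕ) :
    Additive (𝓞 M)ˣ →+ Additive (𝓞 M)ˣ :=
  ∑ i ∈ Finset.range p, uS (σ ^ i)

lemma uS_coe {L M : Type*} [Field L] [Field M] [Algebra L M] (σ : M ≃ₐ[L] M)
    (a : Additive (𝓞 M)ˣ) : (((uS σ a).toMul : 𝓞 M) : M) = σ ((a.toMul : 𝓞 M) : M) := rfl

lemma u_ext {M : Type*} [Field M] {a b : Additive (𝓞 M)ˣ}
    (h : ((a.toMul : 𝓞 M) : M) = ((b.toMul : 𝓞 M) : M)) : a = b := by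
  apply Additive.toMul.injective
  ext
  exact h

lemma uS_pow {L M : Type*} [Field L] [Field M] [Algebra L M] (σ : M ≃ₐ[L] M) (i : ℕ)
    (a : Additive (𝓞 M)ˣ) : (uS σ)^[i] a = uS (σ ^ i) a := by
  induction i with
  | zero => apply u_ext; simp [uS_coe]
  | succ n ih =>
    rw [Function.iterate_succ_apply', ih]
    apply u_ext
    simp only [uS_coe]
    rw [pow_succ']; rfl

lemma uD_coe {L M : Type*} [Field L] [Field M] [Algebra L M] (σ : M ≃ₐ[L] M)
    (a : Additive (𝓞 M)ˣ) : (((uD σ a).toMul : 𝓞 M) : M) =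
      σ ((a.toMul : 𝓞 M) : M) / ((a.toMul : 𝓞 M) : M) := by
  have h : uD σ a + a = uS σ a := by simp [uD]
  have h2 := uS_coe σ a
  rw [← h] at h2
  rw [← h2]
  have : ((a.toMul : 𝓞 M) : M) ≠ 0 := by simp
  exact (mul_div_cancel_right₀ _ this).symm

lemma uN_coe {L M : Type*} [Field L] [Field M] [Algebra L M] (σ : M ≃ₐ[L] M) (p : ℕ)
    (a : Additive (𝓞 M)ˣ) : (((uN σ p a).toMul : 𝓞 M) : M) =
      ∏ i ∈ Finset.range p, (σ ^ i) ((a.toMul : 𝓞 M) : M) := by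
  simp only [uN, AddMonoidHom.finsetSum_apply, toMul_sum, Units.coe_prod, map_prod, uS_coe]

lemma mem_uD_ker {L M : Type*} [Field L] [Field M] [Algebra L M] (σ : M ≃ₐ[L] M)
    (a : Additive (𝓞 M)ˣ) : a ∈ (uD σ).ker ↔ σ ((a.toMul : 𝓞 M) : M) = ((a.toMul : 𝓞 M) : M) := by
  have h0 : ((a.toMul : 𝓞 M) : M) ≠ 0 := by simp
  have := uD_coe σ a
  rw [AddMonoidHom.mem_ker]
  constructor
  · intro h
    rw [h] at this
    rw [eq_div_iff h0] at this
    simpa using this.symm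
  · intro h
    rw [h, div_self h0] at this
    apply u_ext
    rw [this]; simp

lemma card_ker_nsmul {M : Type*} [Field M] [NumberField M] (p : ℕ) (hp : p.Prime) (ζ : M)
    (hζ : IsPrimitiveRoot ζ p) :
    Nat.card (nsmulAddMonoidHom p : Additive (𝓞 M)ˣ →+ _).ker = p := by
  have : NeZero p := ⟨hp.ne_zero⟩
  have h1 : IsPrimitiveRoot (hζ.toInteger : 𝓞 M) p := hζ.toInteger_isPrimitiveRoot
  refine Eq.trans ?_ h1.card_rootsOfUnity
  exact Nat.card_congr ⟨fun x => ⟨x.1.toMul, by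
      have := x.2
      rw [AddMonoidHom.mem_ker] at this
      exact this⟩, fun x => ⟨Additive.ofMul x.1, by
      have := x.2
      rw [AddMonoidHom.mem_ker]
      exact this⟩, fun _ => rfl, fun _ => rfl⟩

/-- For a cyclic extension of degree `p`, the units of norm `1` modulo quotients `σ u / u` are at least
`p` times as many as the units of the base modulo norms. -/
lemma units_ineq {L M : Type*} [Field L] [Field M] [NumberField L] [NumberField M] [Algebra L M]
    [IsGalois L M] (p : ℕ) (hp : p.Prime) (hp3 : 3 ≤ p) (ζ : L) (hζ : IsPrimitiveRoot ζ p)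
    (hf : Module.finrank L M = p) (σ : M ≃ₐ[L] M) (hσ : orderOf σ = p) :
    (uN σ p).range.relIndex (uD σ).ker ≠ 0 ∧
      p * (uN σ p).range.relIndex (uD σ).ker ≤ (uD σ).range.relIndex (uN σ p).ker := by
  have : NeZero p := ⟨hp.ne_zero⟩
  have hζM := hζ.map_of_injective (algebraMap L M).injective
  have hL := unit_rank L p hp3 ζ hζ
  have hM := unit_rank M p hp3 _ hζM
  have htow := Module.finrank_mul_finrank ℚ L M
  rw [hf] at htow
  have hσ1 : σ ^ p = 1 := by rw [← hσ]; exact pow_orderOf_eq_one σ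
  let e : Additive (𝓞 L)ˣ →+ Additive (𝓞 M)ˣ :=
    MonoidHom.toAdditive (Units.map (algebraMap (𝓞 L) (𝓞 M) : 𝓞 L →* 𝓞 M))
  have hec : ∀ a, (((e a).toMul : 𝓞 M) : M) = algebraMap L M ((a.toMul : 𝓞 L) : L) := fun _ => rfl
  have he : Function.Injective e := by
    intro a b hab
    apply u_ext
    apply (algebraMap L M).injective
    rw [← hec, ← hec, hab]
  have her : e.range = (uD σ).ker := by
    ext a
    rw [mem_uD_ker]
    constructor
    · rintro ⟨b, rfl⟩
      rw [hec, AlgEquiv.commutes]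
    · intro h
      obtain ⟨y, hy⟩ := fixed_int σ (hσ.trans hf.symm) _ h
      have h' : σ ((((-a).toMul : (𝓞 M)ˣ) : 𝓞 M) : M) = ((((-a).toMul : (𝓞 M)ˣ) : 𝓞 M) : M) := by
        rw [← mem_uD_ker] at h ⊢; exact neg_mem h
      obtain ⟨z, hz⟩ := fixed_int σ (hσ.trans hf.symm) _ h'
      have hyz : y * z = 1 := by
        apply FaithfulSMul.algebraMap_injective (𝓞 L) (𝓞 M)
        rw [map_mul, hy, hz, map_one]
        simp
      refine ⟨Additive.ofMul ⟨y, z, hyz, by rw [mul_comm, hyz]⟩, ?_⟩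
      apply Additive.toMul.injective
      ext
      exact congrArg _ hy
  have hrk : Module.finrank ℤ (uD σ).ker = Module.finrank ℤ (Additive (𝓞 L)ˣ) := by
    rw [← her]
    exact (LinearEquiv.finrank_eq (AddMonoidHom.ofInjective he).toIntLinearEquiv).symm
  refine herbrand p hp (uS σ) (uD σ) (uN σ p) ?_ ?_ ?_ (Module.finrank ℤ (Additive (𝓞 L)ˣ) + 1)
    ?_ ?_ (card_ker_nsmul p hp _ hζM) ?_
  · intro a
    rw [uS_pow, hσ1]; apply u_ext; rw [uS_coe]; rfl
  · intro a; simp [uD]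
  · intro a; simp [uN, uS_pow]
  · nlinarith
  · rw [hrk]
  · intro a ha
    rw [mem_uD_ker]
    have h1 : ((a.toMul : 𝓞 M) : M) ^ p = 1 := by
      have h2 : p • a = 0 := ha
      have h3 : (a.toMul) ^ p = 1 := by rw [← toMul_nsmul, h2]; rfl
      have := congrArg (fun u : (𝓞 M)ˣ => ((u : 𝓞 M) : M)) h3
      simpa using this
    obtain ⟨i, -, hi⟩ := hζM.eq_pow_of_pow_eq_one h1
    rw [← hi, ← map_pow, AlgEquiv.commutes]

end ClRank

/-! ### Norms, Galois action and invariant ideals -/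

namespace ClRank

set_option linter.unusedSectionVars false
set_option linter.unusedVariables false

open scoped nonZeroDivisors Pointwise

/-- A homomorphism on nonzero ideals that is trivial on principal ideals factors through the class
group. -/
lemma exists_classLift {S G : Type*} [CommRing S] [IsDedekindDomain S] [CommGroup G]
    (f : (Ideal S)⁰ →* G) (hf : ∀ I : (Ideal S)⁰, Submodule.IsPrincipal (I : Ideal S) → f I = 1) :
    ∃ g : ClassGroup S →* G, ∀ I, g (ClassGroup.mk0 I) = f I := by
  have key : ∀ I J : (Ideal S)⁰, ClassGroup.mk0 I = ClassGroup.mk0 J → f I = f J := by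
    intro I J h
    obtain ⟨x, y, hx, hy, h⟩ := ClassGroup.mk0_eq_mk0_iff.1 h
    have hx' : Ideal.span {x} ∈ (Ideal S)⁰ := by simpa [mem_nonZeroDivisors_iff_ne_zero] using hx
    have hy' : Ideal.span {y} ∈ (Ideal S)⁰ := by simpa [mem_nonZeroDivisors_iff_ne_zero] using hy
    have h2 : (⟨_, hx'⟩ : (Ideal S)⁰) * I = ⟨_, hy'⟩ * J := Subtype.ext h
    have h3 := congrArg f h2
    rwa [map_mul, map_mul, hf ⟨_, hx'⟩ ⟨x, rfl⟩, hf ⟨_, hy'⟩ ⟨y, rfl⟩, one_mul, one_mul] at h3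
  let s := Function.surjInv (ClassGroup.mk0_surjective (R := S))
  have hs : ∀ c, ClassGroup.mk0 (s c) = c := Function.surjInv_eq _
  refine ⟨⟨⟨fun c => f (s c), ?_⟩, ?_⟩, fun I => key _ _ (hs _)⟩
  · rw [← map_one f]; apply key; rw [hs, map_one]
  · intro a b
    change f (s (a * b)) = f (s a) * f (s b)
    rw [← map_mul]; apply key; rw [hs, map_mul, hs, hs]

section
variable {L M : Type*} [Field L] [Field M] [NumberField L] [NumberField M] [Algebra L M]

/-- The norm on class groups. -/
lemma exists_normCl (L M : Type*) [Field L] [Field M] [NumberField L] [NumberField M]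
    [Algebra L M] : ∃ g : ClassGroup (𝓞 M) →* ClassGroup (𝓞 L),
      ∀ (I : (Ideal (𝓞 M))⁰) (J : (Ideal (𝓞 L))⁰), (J : Ideal (𝓞 L)) = Ideal.relNorm (𝓞 L) (I : Ideal (𝓞 M)) →
        g (ClassGroup.mk0 I) = ClassGroup.mk0 J := by
  have h0 : ∀ I : (Ideal (𝓞 M))⁰, Ideal.relNorm (𝓞 L) (I : Ideal (𝓞 M)) ∈ (Ideal (𝓞 L))⁰ := by
    intro I
    have := mem_nonZeroDivisors_iff_ne_zero.1 I.2
    rw [mem_nonZeroDivisors_iff_ne_zero, Ideal.zero_eq_bot, Ne, Ideal.relNorm_eq_bot_iff]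
    exact this
  let f : (Ideal (𝓞 M))⁰ →* ClassGroup (𝓞 L) :=
    { toFun := fun I => ClassGroup.mk0 ⟨_, h0 I⟩
      map_one' := by
        rw [ClassGroup.mk0_eq_one_iff]
        simp only [OneMemClass.coe_one, map_one]
        rw [Ideal.one_eq_top]; infer_instance
      map_mul' := fun I J => by
        rw [← map_mul]; congr 1; ext1; simp }
  obtain ⟨g, hg⟩ := exists_classLift f (by
    rintro ⟨I, hI⟩ ⟨x, hx⟩
    change ClassGroup.mk0 _ = 1
    rw [ClassGroup.mk0_eq_one_iff]
    have : I = Ideal.span {x} := hx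
    subst this
    exact ⟨_, Ideal.relNorm_singleton _ _⟩)
  refine ⟨g, fun I J h => (hg I).trans ?_⟩
  change ClassGroup.mk0 _ = _
  congr 1; ext1; exact h.symm

lemma smul_span (σ : M ≃ₐ[L] M) (x : 𝓞 M) : σ • Ideal.span {x} = Ideal.span {σ • x} := by
  rw [Ideal.pointwise_smul_def, Ideal.map_span, Set.image_singleton]; rfl

lemma smul_mem_nzd (σ : M ≃ₐ[L] M) (I : (Ideal (𝓞 M))⁰) : σ • (I : Ideal (𝓞 M)) ∈ (Ideal (𝓞 M))⁰ := by
  have := mem_nonZeroDivisors_iff_ne_zero.1 I.2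
  rw [mem_nonZeroDivisors_iff_ne_zero]
  intro h
  apply this
  rw [← inv_smul_smul σ (I : Ideal (𝓞 M)), h, smul_zero]

/-- The action of an automorphism on the class group. -/
lemma exists_smulCl (σ : M ≃ₐ[L] M) : ∃ g : ClassGroup (𝓞 M) →* ClassGroup (𝓞 M),
      ∀ (I : (Ideal (𝓞 M))⁰), g (ClassGroup.mk0 I) = ClassGroup.mk0 ⟨_, smul_mem_nzd σ I⟩ := by
  let f : (Ideal (𝓞 M))⁰ →* ClassGroup (𝓞 M) :=
    { toFun := fun I => ClassGroup.mk0 ⟨_, smul_mem_nzd σ I⟩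
      map_one' := by
        rw [ClassGroup.mk0_eq_one_iff]
        simp only [OneMemClass.coe_one, smul_one]
        rw [Ideal.one_eq_top]; infer_instance
      map_mul' := fun I J => by
        rw [← map_mul]; congr 1; ext1; simp [smul_mul'] }
  obtain ⟨g, hg⟩ := exists_classLift f (by
    rintro ⟨I, hI⟩ ⟨x, hx⟩
    change ClassGroup.mk0 _ = 1
    rw [ClassGroup.mk0_eq_one_iff]
    have : I = Ideal.span {x} := hx
    subst this
    exact ⟨_, smul_span _ _⟩)
  exact ⟨g, hg⟩

/-- Trivial inertia means ramification index `1`, in the form in which it enters `invariant_ideal`. -/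
lemma ram_one [IsGalois L M] (P : Ideal (𝓞 M)) [P.IsPrime] (hP : P ≠ ⊥)
    (h : P.inertia (M ≃ₐ[L] M) = ⊥) : P.ramificationIdx (𝓞 L) = 1 := by
  have := Ideal.card_inertia_eq_ramificationIdxIn (G := M ≃ₐ[L] M) (P.under (𝓞 L)) P
  rw [h, Ideal.ramificationIdxIn_eq_ramificationIdx _ P (M ≃ₐ[L] M)] at this
  simpa using this.symm

/-- In an everywhere unramified Galois extension, every Galois-invariant ideal is extended from the
base. -/
lemma invariant_ideal [IsGalois L M]
    (hunr : ∀ P : Ideal (𝓞 M), P.IsPrime → P ≠ ⊥ → P.inertia (M ≃ₐ[L] M) = ⊥) :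
    ∀ I : Ideal (𝓞 M), I ≠ ⊥ → (∀ τ : M ≃ₐ[L] M, τ • I = I) →
      ∃ J : Ideal (𝓞 L), J ≠ ⊥ ∧ J.map (algebraMap (𝓞 L) (𝓞 M)) = I := by
  intro I
  induction I using WellFoundedGT.induction with
  | _ I ih =>
  intro hI0 hI
  by_cases htop : I = ⊤
  · exact ⟨⊤, by simp, by rw [htop, Ideal.map_top]⟩
  obtain ⟨P, hPmax, hIP⟩ := Ideal.exists_le_maximal I htop
  have hP0 : P ≠ ⊥ := fun h => hI0 (by rwa [h, le_bot_iff] at hIP)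
  set q := P.under (𝓞 L) with hq
  have hqmax : q.IsMaximal := Ideal.IsMaximal.under (𝓞 L) P
  have hq0 : q ≠ ⊥ := Ideal.under_ne_bot (A := 𝓞 L) hP0
  have hdvd : q.map (algebraMap (𝓞 L) (𝓞 M)) ∣ I := by
    rw [Ideal.map_algebraMap_eq_finsetProd_pow hq0]
    have h1 : ∀ Q ∈ (q.primesOver (𝓞 M)).toFinset, Q.IsPrime ∧ Q ≠ ⊥ ∧ ∃ τ : M ≃ₐ[L] M, τ • P = Q := by
      intro Q hQ
      rw [Set.mem_toFinset] at hQ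
      have := hQ.1
      have := hQ.2
      refine ⟨hQ.1, ?_, Ideal.exists_smul_eq_of_isGaloisGroup q P Q (M ≃ₐ[L] M)⟩
      exact Ideal.ne_bot_of_liesOver_of_ne_bot hq0 Q
    have h2 : ∀ Q ∈ (q.primesOver (𝓞 M)).toFinset, Q ^ Q.ramificationIdx (𝓞 L) = Q := by
      intro Q hQ
      obtain ⟨hQp, hQ0, -⟩ := h1 Q hQ
      rw [ram_one Q hQ0 (hunr Q hQp hQ0), pow_one]
    rw [Finset.prod_congr rfl h2]
    apply Finset.prod_primes_dvd
    · intro Q hQ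
      exact Ideal.prime_of_isPrime (h1 Q hQ).2.1 (h1 Q hQ).1
    · intro Q hQ
      obtain ⟨-, -, τ, rfl⟩ := h1 Q hQ
      rw [Ideal.dvd_iff_le]
      nth_rewrite 1 [← hI τ]
      exact smul_mono_right τ hIP
  obtain ⟨I', hI'⟩ := hdvd
  have hm0 : q.map (algebraMap (𝓞 L) (𝓞 M)) ≠ ⊥ := by
    rintro h; rw [h, Ideal.bot_mul] at hI'; exact hI0 hI'
  have hI'0 : I' ≠ ⊥ := by
    rintro rfl; rw [Ideal.mul_bot] at hI'; exact hI0 hI'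
  have hmtop : q.map (algebraMap (𝓞 L) (𝓞 M)) ≠ ⊤ := by
    intro h
    have : q.map (algebraMap (𝓞 L) (𝓞 M)) ≤ P := Ideal.map_le_iff_le_comap.2 le_rfl
    rw [h, top_le_iff] at this
    exact hPmax.ne_top this
  have hmap : ∀ τ : M ≃ₐ[L] M, τ • q.map (algebraMap (𝓞 L) (𝓞 M)) = q.map (algebraMap (𝓞 L) (𝓞 M)) := by
    intro τ
    rw [Ideal.pointwise_smul_def, Ideal.map_map]
    congr 1
    ext x
    exact τ.commutes x
  have hlt : I' > I := by
    refine lt_of_le_of_ne (Ideal.le_of_dvd (Dvd.intro_left _ hI'.symm)) ?_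
    intro h
    rw [h] at hI'
    have h3 : (1 : Ideal (𝓞 M)) * I' = q.map (algebraMap (𝓞 L) (𝓞 M)) * I' := by rwa [one_mul]
    exact hmtop ((mul_right_cancel₀ hI'0 h3).symm.trans Ideal.one_eq_top)
  obtain ⟨J, hJ0, hJ⟩ := ih I' hlt hI'0 (by
    intro τ
    have := hI τ
    rw [hI', smul_mul', hmap] at this
    exact mul_left_cancel₀ hm0 this)
  refine ⟨q * J, mul_ne_zero hq0 hJ0, ?_⟩
  rw [Ideal.map_mul, hJ, ← hI']

end

end ClRank

/-! ### The norm on class groups of unramified cyclic extensions -/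

namespace ClRank
set_option linter.unusedSectionVars false
set_option linter.unusedVariables false

open scoped nonZeroDivisors Pointwise

/-- A counting bound: a map `F` on `A` whose fibres lie in cosets of `B` has image at least `#A / #B`. -/
lemma card_le_mul {G : Type*} [CommGroup G] [Finite G] (A B : Subgroup G) {Q : Type*} [Finite Q]
    (F : A → Q) (h : ∀ a b, F a = F b → (a : G) / b ∈ B) : Nat.card A ≤ Nat.card B * Nat.card Q := by
  classical
  rw [← Nat.card_prod]
  have hr : ∀ a, F (Function.invFun F (F a)) = F a := fun a => Function.invFun_eq ⟨a, rfl⟩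
  let Φ : A → B × Q := fun a => (⟨(a : G) / (Function.invFun F (F a) : A), h _ _ (hr a).symm⟩, F a)
  apply Nat.card_le_card_of_injective Φ
  intro a b hab
  have h2 : F a = F b := congrArg Prod.snd hab
  have h1 : (a : G) / (Function.invFun F (F a) : A) = (b : G) / (Function.invFun F (F b) : A) :=
    congrArg (fun x => (x.1 : G)) hab
  rw [h2] at h1
  exact Subtype.ext (div_left_injective h1)

/-- A map on `B` whose fibres lie in cosets of `D` has at least `[B : D]` values. -/
lemma relIndex_le {A : Type*} [AddCommGroup A] (D B : AddSubgroup A) {X : Type*} [Finite X]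
    (F : B → X) (h : ∀ a b, F a = F b → (a : A) - b ∈ D) : D.relIndex B ≤ Nat.card X := by
  apply Nat.card_le_card_of_injective (fun q : B ⧸ D.addSubgroupOf B => F q.out)
  intro q r hqr
  have := h _ _ hqr
  rw [← QuotientAddGroup.out_eq' q, ← QuotientAddGroup.out_eq' r]
  rw [eq_comm, QuotientAddGroup.eq, AddSubgroup.mem_addSubgroupOf]
  simpa [neg_add_eq_sub] using this

section
variable {L M : Type*} [Field L] [Field M] [NumberField L] [NumberField M] [Algebra L M]

/-- The product of the first `p` conjugates of `x` under the powers of `σ`. -/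
noncomputable def np (σ : M ≃ₐ[L] M) (p : ℕ) (x : M) : M := ∏ i ∈ Finset.range p, (σ ^ i) x

lemma np_mul (σ : M ≃ₐ[L] M) (p : ℕ) (x y : M) : np σ p (x * y) = np σ p x * np σ p y := by
  simp [np, Finset.prod_mul_distrib]

lemma np_inv (σ : M ≃ₐ[L] M) (p : ℕ) (x : M) : np σ p x⁻¹ = (np σ p x)⁻¹ := by
  simp [np]

lemma np_ne_zero (σ : M ≃ₐ[L] M) (p : ℕ) {x : M} (hx : x ≠ 0) : np σ p x ≠ 0 := by
  rw [np, Finset.prod_ne_zero_iff]; intro i _; exact (map_ne_zero _).2 hx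

lemma np_eq_norm {L M : Type*} [Field L] [Field M] [Algebra L M] [FiniteDimensional L M]
    [IsGalois L M] (σ : M ≃ₐ[L] M) (hσ : orderOf σ = Module.finrank L M) (x : M) :
    algebraMap L M (Algebra.norm L x) = ∏ i ∈ Finset.range (Module.finrank L M), (σ ^ i) x := by
  rw [Algebra.norm_eq_prod_automorphisms]
  symm
  have hinj : Set.InjOn (fun i : ℕ => σ ^ i) (Finset.range (Module.finrank L M)) := by
    rw [← hσ]
    have := pow_injOn_Iio_orderOf (x := σ)
    intro i hi j hj h
    exact this (by simpa using hi) (by simpa using hj) h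
  refine Finset.prod_nbij (fun i => σ ^ i) (by simp) hinj ?_ (fun _ _ => rfl)
  apply Finset.surjOn_of_injOn_of_card_le _ (by simp) hinj
  rw [Finset.card_univ, ← Nat.card_eq_fintype_card, IsGalois.card_aut_eq_finrank]; simp

lemma np_sigma [IsGalois L M] (σ : M ≃ₐ[L] M) (p : ℕ) (hf : Module.finrank L M = p) (hσ : orderOf σ = p)
    (x : M) : np σ p (σ x) = np σ p x := by
  subst hf
  rw [np, np, ← np_eq_norm σ hσ, ← np_eq_norm σ hσ, Algebra.norm_eq_of_algEquiv]

/-- Hilbert 90 with an integral solution. -/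
lemma hilbert90_int (σ : M ≃ₐ[L] M) (p : ℕ) (hσ : orderOf σ = p) (hp : p ≠ 0) (η : M)
    (hη : np σ p η = 1) : ∃ t : 𝓞 M, t ≠ 0 ∧ σ t = η * t := by
  obtain ⟨κ, hκ, h⟩ := hilbert90 σ p hσ hp η hη
  obtain ⟨z, hz, y, hy⟩ : ∃ (z : ℤ), z ≠ 0 ∧ ∃ y : 𝓞 M, (y : M) = z * κ := by
    have halg : Algebra.IsAlgebraic ℤ M := by
      have := Algebra.IsAlgebraic.of_finite ℚ M
      exact (IsFractionRing.comap_isAlgebraic_iff (A := ℤ) (K := ℚ) (C := M)).2 this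
    obtain ⟨z, hz, hi⟩ := (halg.isAlgebraic κ).exists_integral_multiple
    exact ⟨z, hz, ⟨z • κ, hi⟩, by simp⟩
  refine ⟨y, ?_, ?_⟩
  · intro h0
    rw [h0] at hy
    have : (z : M) * κ ≠ 0 := mul_ne_zero (by exact_mod_cast hz) hκ
    exact this (by rw [← hy]; simp)
  · rw [hy, map_mul, h]; simp; ring

lemma zpow_smul_eq [IsGalois L M] (σ : M ≃ₐ[L] M) (hσ : orderOf σ = Module.finrank L M)
    (I : Ideal (𝓞 M)) (h : σ • I = I) (τ : M ≃ₐ[L] M) : τ • I = I := by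
  have htop : Subgroup.zpowers σ = ⊤ := by
    apply Subgroup.eq_top_of_card_eq
    rw [Nat.card_zpowers, hσ, IsGalois.card_aut_eq_finrank]
  have hτ : τ ∈ Subgroup.zpowers σ := htop ▸ Subgroup.mem_top τ
  have hst : σ ∈ MulAction.stabilizer (M ≃ₐ[L] M) I := h
  exact (Subgroup.zpowers_le.2 hst) hτ

/-- `invariant_ideal` for a cyclic group: invariance under a generator suffices. -/
lemma invariant_ideal' [IsGalois L M]
    (hunr : ∀ P : Ideal (𝓞 M), P.IsPrime → P ≠ ⊥ → P.inertia (M ≃ₐ[L] M) = ⊥)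
    (σ : M ≃ₐ[L] M) (hσ : orderOf σ = Module.finrank L M)
    (I : Ideal (𝓞 M)) (hI : I ≠ ⊥) (h : σ • I = I) :
    ∃ J : (Ideal (𝓞 L))⁰, (J : Ideal (𝓞 L)).map (algebraMap (𝓞 L) (𝓞 M)) = I := by
  obtain ⟨J, hJ, h⟩ := invariant_ideal hunr I hI (zpow_smul_eq σ hσ I h)
  exact ⟨⟨J, mem_nonZeroDivisors_iff_ne_zero.2 hJ⟩, h⟩

lemma span_unit_mul {R : Type*} [CommRing R] (u : Rˣ) (x : R) :
    Ideal.span {(u : R) * x} = Ideal.span {x} :=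
  Ideal.span_singleton_mul_left_unit u.isUnit x

/-- Let `I` and `I'` represent ambiguous classes, so that `I ^ (σ - 1)` and `I' ^ (σ - 1)` are generated
by `y / x` and `y' / x'`. If the norms of these generators differ by the norm of a unit, then Hilbert
90 turns `I / I'` into an invariant ideal up to a principal one, so its class comes from the base. -/
lemma b1core [IsGalois L M]
    (hunr : ∀ P : Ideal (𝓞 M), P.IsPrime → P ≠ ⊥ → P.inertia (M ≃ₐ[L] M) = ⊥)
    (σ : M ≃ₐ[L] M) (p : ℕ) (hp : p ≠ 0) (hf : Module.finrank L M = p) (hσ : orderOf σ = p)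
    (I I' : (Ideal (𝓞 M))⁰) (x y x' y' : 𝓞 M) (hx : x ≠ 0) (hy : y ≠ 0) (hx' : x' ≠ 0) (hy' : y' ≠ 0)
    (h : Ideal.span {x} * σ • (I : Ideal (𝓞 M)) = Ideal.span {y} * I)
    (h' : Ideal.span {x'} * σ • (I' : Ideal (𝓞 M)) = Ideal.span {y'} * I') (w : (𝓞 M)ˣ)
    (hw : np σ p x * np σ p y' * np σ p (w : 𝓞 M) = np σ p x' * np σ p y) :
    ClassGroup.mk0 I / ClassGroup.mk0 I' ∈ (ClassGroup.extendedHom (𝓞 L) (𝓞 M)).range := by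
  obtain ⟨E, hE⟩ := ClassGroup.mk0_surjective (ClassGroup.mk0 I')⁻¹
  have hIE : ClassGroup.mk0 (I' * E) = 1 := by rw [map_mul, hE, mul_inv_cancel]
  obtain ⟨m, hm⟩ : ∃ m : 𝓞 M, (I' : Ideal (𝓞 M)) * (E : Ideal (𝓞 M)) = Ideal.span {m} := by
    rw [ClassGroup.mk0_eq_one_iff] at hIE
    exact hIE.1
  have hI'0 := mem_nonZeroDivisors_iff_ne_zero.1 I'.2
  have hI0 := mem_nonZeroDivisors_iff_ne_zero.1 I.2
  have hE0 := mem_nonZeroDivisors_iff_ne_zero.1 E.2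
  have hm0 : m ≠ 0 := by
    rintro rfl
    rw [Ideal.span_singleton_zero] at hm
    exact mul_ne_zero hI'0 hE0 hm
  have hE2 : Ideal.span {y' * m} * σ • (E : Ideal (𝓞 M)) = Ideal.span {x' * σ • m} * E := by
    have e1 : Ideal.span {y'} * I' * σ • (E : Ideal (𝓞 M)) = Ideal.span {x' * σ • m} := by
      rw [← h', mul_assoc, ← smul_mul', hm, smul_span, Ideal.span_singleton_mul_span_singleton]
    rw [← e1, ← Ideal.span_singleton_mul_span_singleton, ← hm]
    ring
  set a := x * (y' * m) with ha
  set b := y * (x' * σ • m) with hb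
  have hJ : Ideal.span {a} * σ • (I * E : Ideal (𝓞 M)) = Ideal.span {b} * (I * E) := by
    rw [smul_mul', ha, hb, ← Ideal.span_singleton_mul_span_singleton,
      ← Ideal.span_singleton_mul_span_singleton y, mul_mul_mul_comm, h, hE2]
    ring
  have ha0 : a ≠ 0 := mul_ne_zero hx (mul_ne_zero hy' hm0)
  have hsm : σ • m ≠ 0 := (smul_ne_zero_iff_ne σ).2 hm0
  have hb0 : b ≠ 0 := mul_ne_zero hy (mul_ne_zero hx' hsm)
  have hc0 : ∀ {z : 𝓞 M}, z ≠ 0 → (z : M) ≠ 0 := fun hz => by simpa using hz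
  obtain ⟨t, ht0, ht⟩ := hilbert90_int σ p hσ hp ((a : M) * w / b) (by
    rw [div_eq_mul_inv, np_mul, np_mul, np_inv, ha, hb]
    simp only [map_mul, np_mul]
    have : algebraMap (𝓞 M) M (σ • m) = σ (algebraMap (𝓞 M) M m) := rfl
    have hw' : np σ p (algebraMap (𝓞 M) M x) * np σ p (algebraMap (𝓞 M) M y') *
      np σ p (algebraMap (𝓞 M) M w) =
      np σ p (algebraMap (𝓞 M) M x') * np σ p (algebraMap (𝓞 M) M y) := hw
    rw [this, np_sigma σ p hf hσ, mul_inv_eq_one₀]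
    · linear_combination np σ p (algebraMap (𝓞 M) M m) * hw'
    · exact mul_ne_zero (np_ne_zero _ _ (hc0 hy))
        (mul_ne_zero (np_ne_zero _ _ (hc0 hx')) (np_ne_zero _ _ (hc0 hm0))))
  have ht' : b * σ • t = w * (a * t) := by
    ext
    change (b : M) * σ t = w * (a * t)
    rw [ht]
    have := hc0 hb0
    field_simp
  have hinv : σ • (Ideal.span {t} * (I * E) : Ideal (𝓞 M)) = Ideal.span {t} * (I * E) := by
    have ha' : Ideal.span {a} ≠ 0 := by simpa using ha0
    apply mul_left_cancel₀ ha'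
    rw [smul_mul', mul_left_comm, hJ, smul_span, ← mul_assoc,
      Ideal.span_singleton_mul_span_singleton, ← mul_assoc (Ideal.span {a}),
      Ideal.span_singleton_mul_span_singleton, mul_comm (σ • t), ht', span_unit_mul]
  have ht0' : Ideal.span {t} ≠ 0 := by simpa using ht0
  obtain ⟨J, hJ⟩ := invariant_ideal' hunr σ (hσ.trans hf.symm) _
    (mul_ne_zero ht0' (mul_ne_zero hI0 hE0)) hinv
  refine ⟨ClassGroup.mk0 J, ?_⟩
  rw [ClassGroup.extendedHom_mk0, div_eq_mul_inv, ← hE, ← map_mul, ClassGroup.mk0_eq_mk0_iff]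
  refine ⟨1, t, one_ne_zero, ht0, ?_⟩
  rw [Ideal.span_singleton_one]
  change ⊤ * Ideal.map _ _ = _
  rw [hJ, ← Ideal.one_eq_top, one_mul]; rfl

lemma u_sub {M : Type*} [Field M] (a b : Additive (𝓞 M)ˣ) :
    ((((a - b).toMul : (𝓞 M)ˣ) : 𝓞 M) : M) = ((a.toMul : 𝓞 M) : M) / ((b.toMul : 𝓞 M) : M) := by
  rw [eq_div_iff (by simp)]
  exact congrArg (fun x : Additive (𝓞 M)ˣ => ((x.toMul : 𝓞 M) : M)) (sub_add_cancel a b)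

/-- The unit `u = σ x / x` attached to an ideal `J` that becomes principal with generator `x` depends
only on the class of `J`, modulo the units of the form `σ w / w`. -/
lemma b2core [IsGalois L M]
    (σ : M ≃ₐ[L] M) (J J' : (Ideal (𝓞 L))⁰) (x x' : 𝓞 M) (hx : x ≠ 0) (hx' : x' ≠ 0)
    (u u' : Additive (𝓞 M)ˣ) (hu : σ x = (u.toMul : 𝓞 M) * x) (hu' : σ x' = (u'.toMul : 𝓞 M) * x')
    (hJ : (J : Ideal (𝓞 L)).map (algebraMap (𝓞 L) (𝓞 M)) = Ideal.span {x})
    (hJ' : (J' : Ideal (𝓞 L)).map (algebraMap (𝓞 L) (𝓞 M)) = Ideal.span {x'})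
    (h : ClassGroup.mk0 J = ClassGroup.mk0 J') : u - u' ∈ (uD σ).range := by
  obtain ⟨α, β, hα, hβ, h⟩ := ClassGroup.mk0_eq_mk0_iff.1 h
  have h2 := congrArg (Ideal.map (algebraMap (𝓞 L) (𝓞 M))) h
  rw [Ideal.map_mul, Ideal.map_mul, hJ, hJ', Ideal.map_span, Ideal.map_span, Set.image_singleton,
    Set.image_singleton, Ideal.span_singleton_mul_span_singleton,
    Ideal.span_singleton_mul_span_singleton, Ideal.span_singleton_eq_span_singleton] at h2
  obtain ⟨v, hv⟩ := h2.symm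
  refine ⟨Additive.ofMul v, ?_⟩
  apply u_ext
  rw [uD_coe, u_sub, toMul_ofMul]
  have hc0 : ∀ {z : 𝓞 M}, z ≠ 0 → (z : M) ≠ 0 := fun hz => by simpa using hz
  have hv' : algebraMap L M β * (x' : M) * v = algebraMap L M α * x := congrArg (fun z : 𝓞 M => (z : M)) hv
  have hv2 := congrArg σ hv'
  simp only [map_mul, AlgEquiv.commutes, hu, hu'] at hv2
  have hv0 : ((v : 𝓞 M) : M) ≠ 0 := by simp
  have hu0 : ((u'.toMul : 𝓞 M) : M) ≠ 0 := by simp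
  have hαx : algebraMap L M α * (x : M) ≠ 0 := mul_ne_zero (by simpa using hα) (hc0 hx)
  rw [div_eq_iff hv0]
  apply mul_right_cancel₀ hαx
  rw [← hv']
  field_simp
  rw [← sub_eq_zero] at hv2 hv' ⊢
  linear_combination hv2 - (u.toMul : 𝓞 M) * hv'

end
end ClRank

namespace ClRank
set_option linter.unusedSectionVars false
set_option linter.unusedVariables false

open scoped nonZeroDivisors Pointwise

/-- The norm on class groups is not surjective in an everywhere unramified cyclic extension
of prime degree. -/
theorem norm_not_surj {L M : Type*} [Field L] [Field M] [NumberField L] [NumberField M] [Algebra L M]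
    [IsGalois L M] (p : ℕ) (hp : p.Prime) (hp3 : 3 ≤ p) (ζ : L) (hζ : IsPrimitiveRoot ζ p)
    (hf : Module.finrank L M = p)
    (hunr : ∀ P : Ideal (𝓞 M), P.IsPrime → P ≠ ⊥ → P.inertia (M ≃ₐ[L] M) = ⊥)
    (g : ClassGroup (𝓞 M) →* ClassGroup (𝓞 L))
    (hg : ∀ (I : (Ideal (𝓞 M))⁰) (J : (Ideal (𝓞 L))⁰),
        (J : Ideal (𝓞 L)) = Ideal.relNorm (𝓞 L) (I : Ideal (𝓞 M)) →
        g (ClassGroup.mk0 I) = ClassGroup.mk0 J) : g.range ≠ ⊤ := by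
  intro htop
  have : Fact p.Prime := ⟨hp⟩
  have hp0 := hp.ne_zero
  have hcard : Nat.card (M ≃ₐ[L] M) = p := by rw [IsGalois.card_aut_eq_finrank, hf]
  obtain ⟨σ, hσ⟩ := exists_prime_orderOf_dvd_card' (G := M ≃ₐ[L] M) p (by rw [hcard])
  have hσ' := hσ.trans hf.symm
  have hc0 : ∀ {z : 𝓞 M}, z ≠ 0 → (z : M) ≠ 0 := fun hz => by simpa using hz
  obtain ⟨s, hs⟩ := exists_smulCl σ
  obtain ⟨D, hD⟩ : ∃ D : ClassGroup (𝓞 M) →* ClassGroup (𝓞 M), ∀ c, D c = s c / c :=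
    ⟨s / MonoidHom.id _, fun _ => rfl⟩
  have hgD : D.range ≤ g.ker := by
    rintro _ ⟨c, rfl⟩
    obtain ⟨I, rfl⟩ := ClassGroup.mk0_surjective c
    have hn0 : Ideal.relNorm (𝓞 L) (I : Ideal (𝓞 M)) ∈ (Ideal (𝓞 L))⁰ := by
      have := mem_nonZeroDivisors_iff_ne_zero.1 I.2
      rw [mem_nonZeroDivisors_iff_ne_zero, Ideal.zero_eq_bot, Ne, Ideal.relNorm_eq_bot_iff]
      exact this
    have e1 := hg I ⟨_, hn0⟩ rfl
    have e2 := hg ⟨_, smul_mem_nzd σ I⟩ ⟨_, hn0⟩ (by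
      change _ = Ideal.relNorm (𝓞 L) (σ • (I : Ideal (𝓞 M)))
      rw [Ideal.relNorm_smul])
    rw [MonoidHom.mem_ker, hD, hs, map_div, e1, e2, div_self']
  have hL : Nat.card (ClassGroup (𝓞 L)) ≤ Nat.card D.ker := by
    have h1 : Nat.card g.range = g.ker.index := (Subgroup.index_ker g).symm
    rw [htop, Subgroup.card_top] at h1
    rw [h1]
    have h2 : g.ker.index ∣ D.range.index := Subgroup.index_dvd_of_le hgD
    have h3 : D.range.index = Nat.card D.ker := by
      have h4 := D.range.index_mul_card
      have h5 := D.ker.index_mul_card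
      rw [Subgroup.index_ker, mul_comm, ← h4, mul_comm] at h5
      exact (Nat.eq_of_mul_eq_mul_left Nat.card_pos (by rw [mul_comm] at h5 ⊢; rw [h5, mul_comm])).symm
    rw [← h3]
    exact Nat.le_of_dvd (Nat.pos_of_ne_zero Subgroup.index_ne_zero_of_finite) h2
  obtain ⟨hne, hU⟩ := units_ineq p hp hp3 ζ hζ hf σ hσ
  set j := ClassGroup.extendedHom (𝓞 L) (𝓞 M) with hjdef
  -- An ambiguous class is represented by `I` with `I ^ (σ - 1) = (y / x)`, and the norm of `x / y` is a
  -- unit of `L`; modulo norms of units it determines the class up to classes extended from `L`.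
  have hb1 : Nat.card D.ker ≤ Nat.card j.range * (uN σ p).range.relIndex (uD σ).ker := by
    have hdata : ∀ c : D.ker, ∃ (I : (Ideal (𝓞 M))⁰) (x y : 𝓞 M) (u : (uD σ).ker),
        ClassGroup.mk0 I = c ∧ x ≠ 0 ∧ y ≠ 0 ∧
        Ideal.span {x} * σ • (I : Ideal (𝓞 M)) = Ideal.span {y} * I ∧
        np σ p x = ((u.1.toMul : 𝓞 M) : M) * np σ p y := by
      rintro ⟨c, hc⟩
      obtain ⟨I, rfl⟩ := ClassGroup.mk0_surjective c
      rw [MonoidHom.mem_ker, hD, hs, div_eq_one] at hc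
      obtain ⟨x, y, hx, hy, h⟩ := ClassGroup.mk0_eq_mk0_iff.1 hc
      have h2 := congrArg (Ideal.relNorm (𝓞 L)) h
      simp only [map_mul] at h2
      rw [Ideal.relNorm_smul] at h2
      have hI0 : Ideal.relNorm (𝓞 L) (I : Ideal (𝓞 M)) ≠ 0 := by
        have := mem_nonZeroDivisors_iff_ne_zero.1 I.2
        rw [Ideal.zero_eq_bot, Ne, Ideal.relNorm_eq_bot_iff]
        exact this
      have h3 := mul_right_cancel₀ hI0 h2
      rw [Ideal.relNorm_singleton, Ideal.relNorm_singleton,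
        Ideal.span_singleton_eq_span_singleton] at h3
      obtain ⟨v, hv⟩ := h3.symm
      have hvn : ∀ z : 𝓞 M, algebraMap L M ((Algebra.intNorm (𝓞 L) (𝓞 M) z : 𝓞 L) : L) = np σ p z := by
        intro z
        have h4 := Algebra.algebraMap_intNorm (K := L) (L := M) (A := 𝓞 L) z
        change algebraMap L M (algebraMap (𝓞 L) L _) = _
        rw [h4, np_eq_norm σ hσ', hf]; rfl
      refine ⟨I, x, y, ⟨Additive.ofMul (Units.map (algebraMap (𝓞 L) (𝓞 M) : 𝓞 L →* 𝓞 M) v), ?_⟩,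
        rfl, hx, hy, h, ?_⟩
      · rw [mem_uD_ker]
        exact σ.commutes _
      · rw [← hvn, ← hvn, ← hv]
        change algebraMap L M (algebraMap (𝓞 L) L _) = algebraMap L M (algebraMap (𝓞 L) L _) *
          algebraMap L M (algebraMap (𝓞 L) L _)
        rw [map_mul, map_mul, mul_comm]
    choose I x y u hI hx hy hxy hu using hdata
    have : Finite ((uD σ).ker ⧸ (uN σ p).range.addSubgroupOf (uD σ).ker) :=
      Nat.finite_of_card_ne_zero hne
    refine card_le_mul D.ker j.range (Q := (uD σ).ker ⧸ (uN σ p).range.addSubgroupOf (uD σ).ker)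
      (fun c => QuotientAddGroup.mk (u c)) ?_
    intro c c' hcc
    rw [QuotientAddGroup.eq, AddSubgroup.mem_addSubgroupOf] at hcc
    obtain ⟨w, hw⟩ := hcc
    rw [← hI c, ← hI c']
    refine b1core hunr σ p hp0 hf hσ (I c) (I c') (x c) (y c) (x c') (y c') (hx c) (hy c) (hx c')
      (hy c') (hxy c) (hxy c') w.toMul ?_
    have h5 : (uN σ p) w = (u c').1 - (u c).1 := by rw [hw]; simp [neg_add_eq_sub]
    have h6 := uN_coe σ p w
    rw [h5, u_sub] at h6
    have h7 : np σ p ((w.toMul : 𝓞 M) : M) = (((u c').1.toMul : 𝓞 M) : M) / (((u c).1.toMul : 𝓞 M) : M) := h6.symm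
    rw [h7, hu, hu]
    have : (((u c).1.toMul : 𝓞 M) : M) ≠ 0 := by simp
    field_simp
  -- By Hilbert 90 a unit of norm `1` is `σ x / x`. The ideal `(x)` is invariant, hence extended from an
  -- ideal `J` of `L`, and the class of `J` capitulates.
  have hb2 : (uD σ).range.relIndex (uN σ p).ker ≤ Nat.card j.ker := by
    have hdata : ∀ b : (uN σ p).ker, ∃ (J : (Ideal (𝓞 L))⁰) (x : 𝓞 M),
        x ≠ 0 ∧ σ x = (b.1.toMul : 𝓞 M) * x ∧
        (J : Ideal (𝓞 L)).map (algebraMap (𝓞 L) (𝓞 M)) = Ideal.span {x} := by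
      rintro ⟨b, hb⟩
      obtain ⟨x, hx, hxb⟩ := hilbert90_int σ p hσ hp0 ((b.toMul : 𝓞 M) : M) (by
        rw [np, ← uN_coe]
        rw [AddMonoidHom.mem_ker] at hb
        rw [hb]; simp)
      have hinv : σ • Ideal.span {x} = Ideal.span {x} := by
        rw [smul_span]
        have : σ • x = (b.toMul : 𝓞 M) * x := by ext; exact hxb
        rw [this, span_unit_mul]
      obtain ⟨J, hJ⟩ := invariant_ideal' hunr σ hσ' _ (by simpa using hx) hinv
      exact ⟨J, x, hx, hxb, hJ⟩
    choose J x hx hxb hJ using hdata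
    refine relIndex_le _ _ (X := j.ker) (fun b => ⟨ClassGroup.mk0 (J b), ?_⟩) ?_
    · rw [MonoidHom.mem_ker, ClassGroup.extendedHom_mk0, ClassGroup.mk0_eq_one_iff, hJ]
      exact ⟨x b, rfl⟩
    · intro b b' hbb
      exact b2core σ (J b) (J b') (x b) (x b') (hx b) (hx b') b.1 b'.1 (hxb b) (hxb b') (hJ b) (hJ b')
        (congrArg Subtype.val hbb)
  have hj : Nat.card j.range * Nat.card j.ker = Nat.card (ClassGroup (𝓞 L)) := by
    rw [← Subgroup.index_ker, j.ker.index_mul_card]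
  have hpos : 0 < Nat.card (ClassGroup (𝓞 L)) := Nat.card_pos
  have hfin : p * Nat.card (ClassGroup (𝓞 L)) ≤ Nat.card (ClassGroup (𝓞 L)) := by
    calc p * Nat.card (ClassGroup (𝓞 L)) ≤ p * (Nat.card j.range * (uN σ p).range.relIndex (uD σ).ker) :=
          Nat.mul_le_mul_left _ (hL.trans hb1)
      _ = Nat.card j.range * (p * (uN σ p).range.relIndex (uD σ).ker) := by ring
      _ ≤ Nat.card j.range * Nat.card j.ker := Nat.mul_le_mul_left _ (hU.trans hb2)
      _ = _ := hj
  nlinarith [hp.two_le]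

end ClRank

/-! ### Local `p`-th powers -/

namespace ClRank
set_option linter.unusedSectionVars false
set_option linter.unusedVariables false

open scoped nonZeroDivisors Pointwise
open IsDedekindDomain HeightOneSpectrum

lemma val_smul_le {L M : Type*} [Field L] [Field M] [NumberField M] [Algebra L M] (σ : M ≃ₐ[L] M)
    (P Q : HeightOneSpectrum (𝓞 M)) (h : σ • P.asIdeal = Q.asIdeal) (a : 𝓞 M) :
    Q.intValuation (σ • a) ≤ P.intValuation a := by
  by_cases ha : a = 0
  · simp [ha]
  · rw [P.intValuation_if_neg ha, intValuation_le_pow_iff_mem, ← h]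
    have h1 : a ∈ P.asIdeal ^ (Associates.mk P.asIdeal).count (Associates.mk (Ideal.span {a})).factors := by
      rw [← intValuation_le_pow_iff_mem, P.intValuation_if_neg ha]
    rw [← smul_pow']
    exact Ideal.smul_mem_pointwise_smul _ _ _ h1

lemma val_smul {L M : Type*} [Field L] [Field M] [NumberField M] [Algebra L M] (σ : M ≃ₐ[L] M)
    (P Q : HeightOneSpectrum (𝓞 M)) (h : σ • P.asIdeal = Q.asIdeal) (x : M) :
    Q.valuation M (σ x) = P.valuation M x := by
  have key : ∀ a : 𝓞 M, Q.intValuation (σ • a) = P.intValuation a := by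
    intro a
    refine le_antisymm (val_smul_le σ P Q h a) ?_
    have := val_smul_le σ⁻¹ Q P (by rw [← h, inv_smul_smul]) (σ • a)
    rwa [inv_smul_smul] at this
  obtain ⟨a, b, hb, rfl⟩ := IsFractionRing.div_surjective (A := 𝓞 M) x
  have h1 : ∀ a : 𝓞 M, σ (algebraMap (𝓞 M) M a) = algebraMap (𝓞 M) M (σ • a) := fun a => rfl
  rw [map_div₀, map_div₀, map_div₀, h1, h1, valuation_of_algebraMap, valuation_of_algebraMap,
    valuation_of_algebraMap, valuation_of_algebraMap, key, key]

variable {F : Type*} [Field F] [NumberField F]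

/-- For `z` a primitive `p`-th root of unity: after scaling by a `p`-th power, `α` is so close to `1`
that it is a `p`-th power in the completion at `w`. This is stated without completions. -/
def Sp (p : ℕ) (z : F) (w : HeightOneSpectrum (𝓞 F)) (α : F) : Prop :=
  ∃ δ : F, w.valuation F (α * δ ^ p - 1) < w.valuation F (z - 1) ^ p

/-- The valuation of `α` at `w` is divisible by `p`. -/
def Un (p : ℕ) (w : HeightOneSpectrum (𝓞 F)) (α : F) : Prop :=
  ∃ δ : F, w.valuation F (α * δ ^ p) = 1

lemma prod_sub_zeta {p : ℕ} (hp : p ≠ 0) {z : F} (hz : IsPrimitiveRoot z p) (x : F) :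
    x ^ p - 1 = ∏ i ∈ Finset.range p, (x - z ^ i) := by
  have := hz.pow_sub_pow_eq_prod_sub_mul x 1 (Nat.pos_of_ne_zero hp)
  rw [one_pow] at this
  rw [this]
  simp only [mul_one]
  have : NeZero p := ⟨hp⟩
  symm
  refine Finset.prod_bij (fun i _ => z ^ i) ?_ ?_ ?_ ?_
  · intro i _
    rw [Polynomial.mem_nthRootsFinset (Nat.pos_of_ne_zero hp), ← pow_mul, mul_comm, pow_mul,
      hz.pow_eq_one, one_pow]
  · intro i hi j hj h
    exact hz.pow_inj (Finset.mem_range.1 hi) (Finset.mem_range.1 hj) h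
  · intro b hb
    rw [Polynomial.mem_nthRootsFinset (Nat.pos_of_ne_zero hp)] at hb
    obtain ⟨i, hi, h⟩ := hz.eq_pow_of_pow_eq_one hb
    exact ⟨i, Finset.mem_range.2 hi, h⟩
  · intro _ _; rfl

/-- If `x^p` is close to `1`, then `x` is close to some `p`-th root of unity. -/
lemma exists_close {p : ℕ} (hp : p ≠ 0) {z : F} (hz : IsPrimitiveRoot z p) {w : HeightOneSpectrum (𝓞 F)}
    {x : F} (h : w.valuation F (x ^ p - 1) < w.valuation F (z - 1) ^ p) :
    ∃ i < p, w.valuation F (x - z ^ i) < w.valuation F (z - 1) := by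
  by_contra hcon
  push Not at hcon
  refine absurd h (not_lt.2 ?_)
  rw [prod_sub_zeta hp hz, map_prod]
  calc w.valuation F (z - 1) ^ p = ∏ i ∈ Finset.range p, w.valuation F (z - 1) := by simp
    _ ≤ _ := Finset.prod_le_prod' fun i hi => hcon i (Finset.mem_range.1 hi)

/-- A root of unity of valuation distance less than `ζ-1` from `1` is trivial. -/
lemma root_eq_one {p : ℕ} (hp : p.Prime) {z : F} (hz : IsPrimitiveRoot z p) {w : HeightOneSpectrum (𝓞 F)}
    {i : ℕ} (h : w.valuation F (z ^ i - 1) < w.valuation F (z - 1)) : z ^ i = 1 := by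
  by_contra hne
  have hzi : IsPrimitiveRoot (z ^ i) p := by
    refine IsPrimitiveRoot.pow_of_coprime hz i ?_
    rw [Nat.coprime_comm, hp.coprime_iff_not_dvd]
    exact fun hd => hne ((hz.pow_eq_one_iff_dvd i).2 hd)
  have : NeZero p := ⟨hp.ne_zero⟩
  obtain ⟨j, hj, hzj⟩ := hzi.eq_pow_of_pow_eq_one hz.pow_eq_one
  have hxi : ∀ (n : ℕ), w.valuation F (z ^ n) = 1 := by
    intro n
    have : w.valuation F z ^ p = 1 := by rw [← map_pow, hz.pow_eq_one, map_one]
    rw [map_pow, (pow_eq_one_iff_of_nonneg zero_le hp.ne_zero).1 this, one_pow]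
  have h1 : z - 1 = (z ^ i - 1) * ∑ k ∈ Finset.range j, (z ^ i) ^ k := by
    rw [mul_geom_sum, hzj]
  refine absurd h (not_lt.2 ?_)
  conv_lhs => rw [h1, map_mul]
  refine mul_le_of_le_one_right' ?_
  refine Valuation.map_sum_le _ fun k _ => ?_
  rw [← pow_mul, hxi]

lemma Sp.pow_mul {p : ℕ} {z : F} {w : HeightOneSpectrum (𝓞 F)} {α : F} (h : Sp p z w α) {β : F}
    (hβ : β ≠ 0) : Sp p z w (α * β ^ p) := by
  obtain ⟨δ, h⟩ := h
  refine ⟨δ / β, ?_⟩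
  rwa [div_pow, mul_assoc, mul_div_cancel₀ _ (pow_ne_zero _ hβ)]

lemma z_val {p : ℕ} (hp : p ≠ 0) {z : F} (hz : IsPrimitiveRoot z p) (w : HeightOneSpectrum (𝓞 F)) :
    w.valuation F (z - 1) ≤ 1 := by
  have : w.valuation F z ^ p = 1 := by rw [← map_pow, hz.pow_eq_one, map_one]
  have h1 := (pow_eq_one_iff_of_nonneg zero_le hp).1 this
  exact (Valuation.map_sub _ _ _).trans (by simp [h1])

lemma Sp.val {p : ℕ} (hp : p ≠ 0) {z : F} (hz : IsPrimitiveRoot z p) {w : HeightOneSpectrum (𝓞 F)} {α δ : F}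
    (h : w.valuation F (α * δ ^ p - 1) < w.valuation F (z - 1) ^ p) : w.valuation F (α * δ ^ p) = 1 := by
  have := (w.valuation F).map_one_add_of_lt (h.trans_le (pow_le_one' (z_val hp hz w) p))
  simpa using this

lemma Sp.mul {p : ℕ} (hp : p ≠ 0) {z : F} (hz : IsPrimitiveRoot z p) {w : HeightOneSpectrum (𝓞 F)} {α β : F}
    (hα : Sp p z w α) (hβ : Sp p z w β) : Sp p z w (α * β) := by
  obtain ⟨δ, h⟩ := hα
  obtain ⟨ε, h'⟩ := hβ
  refine ⟨δ * ε, ?_⟩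
  have : α * β * (δ * ε) ^ p - 1 = (α * δ ^ p) * (β * ε ^ p - 1) + (α * δ ^ p - 1) := by ring
  rw [this]
  refine Valuation.map_add_lt _ ?_ h
  rwa [map_mul, Sp.val hp hz h, one_mul]

lemma Sp.inv {p : ℕ} (hp : p ≠ 0) {z : F} (hz : IsPrimitiveRoot z p) {w : HeightOneSpectrum (𝓞 F)} {α : F}
    (hα : Sp p z w α) : Sp p z w α⁻¹ := by
  obtain ⟨δ, h⟩ := hα
  refine ⟨δ⁻¹, ?_⟩
  have hv := Sp.val hp hz h
  have hne : α * δ ^ p ≠ 0 := by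
    intro h0; rw [h0] at hv; simp at hv
  have : α⁻¹ * δ⁻¹ ^ p - 1 = - ((α * δ ^ p - 1) * (α * δ ^ p)⁻¹) := by
    rw [sub_mul, mul_inv_cancel₀ hne, mul_inv, inv_pow]; ring
  rwa [this, Valuation.map_neg, map_mul, map_inv₀, hv, inv_one, mul_one]

lemma Sp.one {p : ℕ} {z : F} (hz1 : z ≠ 1) {w : HeightOneSpectrum (𝓞 F)}  : Sp p z w 1 := by
  refine ⟨1, ?_⟩
  simp only [one_pow, mul_one, sub_self, map_zero]
  exact pow_pos ((Valuation.pos_iff _).2 (sub_ne_zero.2 hz1)) p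

lemma Sp.un {p : ℕ} (hp : p ≠ 0) {z : F} (hz : IsPrimitiveRoot z p) {w : HeightOneSpectrum (𝓞 F)} {α : F}
    (hα : Sp p z w α) : Un p w α := by
  obtain ⟨δ, h⟩ := hα
  exact ⟨δ, Sp.val hp hz h⟩

lemma Un.mul {p : ℕ} {w : HeightOneSpectrum (𝓞 F)} {α β : F}
    (hα : Un p w α) (hβ : Un p w β) : Un p w (α * β) := by
  obtain ⟨δ, h⟩ := hα
  obtain ⟨ε, h'⟩ := hβ
  refine ⟨δ * ε, ?_⟩
  have : α * β * (δ * ε) ^ p = (α * δ ^ p) * (β * ε ^ p) := by ring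
  rw [this, map_mul, h, h', one_mul]

lemma Un.inv {p : ℕ} {w : HeightOneSpectrum (𝓞 F)} {α : F} (hα : Un p w α) : Un p w α⁻¹ := by
  obtain ⟨δ, h⟩ := hα
  refine ⟨δ⁻¹, ?_⟩
  rw [inv_pow, ← mul_inv, map_inv₀, h, inv_one]

lemma Un.one {p : ℕ} {w : HeightOneSpectrum (𝓞 F)} : Un p w (1 : F) := ⟨1, by simp⟩

end ClRank

/-! ### Decomposition and inertia in Kummer extensions -/

namespace ClRank
set_option linter.unusedSectionVars false
set_option linter.unusedVariables false

open scoped nonZeroDivisors Pointwise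
open IsDedekindDomain HeightOneSpectrum

section
variable {L M : Type*} [Field L] [Field M] [NumberField L] [NumberField M] [Algebra L M]
  (w : HeightOneSpectrum (𝓞 L)) (P : HeightOneSpectrum (𝓞 M)) [P.asIdeal.LiesOver w.asIdeal]

lemma val_lt_iff (x y : L) : P.valuation M (algebraMap L M x) < P.valuation M (algebraMap L M y) ↔
    w.valuation L x < w.valuation L y := by
  have h0 := Ideal.IsDedekindDomain.ramificationIdx'_ne_zero_of_liesOver P.asIdeal w.ne_bot
  rw [← valuation_liesOver M w P, ← valuation_liesOver M w P]
  exact pow_lt_pow_iff_left₀ zero_le zero_le h0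

lemma val_eq_one_iff (x : L) : P.valuation M (algebraMap L M x) = 1 ↔ w.valuation L x = 1 := by
  have h0 := Ideal.IsDedekindDomain.ramificationIdx'_ne_zero_of_liesOver P.asIdeal w.ne_bot
  rw [← valuation_liesOver M w P]
  exact pow_eq_one_iff_of_nonneg zero_le h0

lemma Sp.map {p : ℕ} {z α : L} (h : Sp p z w α) : Sp p (algebraMap L M z) P (algebraMap L M α) := by
  obtain ⟨δ, h⟩ := h
  refine ⟨algebraMap L M δ, ?_⟩
  rw [← map_pow, ← val_lt_iff w P] at h
  simpa using h

lemma Un.map {p : ℕ} {α : L} (h : Un p w α) : Un p P (algebraMap L M α) := by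
  obtain ⟨δ, h⟩ := h
  refine ⟨algebraMap L M δ, ?_⟩
  rw [← val_eq_one_iff w P] at h
  simpa using h

variable {p : ℕ} (hp : p.Prime) {z : L} (hz : IsPrimitiveRoot z p) {X : M} {α : L}
  (hX : X ^ p = algebraMap L M α)

include hp hz hX in
lemma exists_conj (hX0 : X ≠ 0) (σ : M ≃ₐ[L] M) : ∃ k, σ X = algebraMap L M z ^ k * X := by
  have : NeZero p := ⟨hp.ne_zero⟩
  obtain ⟨k, -, hk⟩ := (hz.map_of_injective (algebraMap L M).injective).eq_pow_of_pow_eq_one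
    (ξ := σ X / X) (by rw [div_pow, ← map_pow, hX, σ.commutes, div_self]; rw [← hX]; exact pow_ne_zero _ hX0)
  exact ⟨k, by rw [hk]; field_simp⟩

include hp hz hX in
/-- A place where `α` is locally a `p`-th power splits completely in `L(α^{1/p})`. -/
lemma stab_trivial (hfaith : ∀ σ : M ≃ₐ[L] M, σ X = X → σ = 1) (hα : Sp p z w α)
    (σ : M ≃ₐ[L] M) (hσ : σ • P.asIdeal = P.asIdeal) : σ = 1 := by
  have hzM := hz.map_of_injective (algebraMap L M).injective
  obtain ⟨δ', h⟩ := hα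
  obtain ⟨δ, hδ⟩ : ∃ δ, δ = algebraMap L M δ' := ⟨_, rfl⟩
  rw [← map_pow, ← val_lt_iff w P] at h
  simp only [(algebraMap L M).map_pow, (algebraMap L M).map_sub, (algebraMap L M).map_mul,
    (algebraMap L M).map_one, ← hδ] at h
  rw [map_pow] at h
  have hX0 : X ≠ 0 := by
    rintro rfl
    rw [← hX] at h
    rw [zero_pow hp.ne_zero, zero_mul, zero_sub, Valuation.map_neg, map_one] at h
    exact absurd h (not_lt.2 (pow_le_one' (z_val hp.ne_zero hzM P) p))
  obtain ⟨k, hk⟩ := exists_conj hp hz hX hX0 σ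
  rw [← hX, ← mul_pow] at h
  obtain ⟨i, hi, hc⟩ := exists_close hp.ne_zero hzM h
  set c : M := algebraMap L M z with hc'
  have hcσ : σ c = c := σ.commutes _
  have h1 := hc
  rw [← val_smul σ P P hσ, map_sub, map_mul, map_pow, hcσ, hk, hδ, σ.commutes, ← hδ] at h1
  have hcv : P.valuation M c = 1 := by
    have : P.valuation M c ^ p = 1 := by rw [← map_pow, hzM.pow_eq_one, map_one]
    exact (pow_eq_one_iff_of_nonneg zero_le hp.ne_zero).1 this
  have e3 : P.valuation M (c ^ k - 1) < P.valuation M (c - 1) := by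
    have e : c ^ i * (c ^ k - 1) = (c ^ k * X * δ - c ^ i)
      - c ^ k * (X * δ - c ^ i) := by ring
    have h5 : P.valuation M (c ^ i * (c ^ k - 1)) < P.valuation M (c - 1) := by
      rw [e]
      refine Valuation.map_sub_lt _ h1 ?_
      rwa [map_mul, map_pow, hcv, one_pow, one_mul]
    rwa [map_mul, map_pow, hcv, one_pow, one_mul] at h5
  exact hfaith σ (by rw [hk, root_eq_one hp hzM e3, one_mul])

include hp hz hX in
/-- `L(α^{1/p})` is unramified at places away from `p` where `p` divides the valuation of `α`. -/
lemma inertia_trivial (hfaith : ∀ σ : M ≃ₐ[L] M, σ X = X → σ = 1) (hα : Un p w α)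
    (hw : w.valuation L (z - 1) = 1) : P.asIdeal.inertia (M ≃ₐ[L] M) = ⊥ := by
  rw [eq_bot_iff]
  intro σ hσ
  rw [Subgroup.mem_bot]
  rw [AddSubgroup.mem_inertia] at hσ
  have hzM := hz.map_of_injective (algebraMap L M).injective
  obtain ⟨δ, h⟩ := hα
  have hX0 : X ≠ 0 := by
    rintro rfl
    rw [zero_pow hp.ne_zero, eq_comm, map_eq_zero] at hX
    simp [hX] at h
  obtain ⟨k, hk⟩ := exists_conj hp hz hX hX0 σ
  set c : M := algebraMap L M z with hc
  set Y : M := X * algebraMap L M δ with hY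
  have hYv : P.valuation M Y = 1 := by
    rw [← val_eq_one_iff w P, map_mul, map_pow, ← hX, ← mul_pow, map_pow] at h
    exact (pow_eq_one_iff_of_nonneg zero_le hp.ne_zero).1 h
  obtain ⟨n, d, hnd⟩ := P.exists_primeCompl_mul_eq_of_integer Y hYv.le
  have hdv : P.valuation M (algebraMap (𝓞 M) M d.1) = 1 := by
    rw [valuation_eq_one_iff_notMem]; exact d.2
  have hσY : σ Y = c ^ k * Y := by
    rw [hY, map_mul, hk, σ.commutes]; ring
  have hin : ∀ a : 𝓞 M, P.valuation M (σ (algebraMap (𝓞 M) M a) - algebraMap (𝓞 M) M a) < 1 := by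
    intro a
    have := (P.valuation_lt_one_iff_mem (K := M) _).2 (hσ a)
    exact this
  have hcv : P.valuation M (c ^ k) = 1 := by
    have : P.valuation M c ^ p = 1 := by rw [← map_pow, hzM.pow_eq_one, map_one]
    rw [map_pow, (pow_eq_one_iff_of_nonneg zero_le hp.ne_zero).1 this, one_pow]
  have e1 := hin n
  rw [← hnd, map_mul, hσY] at e1
  have e2 := hin d.1
  have e3 : P.valuation M (c ^ k - 1) < 1 := by
    have : (c ^ k - 1) * (Y * algebraMap (𝓞 M) M d.1) = (c ^ k * Y * σ (algebraMap (𝓞 M) M d.1) - Y * algebraMap (𝓞 M) M d.1)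
      - c ^ k * Y * (σ (algebraMap (𝓞 M) M d.1) - algebraMap (𝓞 M) M d.1) := by ring
    have h5 : P.valuation M ((c ^ k - 1) * (Y * algebraMap (𝓞 M) M d.1)) < 1 := by
      rw [this]
      refine Valuation.map_sub_lt _ e1 ?_
      rwa [map_mul, map_mul, hcv, hYv, one_mul, one_mul]
    rwa [map_mul, map_mul, hYv, hdv, mul_one, mul_one] at h5
  have hw' : P.valuation M (c - 1) = 1 := by
    rw [← val_eq_one_iff w P, map_sub, map_one] at hw; exact hw
  rw [← hw'] at e3
  exact hfaith σ (by rw [hk, root_eq_one hp hzM e3, one_mul])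
end

end ClRank

/-! ### Ranks of finite abelian groups and residue symbols -/

namespace ClRank
set_option linter.unusedSectionVars false
set_option linter.unusedVariables false

open scoped nonZeroDivisors Pointwise
open IsDedekindDomain HeightOneSpectrum

/-- If the subgroup `B` contains the `p`-torsion and is itself killed by `p`, then the supremum
defining the `p`-rank is the dimension of `B` over `ZMod p`. -/
lemma nRank_aux (p : ℕ) [Fact p.Prime] (A : Type*) [AddCommGroup A] [Finite A] (B : AddSubgroup A)
    [Module (ZMod p) B] (hB : ∀ x : A, p • x = 0 → x ∈ B) :
    p ^ sSup {r : ℕ | ∃ φ : (Fin r → ZMod p) →+ A, Function.Injective φ} = Nat.card B := by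
  have : Module.Finite (ZMod p) B := Module.Finite.of_finite
  have hcard := Module.natCard_eq_pow_finrank (K := ZMod p) (V := B)
  rw [Nat.card_zmod] at hcard
  rw [hcard]
  congr 1
  refine IsGreatest.csSup_eq ⟨?_, ?_⟩
  · let e := (Module.finBasis (ZMod p) B).equivFun.symm
    refine ⟨AddMonoidHom.comp B.subtype e.toAddEquiv.toAddMonoidHom, ?_⟩
    intro x y h
    exact e.injective (Subtype.ext h)
  · rintro r ⟨φ, hφ⟩
    let ψ : (Fin r → ZMod p) →+ B := φ.codRestrict B fun x => hB _ (by
      have : p • x = 0 := by ext; simp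
      rw [← map_nsmul, this, map_zero])
    have hψ : Function.Injective ψ := fun x y h => hφ (congrArg Subtype.val h)
    have := LinearMap.finrank_le_finrank_of_injective (f := ψ.toZModLinearMap p) hψ
    simpa using this

lemma card_ker_pow (G : Type*) [CommGroup G] [Finite G] (p : ℕ) :
    (powMonoidHom p : G →* G).range.index = Nat.card (powMonoidHom p : G →* G).ker := by
  have h1 := Subgroup.card_mul_index (powMonoidHom p : G →* G).range
  have h2 := Subgroup.card_mul_index (powMonoidHom p : G →* G).ker
  rw [Subgroup.index_ker] at h2
  rw [mul_comm, ← h1] at h2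
  exact (Nat.eq_of_mul_eq_mul_left Nat.card_pos h2).symm

/-- The `p`-rank of a finite abelian group `G` is the dimension of `G/G^p`. -/
lemma pow_nRank (p : ℕ) (hp : p.Prime) (G : Type*) [CommGroup G] [Finite G] :
    p ^ nRank p G = (powMonoidHom p : G →* G).range.index := by
  have : Fact p.Prime := ⟨hp⟩
  rw [card_ker_pow]
  have hV : ∀ x : (nsmulAddMonoidHom p : Additive G →+ Additive G).ker, p • x = 0 := fun x =>
    Subtype.ext x.2
  let : Module (ZMod p) (nsmulAddMonoidHom p : Additive G →+ Additive G).ker :=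
    AddCommGroup.zmodModule hV
  exact nRank_aux p (Additive G) (nsmulAddMonoidHom p : Additive G →+ Additive G).ker (fun x hx => hx)

/-- A proper inclusion of subgroups containing all `p`-th powers has index at least `p`. -/
lemma index_mul_le (p : ℕ) (hp : p.Prime) (G : Type*) [CommGroup G] [Finite G] (H H' : Subgroup G)
    (hpow : ∀ x : G, x ^ p ∈ H) (hlt : H < H') : H'.index * p ≤ H.index := by
  rw [← Subgroup.relIndex_mul_index hlt.le, mul_comm]
  refine Nat.mul_le_mul_right _ ?_
  obtain ⟨x, hx, hx'⟩ := SetLike.exists_of_lt hlt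
  let y : H' ⧸ H.subgroupOf H' := QuotientGroup.mk (⟨x, hx⟩ : H')
  have hord : orderOf y = p := by
    have h1 : y ^ p = 1 := by
      change (QuotientGroup.mk ((⟨x, hx⟩ : H') ^ p) : H' ⧸ H.subgroupOf H') = 1
      rw [QuotientGroup.eq_one_iff, Subgroup.mem_subgroupOf]
      exact hpow x
    have := orderOf_dvd_of_pow_eq_one h1
    rcases (Nat.dvd_prime hp).1 this with h | h
    · rw [orderOf_eq_one_iff, QuotientGroup.eq_one_iff, Subgroup.mem_subgroupOf] at h
      exact absurd h hx'
    · exact h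
  have : orderOf y ∣ H.relIndex H' := orderOf_dvd_natCard y
  rw [hord] at this
  exact Nat.le_of_dvd (Nat.pos_of_ne_zero (by
    have := (H.subgroupOf H').index_ne_zero_of_finite
    exact this)) this

/-- A subgroup of small index containing all `p`-th powers is completed to the whole group by few
members of a generating family. -/
lemma exists_few (p : ℕ) (hp : p.Prime) (G : Type*) [CommGroup G] [Finite G] {ι : Type*} (c : ι → G)
    (hc : Subgroup.closure (Set.range c) = ⊤) (k : ℕ) : ∀ (H : Subgroup G)
    (hpow : ∀ x : G, x ^ p ∈ H) (hk : H.index < p ^ (k + 1)), ∃ S : Fin k → Option ι,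
      ∀ H' : Subgroup G, H ≤ H' → (∀ j i, S j = some i → c i ∈ H') → H' = ⊤ := by
  induction k with
  | zero =>
    intro H hpow hk
    refine ⟨fun _ => none, fun H' h _ => ?_⟩
    by_contra hne
    have h1 := index_mul_le p hp G H ⊤ hpow (lt_of_le_of_lt h (lt_top_iff_ne_top.2 hne))
    simp at h1 hk
    omega
  | succ k ih =>
    intro H hpow hk
    by_cases hH : H = ⊤
    · exact ⟨fun _ => none, fun H' h _ => top_le_iff.1 (hH ▸ h)⟩
    obtain ⟨i, hi⟩ : ∃ i, c i ∉ H := by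
      by_contra hcon
      push Not at hcon
      refine hH (top_le_iff.1 ?_)
      rw [← hc, Subgroup.closure_le]
      rintro _ ⟨i, rfl⟩; exact hcon i
    have hlt : H < H ⊔ Subgroup.zpowers (c i) := by
      refine lt_of_le_of_ne le_sup_left fun h => hi ?_
      rw [h]
      exact Subgroup.mem_sup_right (Subgroup.mem_zpowers _)
    have h1 := index_mul_le p hp G H _ hpow hlt
    obtain ⟨S, hS⟩ := ih (H ⊔ Subgroup.zpowers (c i)) (fun x => Subgroup.mem_sup_left (hpow x)) (by
      rw [pow_succ] at hk
      exact lt_of_mul_lt_mul_right (lt_of_le_of_lt h1 hk) (Nat.zero_le _))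
    refine ⟨Fin.cons (some i) S, fun H' h h' => hS H' (sup_le h ?_) fun j i' hj => ?_⟩
    · rw [Subgroup.zpowers_le]
      exact h' 0 i rfl
    · exact h' j.succ i' (by simpa using hj)

/-- The residue symbol: away from `p`, the quotient of the group of elements satisfying `Un` by that of
elements satisfying `Sp` has at most `p` elements. -/
lemma exists_symbol {F : Type*} [Field F] [NumberField F] {p : ℕ} (hp : p.Prime) {z : F}
    (w : HeightOneSpectrum (𝓞 F)) (hw : w.valuation F (z - 1) = 1) :
    ∃ c : F → Fin p, ∀ α β, Un p w α → Un p w β → c α = c β → Sp p z w (α * β⁻¹) := by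
  classical
  let κ := 𝓞 F ⧸ w.asIdeal
  have := w.isMaximal
  let : Field κ := Ideal.Quotient.field _
  have : Finite κ := Ideal.finiteQuotientOfFreeOfNeBot _ w.ne_bot
  let T := κˣ ⧸ (powMonoidHom p : κˣ →* κˣ).range
  have hT : Nat.card T ≤ p := by
    have : NeZero p := ⟨hp.ne_zero⟩
    have h4 : Nat.card T = Nat.card (powMonoidHom p : κˣ →* κˣ).ker := card_ker_pow _ _
    rw [h4]
    have h5 := card_rootsOfUnity κ p
    have h6 : (powMonoidHom p : κˣ →* κˣ).ker = rootsOfUnity p κ := by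
      ext x; rw [MonoidHom.mem_ker, mem_rootsOfUnity]; rfl
    rwa [h6]
  obtain ⟨e⟩ : Nonempty (T ↪ Fin p) := by
    have : Finite T := inferInstance
    have := Fintype.ofFinite T
    refine Function.Embedding.nonempty_of_card_le ?_
    rwa [Fintype.card_fin, ← Nat.card_eq_fintype_card]
  have hdata : ∀ α : F, Un p w α → ∃ (u : κˣ) (a : 𝓞 F) (δ : F), Ideal.Quotient.mk w.asIdeal a = (u : κ) ∧
      w.valuation F (α * δ ^ p) = 1 ∧ w.valuation F (algebraMap (𝓞 F) F a - α * δ ^ p) < 1 := by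
    rintro α ⟨δ, hδ⟩
    obtain ⟨a, ha⟩ := w.exists_valuation_sub_lt_of_integer hδ.le 1
    rw [Units.val_one] at ha
    have ha' : w.valuation F (algebraMap (𝓞 F) F a) = 1 := by
      rw [← hδ]; exact Valuation.map_eq_of_sub_lt _ (by rwa [hδ])
    rw [valuation_eq_one_iff_notMem] at ha'
    have : Ideal.Quotient.mk w.asIdeal a ≠ 0 := by rwa [Ne, Ideal.Quotient.eq_zero_iff_mem]
    exact ⟨Units.mk0 _ this, a, δ, rfl, hδ, ha⟩
  choose! u a δ hu hδ ha using hdata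
  refine ⟨fun α => e (QuotientGroup.mk (u α)), ?_⟩
  intro α β hα hβ h
  have h := e.injective h
  rw [QuotientGroup.eq] at h
  obtain ⟨t, ht⟩ := h
  rw [powMonoidHom_apply] at ht
  obtain ⟨b, hb⟩ := Ideal.Quotient.mk_surjective (I := w.asIdeal) (t : κ)
  have hbv : w.valuation F (algebraMap (𝓞 F) F b) = 1 := by
    rw [valuation_eq_one_iff_notMem]
    intro hm
    rw [Ideal.Quotient.eq_zero_iff_mem.2 hm] at hb
    exact t.ne_zero hb.symm
  have h1 : a β - a α * b ^ p ∈ w.asIdeal := by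
    rw [← Ideal.Quotient.eq, map_mul, map_pow, hu α hα, hu β hβ, hb, ← Units.val_pow_eq_pow_val, ht,
      ← Units.val_mul, mul_inv_cancel_left]
  have h2 := (w.valuation_lt_one_iff_mem (K := F) _).2 h1
  set v := w.valuation F
  set A := algebraMap (𝓞 F) F (a α)
  set B := algebraMap (𝓞 F) F (b)
  set C := algebraMap (𝓞 F) F (a β)
  have h3 : v (C - A * B ^ p) < 1 := by simpa [A, B, C] using h2
  have hAp := ha α hα
  have hCp := ha β hβ
  have e1 := hδ α hα
  have e2 := hδ β hβ
  have hBp : v (B ^ p) = 1 := by rw [map_pow, hbv, one_pow]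
  have h4 : v (α * δ α ^ p * B ^ p - β * δ β ^ p) < 1 := by
    have : α * δ α ^ p * B ^ p - β * δ β ^ p = ((C - β * δ β ^ p) - (A - α * δ α ^ p) * B ^ p)
      - (C - A * B ^ p) := by ring
    rw [this]
    refine Valuation.map_sub_lt _ (Valuation.map_sub_lt _ hCp ?_) h3
    rw [map_mul, hBp, mul_one]; exact hAp
  have hβ0 : β * δ β ^ p ≠ 0 := by
    intro h0; rw [h0, map_zero] at e2; exact zero_ne_one e2
  refine ⟨δ α * B / δ β, ?_⟩
  rw [hw, one_pow]
  have hβ1 := left_ne_zero_of_mul hβ0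
  have hβ2 := right_ne_zero_of_mul hβ0
  have : α * β⁻¹ * (δ α * B / δ β) ^ p - 1 = (α * δ α ^ p * B ^ p - β * δ β ^ p) / (β * δ β ^ p) := by
    rw [div_pow, mul_pow]; field_simp
  rw [this, map_div₀, e2, div_one]
  exact h4

end ClRank

/-! ### Class rank from Kummer generators -/

namespace ClRank
set_option linter.unusedSectionVars false
set_option linter.unusedVariables false

open scoped nonZeroDivisors Pointwise
open IsDedekindDomain HeightOneSpectrum

/-- The class of a prime ideal. -/
noncomputable def primeCl {F : Type*} [Field F] [NumberField F] (w : HeightOneSpectrum (𝓞 F)) :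
    ClassGroup (𝓞 F) :=
  ClassGroup.mk0 ⟨w.asIdeal, mem_nonZeroDivisors_of_ne_zero w.ne_bot⟩

/-- The class of an ideal lies in any subgroup containing the classes of its prime divisors. -/
lemma mk0_mem {F : Type*} [Field F] [NumberField F] (H : Subgroup (ClassGroup (𝓞 F)))
    (I : Ideal (𝓞 F)) : ∀ (hI : I ∈ (Ideal (𝓞 F))⁰)
    (h : ∀ w : HeightOneSpectrum (𝓞 F), I ≤ w.asIdeal → primeCl w ∈ H),
    ClassGroup.mk0 ⟨I, hI⟩ ∈ H := by
  induction I using UniqueFactorizationMonoid.induction_on_prime with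
  | h₁ => intro hI; simp at hI
  | h₂ x hx =>
    intro hI h
    have : (⟨x, hI⟩ : (Ideal (𝓞 F))⁰) = 1 := by
      apply Subtype.ext; simpa using hx
    rw [this, map_one]; exact H.one_mem
  | h₃ a q ha hq ih =>
    intro hI h
    have hq0 : q ∈ (Ideal (𝓞 F))⁰ := mem_nonZeroDivisors_of_ne_zero hq.ne_zero
    have ha0 : a ∈ (Ideal (𝓞 F))⁰ := mem_nonZeroDivisors_of_ne_zero ha
    have : (⟨q * a, hI⟩ : (Ideal (𝓞 F))⁰) = ⟨q, hq0⟩ * ⟨a, ha0⟩ := rfl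
    rw [this, map_mul]
    refine H.mul_mem ?_ (ih ha0 fun w hw => h w (Ideal.mul_le_right.trans hw))
    exact h ⟨q, Ideal.isPrime_of_prime hq, hq.ne_zero⟩ Ideal.mul_le_left

lemma closure_primeCl (F : Type*) [Field F] [NumberField F] :
    Subgroup.closure (Set.range (primeCl : HeightOneSpectrum (𝓞 F) → _)) = ⊤ := by
  rw [eq_top_iff]
  intro c _
  obtain ⟨I, rfl⟩ := ClassGroup.mk0_surjective c
  exact mk0_mem _ I.1 I.2 fun w _ => Subgroup.subset_closure ⟨w, rfl⟩

section
variable {L M : Type*} [Field L] [Field M] [NumberField L] [NumberField M] [Algebra L M]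

/-- A completely split prime is a norm. -/
lemma split_norm [IsGalois L M] (g : ClassGroup (𝓞 M) →* ClassGroup (𝓞 L))
    (hg : ∀ (I : (Ideal (𝓞 M))⁰) (J : (Ideal (𝓞 L))⁰),
        (J : Ideal (𝓞 L)) = Ideal.relNorm (𝓞 L) (I : Ideal (𝓞 M)) →
        g (ClassGroup.mk0 I) = ClassGroup.mk0 J) (w : HeightOneSpectrum (𝓞 L))
    (h : ∀ P : HeightOneSpectrum (𝓞 M), P.asIdeal.LiesOver w.asIdeal → ∀ σ : M ≃ₐ[L] M,
      σ • P.asIdeal = P.asIdeal → σ = 1) : primeCl w ∈ g.range := by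
  obtain ⟨Q, hQ, hQw⟩ := Ideal.exists_maximal_ideal_liesOver_of_isIntegral (S := 𝓞 M) w.asIdeal
  have hQ0 : Q ≠ ⊥ := Ideal.ne_bot_of_liesOver_of_ne_bot w.ne_bot Q
  let P : HeightOneSpectrum (𝓞 M) := ⟨Q, hQ.isPrime, hQ0⟩
  have hP : P.asIdeal.LiesOver w.asIdeal := hQw
  have hst : Nat.card (MulAction.stabilizer (M ≃ₐ[L] M) P.asIdeal) = 1 := by
    rw [Nat.card_eq_one_iff_unique]
    refine ⟨⟨fun a b => ?_⟩, ⟨1⟩⟩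
    exact Subtype.ext ((h P hP a.1 a.2).trans (h P hP b.1 b.2).symm)
  have := w.isMaximal
  rw [Ideal.card_stabilizer_eq_card_inertia_mul_finrank w.asIdeal P.asIdeal] at hst
  have hf := Nat.eq_one_of_mul_eq_one_left hst
  have hn := Ideal.relNorm_eq_pow_of_isMaximal P.asIdeal w.asIdeal
  rw [hf, pow_one] at hn
  exact ⟨primeCl P, hg _ _ hn.symm⟩

/-- The norm of a class extended from the base is its `[M : L]`-th power. -/
lemma pow_norm (g : ClassGroup (𝓞 M) →* ClassGroup (𝓞 L))
    (hg : ∀ (I : (Ideal (𝓞 M))⁰) (J : (Ideal (𝓞 L))⁰),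
        (J : Ideal (𝓞 L)) = Ideal.relNorm (𝓞 L) (I : Ideal (𝓞 M)) →
        g (ClassGroup.mk0 I) = ClassGroup.mk0 J) (c : ClassGroup (𝓞 L)) :
    g (ClassGroup.extendedHom (𝓞 L) (𝓞 M) c) = c ^ Module.finrank L M := by
  obtain ⟨I, rfl⟩ := ClassGroup.mk0_surjective c
  rw [ClassGroup.extendedHom_mk0, hg _ (I ^ Module.finrank L M), map_pow]
  change (I : Ideal (𝓞 L)) ^ Module.finrank L M =
    Ideal.relNorm (𝓞 L) ((I : Ideal (𝓞 L)).map (algebraMap (𝓞 L) (𝓞 M)))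
  rw [Ideal.relNorm_algebraMap, ← IsFractionRing.finrank_eq (𝓞 L) L (𝓞 M) M]
end

section
variable {K L : Type*} [Field K] [Field L] [NumberField K] [NumberField L] [Algebra K L]

/-- If `p` is prime to `[L : K]`, the norm makes `Cl(K) / p` a direct factor of `Cl(L) / p`, so the
`p`-rank of the cokernel of `Cl(K) → Cl(L)` is the difference of the two `p`-ranks. -/
lemma index_sup (p : ℕ) (hp : p.Prime) (hd : ¬ p ∣ Module.finrank K L) :
    p ^ nRank p (ClassGroup (𝓞 K)) * ((powMonoidHom p : ClassGroup (𝓞 L) →* ClassGroup (𝓞 L)).range ⊔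
      (ClassGroup.extendedHom (𝓞 K) (𝓞 L)).range).index = p ^ nRank p (ClassGroup (𝓞 L)) := by
  obtain ⟨g, hg⟩ := exists_normCl K L
  rw [pow_nRank p hp, pow_nRank p hp, ← Subgroup.relIndex_mul_index (le_sup_left :
    (powMonoidHom p : ClassGroup (𝓞 L) →* ClassGroup (𝓞 L)).range ≤ _ ⊔
      (ClassGroup.extendedHom (𝓞 K) (𝓞 L)).range)]
  congr 1
  rw [sup_comm, Subgroup.relIndex_sup_right, ← Subgroup.index_comap]
  congr 1
  ext c
  rw [Subgroup.mem_comap]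
  constructor
  · rintro ⟨x, rfl⟩
    exact ⟨ClassGroup.extendedHom (𝓞 K) (𝓞 L) x, by simp⟩
  · rintro ⟨x, hx⟩
    have h1 : g x ^ p = c ^ Module.finrank K L := by
      rw [← pow_norm g hg, ← hx, powMonoidHom_apply, map_pow]
    have hco : IsCoprime (p : ℤ) (Module.finrank K L : ℤ) := by
      rw [Nat.isCoprime_iff_coprime]
      exact (hp.coprime_iff_not_dvd).2 hd
    obtain ⟨u, v, huv⟩ := hco
    refine ⟨c ^ u * g x ^ v, ?_⟩
    have h2 : (g x ^ v) ^ p = (g x ^ p) ^ v := by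
      rw [← zpow_natCast, ← zpow_natCast, ← zpow_mul, ← zpow_mul, mul_comm]
    rw [powMonoidHom_apply, mul_pow, h2, h1, ← zpow_natCast, ← zpow_mul, ← zpow_natCast, ← zpow_mul, ← zpow_add,
      mul_comm _ v, huv, zpow_one]

/-- The lower bound for the rank of the class group coming from three independent elements which are
locally `p`-th powers at a set `N` of places generating the classes of `K`, and with valuation
divisible by `p` elsewhere. -/
theorem rank_main (p : ℕ) (hp : p.Prime) (hp3 : 3 ≤ p) (z : L) (hz : IsPrimitiveRoot z p)
    (hd : ¬ p ∣ Module.finrank K L) (N : Set (HeightOneSpectrum (𝓞 L)))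
    (hN : ∀ w ∉ N, w.valuation L (z - 1) = 1)
    (hCl : ∀ c : ClassGroup (𝓞 K), ClassGroup.extendedHom (𝓞 K) (𝓞 L) c ∈
      Subgroup.closure (primeCl '' N))
    (α : Fin 3 → L) (hα0 : ∀ i, α i ≠ 0) (hSp : ∀ i, ∀ w ∈ N, Sp p z w (α i))
    (hUn : ∀ i, ∀ w ∉ N, Un p w (α i))
    (hind : ∀ e : Fin 3 → ℤ, (∃ β, ∏ i, α i ^ e i = β ^ p) → ∀ i, (p : ℤ) ∣ e i) :
    3 + nRank p (ClassGroup (𝓞 K)) ≤ nRank p (ClassGroup (𝓞 L)) := by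
  classical
  have hp0 := hp.ne_zero
  by_contra hcon
  have hz1 : z ≠ 1 := hz.ne_one hp.one_lt
  obtain ⟨H, hH⟩ : ∃ H, H = (powMonoidHom p : ClassGroup (𝓞 L) →* ClassGroup (𝓞 L)).range ⊔
    Subgroup.closure (primeCl '' N) := ⟨_, rfl⟩
  have hidx : H.index < p ^ 3 := by
    have h1 := index_sup (K := K) (L := L) p hp hd
    have h2 : H.index ≤ ((powMonoidHom p : ClassGroup (𝓞 L) →* ClassGroup (𝓞 L)).range ⊔
      (ClassGroup.extendedHom (𝓞 K) (𝓞 L)).range).index := by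
      refine Nat.le_of_dvd (Nat.pos_of_ne_zero (Subgroup.index_ne_zero_of_finite))
        (Subgroup.index_dvd_of_le ?_)
      rw [hH]
      refine sup_le_sup_left ?_ _
      rintro _ ⟨c, rfl⟩; exact hCl c
    refine lt_of_le_of_lt h2 ?_
    have h3 : p ^ nRank p (ClassGroup (𝓞 L)) < p ^ (nRank p (ClassGroup (𝓞 K)) + 3) :=
      Nat.pow_lt_pow_right hp.one_lt (by omega)
    rw [← h1, pow_add] at h3
    exact lt_of_mul_lt_mul_left h3 (Nat.zero_le _)
  obtain ⟨S, hS⟩ := exists_few p hp _ (primeCl : HeightOneSpectrum (𝓞 L) → _) (closure_primeCl L) 2 H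
    (fun x => by rw [hH]; exact Subgroup.mem_sup_left ⟨x, rfl⟩) hidx
  have hsymb : ∀ j, ∃ c : L → Fin p, ∀ α β, (∀ w, S j = some w → (w ∈ N → Sp p z w α ∧ Sp p z w β) ∧
      (w ∉ N → Un p w α ∧ Un p w β)) → c α = c β → ∀ w, S j = some w → Sp p z w (α * β⁻¹) := by
    intro j
    rcases hw : S j with _ | w
    · exact ⟨fun _ => ⟨0, hp.pos⟩, fun _ _ _ _ w h => by cases h⟩
    · by_cases hwN : w ∈ N
      · refine ⟨fun _ => ⟨0, hp.pos⟩, fun α β h _ w' hw' => ?_⟩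
        cases hw'
        have h' := (h w rfl).1 hwN
        exact h'.1.mul hp0 hz (h'.2.inv hp0 hz)
      · obtain ⟨c, hc⟩ := exists_symbol hp w (hN w hwN)
        refine ⟨c, fun α β h hcc w' hw' => ?_⟩
        cases hw'
        have h' := (h w rfl).2 hwN
        exact hc α β h'.1 h'.2 hcc
  choose c hc using hsymb
  -- There are `p ^ 3` products of powers of the `α i`, but only `p ^ 2` pairs of symbols at the two primes
  -- in `S`; the quotient `a` of two products with equal symbols is a local `p`-th power at these primes.
  have hnp : ∀ (w : HeightOneSpectrum (𝓞 L)) (hw : w ∈ N) (e : Fin 3 → Fin p),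
      Sp p z w (∏ i, α i ^ (e i : ℕ)) := by
    intro w hw e
    refine Finset.prod_induction _ _ (fun a b ha hb => ha.mul hp0 hz hb) (Sp.one hz1) fun i _ => ?_
    induction (e i : ℕ) with
    | zero => rw [pow_zero]; exact Sp.one hz1
    | succ n ih => rw [pow_succ]; exact ih.mul hp0 hz (hSp i w hw)
  have hup : ∀ (w : HeightOneSpectrum (𝓞 L)) (hw : w ∉ N) (e : Fin 3 → Fin p),
      Un p w (∏ i, α i ^ (e i : ℕ)) := by
    intro w hw e
    refine Finset.prod_induction _ _ (fun a b ha hb => ha.mul hb) Un.one fun i _ => ?_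
    induction (e i : ℕ) with
    | zero => rw [pow_zero]; exact Un.one
    | succ n ih => rw [pow_succ]; exact ih.mul (hUn i w hw)
  obtain ⟨e, e', hne, hee⟩ := Fintype.exists_ne_map_eq_of_card_lt
    (fun (e : Fin 3 → Fin p) (j : Fin 2) => c j (∏ i, α i ^ (e i : ℕ))) (by
      simp only [Fintype.card_pi, Fintype.card_fin, Finset.prod_const, Finset.card_univ]
      exact Nat.pow_lt_pow_right hp.one_lt (by norm_num))
  obtain ⟨a, ha⟩ : ∃ a, a = (∏ i, α i ^ (e i : ℕ)) * (∏ i, α i ^ (e' i : ℕ))⁻¹ := ⟨_, rfl⟩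
  have haN : ∀ w ∈ N, Sp p z w a := fun w hw => by
    rw [ha]; exact (hnp w hw e).mul hp0 hz ((hnp w hw e').inv hp0 hz)
  have haU : ∀ w ∉ N, Un p w a := fun w hw => by
    rw [ha]; exact (hup w hw e).mul (hup w hw e').inv
  have haS : ∀ j w, S j = some w → Sp p z w a := fun j w hj => by
    rw [ha]
    exact hc j _ _ (fun w _ => ⟨fun hw => ⟨hnp w hw _, hnp w hw _⟩, fun hw => ⟨hup w hw _, hup w hw _⟩⟩)
      (congrFun hee j) w hj
  have hpow : ∀ b : L, b ^ p ≠ a := by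
    intro b hb
    refine hne (funext fun i => ?_)
    have h1 := hind (fun i => (e i : ℤ) - (e' i : ℤ)) ⟨b, by
      rw [hb, ha, ← Finset.prod_inv_distrib, ← Finset.prod_mul_distrib]
      refine Finset.prod_congr rfl fun i _ => ?_
      rw [zpow_sub₀ (hα0 i), zpow_natCast, zpow_natCast, div_eq_mul_inv]⟩ i
    have h2 := Int.eq_zero_of_abs_lt_dvd h1 (by
      have := (e i).2
      have := (e' i).2
      rw [abs_lt]; constructor <;> omega)
    exact Fin.ext (by omega)
  -- `M = L(a^{1/p})` is everywhere unramified and splits completely at `N` and at the primes in `S`, so its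
  -- norm group is the whole class group.
  have hirr : Irreducible (Polynomial.X ^ p - Polynomial.C a) := X_pow_sub_C_irreducible_of_prime hp hpow
  have hprim : (primitiveRoots p L).Nonempty := ⟨z, (mem_primitiveRoots hp.pos).2 hz⟩
  let M := (Polynomial.X ^ p - Polynomial.C a).SplittingField
  have : NeZero p := ⟨hp0⟩
  have : IsGalois L M := isGalois_of_isSplittingField_X_pow_sub_C hprim hirr M
  have : NumberField M := NumberField.of_module_finite L M
  have hfM : Module.finrank L M = p := finrank_of_isSplittingField_X_pow_sub_C hprim hirr M
  obtain ⟨X, hX⟩ : ∃ X : M, X ^ p = algebraMap L M a := ⟨_, rootOfSplitsXPowSubC_pow a M⟩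
  have hfaith : ∀ σ : M ≃ₐ[L] M, σ X = X → σ = 1 := by
    intro σ hσ
    have htop := Algebra.adjoin_root_eq_top_of_isSplittingField hprim hirr hX
    ext x
    have hx : x ∈ Algebra.adjoin L {X} := by rw [htop]; trivial
    have : Algebra.adjoin L {X} ≤ AlgHom.equalizer (σ : M →ₐ[L] M) (AlgHom.id L M) := by
      refine Algebra.adjoin_le ?_
      rintro _ rfl
      exact hσ
    exact this hx
  obtain ⟨g, hg⟩ := exists_normCl L M
  have hsp : ∀ w, Sp p z w a → primeCl w ∈ g.range := fun w hw =>
    split_norm g hg w fun P hP σ hσ => stab_trivial w P hp hz hX hfaith hw σ hσ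
  refine norm_not_surj p hp hp3 z hz hfM ?_ g hg (hS g.range ?_ fun j w hj => hsp w (haS j w hj))
  · intro Q hQ hQ0
    let P : HeightOneSpectrum (𝓞 M) := ⟨Q, hQ, hQ0⟩
    let w : HeightOneSpectrum (𝓞 L) := ⟨Q.under (𝓞 L), inferInstance,
      Ideal.under_ne_bot (A := 𝓞 L) hQ0⟩
    have hPw : P.asIdeal.LiesOver w.asIdeal := ⟨rfl⟩
    by_cases hw : w ∈ N
    · rw [eq_bot_iff]
      intro σ hσ
      rw [Subgroup.mem_bot]
      exact stab_trivial w P hp hz hX hfaith (haN w hw) σ (Ideal.inertia_le_stabilizer Q hσ)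
    · exact inertia_trivial w P hp hz hX hfaith (haU w hw) (hN w hw)
  · rw [hH]
    refine sup_le ?_ ?_
    · rintro _ ⟨x, rfl⟩
      refine ⟨ClassGroup.extendedHom (𝓞 L) (𝓞 M) x, ?_⟩
      rw [pow_norm g hg, hfM]; rfl
    · rw [Subgroup.closure_le]
      rintro _ ⟨w, hw, rfl⟩
      exact hsp w (haN w hw)
end

end ClRank

/-! ### Approximation and descent -/

namespace ClRank
set_option linter.unusedSectionVars false
set_option linter.unusedVariables false

open scoped nonZeroDivisors Pointwise WithZero
open IsDedekindDomain HeightOneSpectrum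

/-- Chinese remainder theorem in terms of valuations. -/
lemma crt {F : Type*} [Field F] [NumberField F] (s : Set (HeightOneSpectrum (𝓞 F))) (hs : s.Finite)
    (x : HeightOneSpectrum (𝓞 F) → 𝓞 F) (γ : HeightOneSpectrum (𝓞 F) → ℤᵐ⁰) (hγ : ∀ r ∈ s, γ r ≠ 0) :
    ∃ y : 𝓞 F, ∀ r ∈ s, r.valuation F (algebraMap (𝓞 F) F (y - x r)) ≤ γ r := by
  classical
  have hex : ∀ r : HeightOneSpectrum (𝓞 F), ∃ e : ℕ, r ∈ s → WithZero.exp (-(e : ℤ)) ≤ γ r := by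
    intro r
    by_cases hr : r ∈ s
    · refine ⟨(-(WithZero.log (γ r))).toNat, fun _ => ?_⟩
      rw [← WithZero.exp_log (hγ r hr), WithZero.exp_le_exp]
      simp only [WithZero.log_exp]
      omega
    · exact ⟨0, fun h => absurd h hr⟩
  choose e he using hex
  obtain ⟨y, hy⟩ := IsDedekindDomain.exists_forall_sub_mem_ideal (s := hs.toFinset)
    (fun r : HeightOneSpectrum (𝓞 F) => r.asIdeal) e (fun r _ => r.prime)
    (fun i _ j _ hij h => hij (HeightOneSpectrum.ext h)) (fun r => x r)
  refine ⟨y, fun r hr => ?_⟩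
  rw [valuation_of_algebraMap]
  exact ((intValuation_le_pow_iff_mem r _ _).2 (hy r (hs.mem_toFinset.2 hr))).trans (he r hr)

lemma finite_dvd {F : Type*} [Field F] [NumberField F] (b : 𝓞 F) (hb : b ≠ 0) :
    {r : HeightOneSpectrum (𝓞 F) | b ∈ r.asIdeal}.Finite := by
  have := Ideal.finite_factors (I := Ideal.span {b}) (by simpa using hb)
  refine this.subset fun r hr => ?_
  rw [Set.mem_ofPred_eq, Ideal.dvd_span_singleton]
  exact hr

section
variable {L M : Type*} [Field L] [Field M] [NumberField L] [NumberField M] [Algebra L M]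
  (w : HeightOneSpectrum (𝓞 L)) (P : HeightOneSpectrum (𝓞 M)) [P.asIdeal.LiesOver w.asIdeal]

/-- At a completely split place, integral elements are approximated by elements of the base field. -/
lemma approx_int [IsGalois L M] (hst : ∀ σ : M ≃ₐ[L] M, σ • P.asIdeal = P.asIdeal → σ = 1) (x : 𝓞 M)
    (γ : ℤᵐ⁰) (hγ : γ ≠ 0) : ∃ b : L, P.valuation M (algebraMap L M b - x) ≤ γ := by
  classical
  let Q : (M ≃ₐ[L] M) → HeightOneSpectrum (𝓞 M) := fun σ => ⟨σ • P.asIdeal, inferInstance, by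
    have := (smul_ne_zero_iff_ne σ).2 P.ne_bot
    exact this⟩
  have hQinj : Function.Injective Q := by
    intro σ τ h
    have h1 : σ • P.asIdeal = τ • P.asIdeal := congrArg HeightOneSpectrum.asIdeal h
    have := hst (τ⁻¹ * σ) (by rw [mul_smul, h1, inv_smul_smul])
    rw [inv_mul_eq_one] at this
    exact this.symm
  obtain ⟨e, he⟩ := crt (F := M) (Set.range Q) (Set.finite_range Q) (fun r => if r = P then 1 else 0)
    (fun _ => γ) (fun _ _ => hγ)
  have hQ1 : Q 1 = P := HeightOneSpectrum.ext (one_smul _ _)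
  refine ⟨Algebra.trace L M (e * x), ?_⟩
  rw [trace_eq_sum_automorphisms]
  have hle : ∀ y : 𝓞 M, P.valuation M y ≤ 1 := fun y => P.valuation_le_one y
  have e1 : ∑ σ : M ≃ₐ[L] M, σ (e * x : M) - x = ∑ σ : M ≃ₐ[L] M, (σ (e * x : M) - if σ = 1 then (x : M) else 0) := by
    rw [Finset.sum_sub_distrib]; simp
  rw [e1]
  refine Valuation.map_sum_le _ fun σ _ => ?_
  by_cases hσ : σ = 1
  · subst hσ
    rw [if_pos rfl]
    have h1 := he P ⟨1, hQ1⟩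
    rw [if_pos rfl] at h1
    have : (1 : M ≃ₐ[L] M) (e * x : M) - x = algebraMap (𝓞 M) M (e - 1) * algebraMap (𝓞 M) M x := by
      rw [map_sub, map_one]; simp [sub_mul]
    rw [this, map_mul]
    exact mul_le_of_le_of_le_one h1 (hle x)
  · rw [if_neg hσ, sub_zero, map_mul, map_mul]
    have h1 := he (Q σ⁻¹) ⟨_, rfl⟩
    have hne : Q σ⁻¹ ≠ P := by
      rw [← hQ1]; intro h; exact hσ (inv_eq_one.1 (hQinj h))
    rw [if_neg hne, sub_zero] at h1
    refine mul_le_of_le_of_le_one ?_ (hle (σ • x))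
    refine le_of_eq_of_le (val_smul σ (Q σ⁻¹) P ?_ _) h1
    change σ • (σ⁻¹ • P.asIdeal) = _
    rw [smul_inv_smul]

lemma approx [IsGalois L M] (hst : ∀ σ : M ≃ₐ[L] M, σ • P.asIdeal = P.asIdeal → σ = 1) (x : M)
    (γ : ℤᵐ⁰) (hγ : γ ≠ 0) : ∃ b : L, P.valuation M (algebraMap L M b - x) ≤ γ := by
  obtain ⟨m, hm, hmx⟩ := IsAlgebraic.exists_integral_multiple ((IsFractionRing.isAlgebraic_iff ℤ ℚ M).2 (Algebra.IsAlgebraic.isAlgebraic x))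
  have hmM : algebraMap ℤ M m ≠ 0 := by simpa using hm
  obtain ⟨b, hb⟩ := approx_int P hst ⟨m • x, hmx⟩ (γ * P.valuation M (algebraMap ℤ M m))
    (mul_ne_zero hγ (by simpa using hm))
  refine ⟨b / algebraMap ℤ L m, ?_⟩
  have h1 : algebraMap L M (b / algebraMap ℤ L m) - x = (algebraMap L M b - m • x) / algebraMap ℤ M m := by
    rw [map_div₀, ← IsScalarTower.algebraMap_apply ℤ L M, sub_div, Algebra.smul_def, mul_div_cancel_left₀ _ hmM]
  rw [h1, map_div₀]
  exact div_le_of_le_mul₀ (zero_le) (zero_le) hb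

/-- At a completely split place, being a local `p`-th power descends. -/
lemma Sp.descent [IsGalois L M] (hst : ∀ σ : M ≃ₐ[L] M, σ • P.asIdeal = P.asIdeal → σ = 1) {p : ℕ}
    (hp : p ≠ 0) {z : L} (hz : IsPrimitiveRoot z p) (hz1 : z ≠ 1) {α : L} (h : Sp p (algebraMap L M z) P (algebraMap L M α)) : Sp p z w α := by
  have hzM := hz.map_of_injective (algebraMap L M).injective
  obtain ⟨δ, hδ⟩ := h
  have hv := Sp.val hp hzM hδ
  have hδ0 : δ ≠ 0 := by
    rintro rfl; rw [zero_pow hp, mul_zero, map_zero] at hv; exact zero_ne_one hv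
  have hpi : P.valuation M (algebraMap L M z - 1) ≠ 0 := by
    rw [Valuation.ne_zero_iff, sub_ne_zero, Ne, ← map_one (algebraMap L M)]
    exact fun h => hz1 ((algebraMap L M).injective h)
  obtain ⟨u, hu⟩ := P.valuation_exists_uniformizer M
  have hu1 : P.valuation M u < 1 := by rw [hu, ← WithZero.exp_zero, WithZero.exp_lt_exp]; norm_num
  have hu0 : P.valuation M u ≠ 0 := by rw [hu]; exact WithZero.exp_ne_zero
  set c := P.valuation M (algebraMap L M z - 1) with hc
  obtain ⟨b, hb⟩ := approx P hst δ (P.valuation M δ * (P.valuation M u * c ^ p))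
    (mul_ne_zero (by simpa using hδ0) (mul_ne_zero hu0 (pow_ne_zero _ hpi)))
  obtain ⟨s, hs⟩ : ∃ s, s = algebraMap L M b / δ - 1 := ⟨_, rfl⟩
  have hbs : algebraMap L M b = δ * (1 + s) := by rw [hs]; field_simp; ring
  have hsv : P.valuation M s < c ^ p := by
    have h1 : P.valuation M s = P.valuation M (algebraMap L M b - δ) / P.valuation M δ := by
      rw [hs, ← map_div₀, sub_div, div_self hδ0]
    rw [h1]
    refine lt_of_le_of_lt (div_le_of_le_mul₀ zero_le zero_le (hb.trans (le_of_eq (mul_comm _ _)))) ?_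
    exact mul_lt_of_lt_one_left (pow_pos (zero_lt_iff.2 hpi) p) hu1
  have hc1 : c ≤ 1 := z_val hp hzM P
  have hs1 : P.valuation M (1 + s) = 1 := Valuation.map_one_add_of_lt _ (hsv.trans_le (pow_le_one' hc1 p))
  refine ⟨b, ?_⟩
  rw [← map_pow, ← val_lt_iff w P, (algebraMap L M).map_pow, (algebraMap L M).map_sub, (algebraMap L M).map_sub,
    (algebraMap L M).map_mul, (algebraMap L M).map_one, (algebraMap L M).map_pow, hbs, map_pow, ← hc]
  have h2 : algebraMap L M α * (δ * (1 + s)) ^ p - 1 = (algebraMap L M α * δ ^ p - 1) * (1 + s) ^ p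
    + ((1 + s) ^ p - 1) := by rw [mul_pow]; ring
  rw [h2]
  refine Valuation.map_add_lt _ ?_ ?_
  · rwa [map_mul, map_pow, hs1, one_pow, mul_one]
  · have h3 : (1 + s) ^ p - 1 = (∑ i ∈ Finset.range p, (1 + s) ^ i) * s := by
      have := geom_sum_mul (1 + s) p
      rw [← this]; ring
    rw [h3, map_mul]
    refine lt_of_le_of_lt (mul_le_of_le_one_left' ?_) hsv
    refine Valuation.map_sum_le _ fun i _ => ?_
    rw [map_pow, hs1, one_pow]

/-- At an unramified place, divisibility of the valuation by `p` descends. -/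
lemma Un.descent [IsGalois L M] (hst : P.asIdeal.inertia (M ≃ₐ[L] M) = ⊥) {p : ℕ} (hp : p ≠ 0)
    {α : L} (h : Un p P (algebraMap L M α)) : Un p w α := by
  obtain ⟨δ, hδ⟩ := h
  have hr := ram_one P.asIdeal P.ne_bot hst
  have hv : ∀ x : L, P.valuation M (algebraMap L M x) = w.valuation L x := fun x => by
    rw [← valuation_liesOver M w P x, Ideal.ramificationIdx'_eq_ramificationIdx _ _ w.ne_bot, hr, pow_one]
  have hδ0 : P.valuation M δ ≠ 0 := by
    intro h0; rw [map_mul, map_pow, h0, zero_pow hp, mul_zero] at hδ; exact zero_ne_one hδ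
  obtain ⟨u, hu⟩ := w.valuation_exists_uniformizer L
  refine ⟨u ^ (-(WithZero.log (P.valuation M δ))), ?_⟩
  rw [map_mul, map_pow, hv] at hδ
  rw [map_mul, map_pow, map_zpow₀, hu, ← WithZero.exp_zsmul, smul_neg, smul_eq_mul, mul_one, neg_neg,
    WithZero.exp_log hδ0, hδ]
end

end ClRank

/-! ### Tame places -/

namespace ClRank
set_option linter.unusedSectionVars false
set_option linter.unusedVariables false

open scoped nonZeroDivisors Pointwise WithZero
open IsDedekindDomain HeightOneSpectrum

/-- If `1 - t ^ p` were always a `p`-th power, then the `p`-th powers would form a proper subfield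
with more than `√q` elements. -/
lemma exists_one_sub_pow {F : Type*} [Field F] [Finite F] {p : ℕ} (hp : p ≠ 0) (hodd : Odd p)
    (hbig : p ^ 2 < Nat.card F) (hz : ∃ z : F, z ≠ 1 ∧ z ^ p = 1) :
    ∃ t : F, t ≠ 0 ∧ ∀ x : F, 1 - t ^ p ≠ x ^ p := by
  classical
  have := Fintype.ofFinite F
  by_contra! hcon
  have hsub1 : ∀ t : F, ∃ x : F, 1 - t ^ p = x ^ p := by
    intro t
    by_cases ht : t = 0
    · exact ⟨1, by simp [ht, hp]⟩
    · exact hcon t ht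
  have hsub : ∀ a b : F, ∃ c : F, a ^ p - b ^ p = c ^ p := by
    intro a b
    by_cases ha : a = 0
    · exact ⟨-b, by rw [ha, zero_pow hp, hodd.neg_pow]; ring⟩
    · obtain ⟨x, hx⟩ := hsub1 (b / a)
      refine ⟨a * x, ?_⟩
      rw [mul_pow, ← hx, div_pow]
      field_simp
  obtain ⟨z, hz1, hzp⟩ := hz
  have hθ : ∃ θ : F, ∀ x : F, x ^ p ≠ θ := by
    by_contra! h
    have hinj := (Finite.injective_iff_surjective (f := fun x : F => x ^ p)).2 h
    exact hz1 (hinj (by simp [hzp]))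
  obtain ⟨θ, hθ⟩ := hθ
  let S : Finset F := Finset.univ.image fun x : F => x ^ p
  have hS : ∀ a, a ∈ S ↔ ∃ x, x ^ p = a := by intro a; simp [S]
  have h1 : Fintype.card F ≤ p * S.card := by
    refine Finset.card_le_mul_card_image Finset.univ p fun b _ => ?_
    refine le_trans ?_ (Polynomial.card_nthRoots p b)
    refine le_trans (Finset.card_le_card (t := (Polynomial.nthRoots p b).toFinset) ?_) (Multiset.toFinset_card_le _)
    intro x hx
    rw [Multiset.mem_toFinset, Polynomial.mem_nthRoots (Nat.pos_of_ne_zero hp)]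
    exact (Finset.mem_filter.1 hx).2
  have h2 : S.card * S.card ≤ Fintype.card F := by
    rw [← Finset.card_product]
    refine Finset.card_le_card_of_injOn (fun x => x.1 + x.2 * θ) (fun _ _ => Finset.mem_univ _) ?_
    rintro ⟨a, b⟩ hab ⟨c, d⟩ hcd h
    obtain ⟨ha, hb⟩ := Finset.mem_product.1 hab
    obtain ⟨hc, hd⟩ := Finset.mem_product.1 hcd
    obtain ⟨a, rfl⟩ := (hS _).1 ha
    obtain ⟨b, rfl⟩ := (hS _).1 hb
    obtain ⟨c, rfl⟩ := (hS _).1 hc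
    obtain ⟨d, rfl⟩ := (hS _).1 hd
    simp only at h
    obtain ⟨x, hx⟩ := hsub a c
    obtain ⟨y, hy⟩ := hsub d b
    by_cases hy0 : y = 0
    · rw [hy0, zero_pow hp, sub_eq_zero] at hy
      rw [hy, add_left_inj] at h
      rw [hy, h]
    · refine absurd ?_ (hθ (x / y))
      rw [div_pow, div_eq_iff (pow_ne_zero _ hy0), ← hx, ← hy]
      linear_combination h
  rw [Nat.card_eq_fintype_card] at hbig
  nlinarith [Nat.mul_le_mul h1 h1, Nat.mul_le_mul_left (p ^ 2) h2]

/-- The `p`-th power classes of nonzero elements of a finite field form a cyclic group of order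
dividing `p`. -/
lemma pow_class {F : Type*} [Field F] [Finite F] {p : ℕ} [Fact p.Prime] {a b : F} (ha : a ≠ 0) (hb : b ≠ 0)
    (h : ∀ x, b ≠ x ^ p) : ∃ (k : ℕ) (c : F), a * b ^ k * c ^ p = 1 := by
  obtain ⟨A, rfl⟩ := (isUnit_iff_ne_zero.2 ha)
  obtain ⟨B, rfl⟩ := (isUnit_iff_ne_zero.2 hb)
  let H := (powMonoidHom p : Fˣ →* Fˣ).range
  have hB : (B : Fˣ ⧸ H) ≠ 1 := by
    rw [Ne, QuotientGroup.eq_one_iff]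
    rintro ⟨x, hx⟩
    exact h x (by rw [← hx]; simp)
  have hdvd : H.index ∣ p := by
    rw [IsCyclic.index_powMonoidHom_range]; exact Nat.gcd_dvd_right _ _
  have hcard : Nat.card (Fˣ ⧸ H) = p := by
    rcases (Nat.dvd_prime Fact.out).1 hdvd with h1 | h1
    · rw [Subgroup.index_eq_one] at h1
      exact absurd ((QuotientGroup.eq_one_iff _).2 (h1 ▸ Subgroup.mem_top B)) hB
    · exact h1
  obtain ⟨k, hk⟩ := mem_powers_of_prime_card hcard hB (g' := ((A⁻¹ : Fˣ) : Fˣ ⧸ H))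
  have h2 : ((A * B ^ k : Fˣ) : Fˣ ⧸ H) = 1 := by
    rw [QuotientGroup.mk_mul, QuotientGroup.mk_pow]
    simp only at hk
    rw [hk, ← QuotientGroup.mk_mul, mul_inv_cancel, QuotientGroup.mk_one]
  rw [QuotientGroup.eq_one_iff] at h2
  obtain ⟨c, hc⟩ := h2
  refine ⟨k, (c⁻¹ : Fˣ), ?_⟩
  rw [powMonoidHom_apply] at hc
  rw [← Units.val_pow_eq_pow_val, ← Units.val_mul, ← hc]
  simp

section
variable {F : Type*} [Field F] [NumberField F]

lemma exists_int (w : HeightOneSpectrum (𝓞 F)) {x : F} (hx : w.valuation F x ≤ 1) :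
    ∃ a : 𝓞 F, w.valuation F (algebraMap (𝓞 F) F a - x) < 1 := by
  simpa using w.exists_valuation_sub_lt_of_integer hx 1

lemma val_eq_of_close (w : HeightOneSpectrum (𝓞 F)) {x y : F} (h : w.valuation F (x - y) < 1)
    (hy : w.valuation F y = 1) : w.valuation F x = 1 := by
  have : x = (x - y) + y := by ring
  rw [this, add_comm, Valuation.map_add_eq_of_lt_left _ (h.trans_eq hy.symm), hy]

/-- At a tame place, being a local `p`-th power depends on the residue class only. -/
lemma Sp_int_iff {p : ℕ} (hp : p ≠ 0) {z : F} (w : HeightOneSpectrum (𝓞 F))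
    (hw : w.valuation F (z - 1) = 1) (e : 𝓞 F) (he : w.valuation F e = 1) :
    Sp p z w e ↔ ∃ b : 𝓞 F, e * b ^ p - 1 ∈ w.asIdeal := by
  unfold Sp
  simp only [hw, one_pow]
  constructor
  · rintro ⟨δ, hδ⟩
    have h1 := val_eq_of_close w hδ (map_one _)
    rw [map_mul, map_pow, he, one_mul, pow_eq_one_iff_of_nonneg zero_le hp] at h1
    obtain ⟨b, hb⟩ := exists_int w h1.le
    refine ⟨b, ?_⟩
    rw [← valuation_lt_one_iff_mem (K := F)]
    have hb1 := val_eq_of_close w hb h1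
    have e1 : algebraMap (𝓞 F) F (e * b ^ p - 1) = (e * δ ^ p - 1) + e * (((b : F) - δ) *
        ∑ i ∈ Finset.range p, (b : F) ^ i * δ ^ (p - 1 - i)) := by
      rw [mul_comm ((b : F) - δ), geom_sum₂_mul, map_sub, map_mul, map_pow, map_one]; ring
    change w.valuation F (algebraMap (𝓞 F) F (e * b ^ p - 1)) < 1
    rw [e1]
    refine Valuation.map_add_lt _ hδ ?_
    rw [map_mul, he, one_mul, map_mul]
    refine mul_lt_one_of_lt_of_le hb ?_
    refine Valuation.map_sum_le _ fun i _ => ?_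
    rw [map_mul, map_pow, map_pow, h1, hb1, one_pow, one_pow, one_mul]
  · rintro ⟨b, hb⟩
    rw [← valuation_lt_one_iff_mem (K := F)] at hb
    refine ⟨b, ?_⟩
    change w.valuation F (algebraMap (𝓞 F) F (e * b ^ p - 1)) < 1 at hb
    rwa [map_sub, map_mul, map_pow, map_one] at hb

/-- `Sp` only depends on the element up to factors close to `1`. -/
lemma Sp.congr {p : ℕ} (hp : p ≠ 0) {z : F} (hz : IsPrimitiveRoot z p) (hz1 : z ≠ 1) {w : HeightOneSpectrum (𝓞 F)}
    {x y : F} (hxy : w.valuation F (x / y - 1) < w.valuation F (z - 1) ^ p) (h : Sp p z w y) : Sp p z w x := by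
  have h1 : Sp p z w (x / y) := ⟨1, by simpa using hxy⟩
  have hy0 : y ≠ 0 := by
    rintro rfl
    obtain ⟨δ, hδ⟩ := h
    have := Sp.val hp hz hδ
    simp at this
  have := h1.mul hp hz h
  rwa [div_mul_cancel₀ _ hy0] at this

lemma Sp.congr_unit {p : ℕ} (hp : p ≠ 0) {z : F} (hz : IsPrimitiveRoot z p) (hz1 : z ≠ 1) {w : HeightOneSpectrum (𝓞 F)}
    (hw : w.valuation F (z - 1) = 1) {x y : F} (hy : w.valuation F y = 1) (hxy : w.valuation F (x - y) < 1)
    (h : Sp p z w y) : Sp p z w x := by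
  refine h.congr hp hz hz1 ?_
  have hy0 : y ≠ 0 := by rintro rfl; simp at hy
  rw [hw, one_pow, show x / y - 1 = (x - y) / y by field_simp, map_div₀, hy, div_one]
  exact hxy

/-- There is an integer `t` prime to `w` for which `1 - t ^ p` is a unit at `w` which is not a local `p`-th power. -/
lemma exists_t {p : ℕ} (hp : p ≠ 0) (hodd : Odd p) {z : F} (hz : IsPrimitiveRoot z p) (w : HeightOneSpectrum (𝓞 F))
    (hw : w.valuation F (z - 1) = 1) (hbig : p ^ 2 < Nat.card (𝓞 F ⧸ w.asIdeal)) :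
    ∃ t : 𝓞 F, w.valuation F t = 1 ∧ w.valuation F (1 - (t : F) ^ p) = 1 ∧ ¬ Sp p z w (1 - (t : F) ^ p) := by
  let := Ideal.Quotient.field w.asIdeal
  have hfin : Finite (𝓞 F ⧸ w.asIdeal) := Ring.HasFiniteQuotients.finiteQuotient w.ne_bot
  obtain ⟨ζ, rfl⟩ : ∃ ζ : 𝓞 F, (ζ : F) = z := ⟨⟨z, hz.isIntegral (Nat.pos_of_ne_zero hp)⟩, rfl⟩
  obtain ⟨t, ht0, ht⟩ := exists_one_sub_pow hp hodd hbig ⟨Ideal.Quotient.mk _ ζ, by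
      intro h
      rw [← map_one (Ideal.Quotient.mk _), Ideal.Quotient.eq, ← valuation_lt_one_iff_mem (K := F)] at h
      exact h.ne hw, by
      rw [← map_pow, show ζ ^ p = 1 from RingOfIntegers.ext hz.pow_eq_one, map_one]⟩
  obtain ⟨t, rfl⟩ := Ideal.Quotient.mk_surjective t
  have hE : algebraMap (𝓞 F) F (1 - t ^ p) = 1 - (t : F) ^ p := by simp
  have hv : w.valuation F (1 - (t : F) ^ p) = 1 := by
    rw [← hE, valuation_eq_one_iff_notMem, ← Ideal.Quotient.eq_zero_iff_mem]
    intro h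
    rw [map_sub, map_one, map_pow] at h
    exact ht 0 (by rw [h, zero_pow hp])
  refine ⟨t, ?_, hv, ?_⟩
  · rwa [valuation_eq_one_iff_notMem, ← Ideal.Quotient.eq_zero_iff_mem]
  · rw [← hE, Sp_int_iff hp w hw _ (by rw [← hE] at hv; exact hv)]
    rintro ⟨b, hb⟩
    rw [← Ideal.Quotient.eq, map_mul, map_pow, map_one, map_sub, map_one, map_pow] at hb
    have hb0 : Ideal.Quotient.mk w.asIdeal b ≠ 0 := by
      intro h; rw [h, zero_pow hp, mul_zero] at hb; exact zero_ne_one hb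
    refine ht (Ideal.Quotient.mk w.asIdeal b)⁻¹ ?_
    rw [inv_pow]
    exact eq_inv_of_mul_eq_one_left hb

/-- The `p`-th power classes of units at a tame place form a cyclic group of order `p`. -/
lemma Sp_shift {p : ℕ} [Fact p.Prime] {z : F} (hz : IsPrimitiveRoot z p) (w : HeightOneSpectrum (𝓞 F))
    (hw : w.valuation F (z - 1) = 1) {A B : F} (hA : w.valuation F A = 1) (hB : w.valuation F B = 1)
    (hBS : ¬ Sp p z w B) : ∃ k : ℕ, Sp p z w (A * B ^ k) := by
  have hp := (Fact.out : p.Prime)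
  have hz1 : z ≠ 1 := hz.ne_one hp.one_lt
  let := Ideal.Quotient.field w.asIdeal
  have hfin : Finite (𝓞 F ⧸ w.asIdeal) := Ring.HasFiniteQuotients.finiteQuotient w.ne_bot
  obtain ⟨a, ha⟩ := exists_int w hA.le
  obtain ⟨b, hb⟩ := exists_int w hB.le
  have ha1 := val_eq_of_close w ha hA
  have hb1 := val_eq_of_close w hb hB
  have ha2 : Ideal.Quotient.mk w.asIdeal a ≠ 0 := by
    rwa [valuation_eq_one_iff_notMem, ← Ideal.Quotient.eq_zero_iff_mem] at ha1
  have hb2 : Ideal.Quotient.mk w.asIdeal b ≠ 0 := by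
    rwa [valuation_eq_one_iff_notMem, ← Ideal.Quotient.eq_zero_iff_mem] at hb1
  obtain ⟨k, c, hc⟩ := pow_class (p := p) ha2 hb2 (by
    intro x hx
    obtain ⟨x, rfl⟩ := Ideal.Quotient.mk_surjective x
    refine hBS (Sp.congr_unit hp.ne_zero hz hz1 hw hb1 (by rwa [Valuation.map_sub_swap]) ?_)
    have hx0 : Ideal.Quotient.mk w.asIdeal x ≠ 0 := by
      rintro h; rw [h, zero_pow hp.ne_zero] at hx; exact hb2 hx
    obtain ⟨y, hy⟩ := Ideal.Quotient.mk_surjective (Ideal.Quotient.mk w.asIdeal x)⁻¹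
    refine (Sp_int_iff hp.ne_zero w hw _ hb1).2 ⟨y, ?_⟩
    rw [← Ideal.Quotient.eq, map_mul, map_pow, hy, hx, inv_pow, mul_inv_cancel₀ (pow_ne_zero _ hx0), map_one])
  obtain ⟨c, rfl⟩ := Ideal.Quotient.mk_surjective c
  refine ⟨k, ?_⟩
  have h1 : Sp p z w ((a * b ^ k : 𝓞 F) : F) := by
    refine (Sp_int_iff hp.ne_zero w hw _ ?_).2 ⟨c, ?_⟩
    · change w.valuation F (algebraMap (𝓞 F) F (a * b ^ k)) = 1
      rw [map_mul, map_pow, map_mul, map_pow, ha1, hb1, one_pow, one_mul]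
    · rw [← Ideal.Quotient.eq, map_mul, map_pow, map_mul, map_pow, map_one, hc]
  change Sp p z w (algebraMap (𝓞 F) F (a * b ^ k)) at h1
  rw [map_mul, map_pow] at h1
  refine h1.congr hp.ne_zero hz hz1 ?_
  rw [hw, one_pow]
  have hA' : w.valuation F (A / a - 1) < 1 := by
    have ha0 : (a : F) ≠ 0 := by intro h; change w.valuation F (a : F) = 1 at ha1; simp [h] at ha1
    rw [show A / a - 1 = (A - a) / a by field_simp, map_div₀, Valuation.map_sub_swap]
    change _ / w.valuation F (algebraMap (𝓞 F) F a) < 1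
    rw [ha1, div_one]; exact ha
  have hB' : w.valuation F (B / b - 1) < 1 := by
    have hb0 : (b : F) ≠ 0 := by intro h; change w.valuation F (b : F) = 1 at hb1; simp [h] at hb1
    rw [show B / b - 1 = (B - b) / b by field_simp, map_div₀, Valuation.map_sub_swap]
    change _ / w.valuation F (algebraMap (𝓞 F) F b) < 1
    rw [hb1, div_one]; exact hb
  have hB'' : w.valuation F ((B / b) ^ k - 1) < 1 := by
    rw [← geom_sum_mul, map_mul]
    refine lt_of_le_of_lt (mul_le_of_le_one_left' (Valuation.map_sum_le _ fun i _ => ?_)) hB'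
    rw [map_pow, val_eq_of_close w hB' (map_one _), one_pow]
  change w.valuation F (A * B ^ k / (a * b ^ k) - 1) < 1
  rw [show A * B ^ k / ((a : F) * b ^ k) - 1 = (A / a - 1) * (B / b) ^ k + ((B / b) ^ k - 1) by
    rw [div_pow, mul_div_mul_comm]; ring]
  refine Valuation.map_add_lt _ ?_ hB''
  rw [map_mul]
  rw [map_pow, val_eq_of_close w hB' (map_one _), one_pow, mul_one]
  exact hA'

lemma Sp.zpow {p : ℕ} (hp : p ≠ 0) {z : F} (hz : IsPrimitiveRoot z p) (hz1 : z ≠ 1) {w : HeightOneSpectrum (𝓞 F)}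
    {x : F} (h : Sp p z w x) (k : ℤ) : Sp p z w (x ^ k) := by
  have hn : ∀ k : ℕ, Sp p z w (x ^ k) := by
    intro k
    induction k with
    | zero => rw [pow_zero]; exact Sp.one hz1
    | succ k ih => rw [pow_succ]; exact ih.mul hp hz h
  cases k with
  | ofNat k => simpa using hn k
  | negSucc k => rw [zpow_negSucc]; exact (hn _).inv hp hz

/-- `Sp` may be tested on a power with exponent prime to `p`. -/
lemma Sp.of_zpow {p : ℕ} (hp : p ≠ 0) {z : F} (hz : IsPrimitiveRoot z p) (hz1 : z ≠ 1) {w : HeightOneSpectrum (𝓞 F)}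
    {x : F} (hx : x ≠ 0) {f : ℤ} (hf : IsCoprime f (p : ℤ)) (h : Sp p z w (x ^ f)) : Sp p z w x := by
  obtain ⟨u, s, hus⟩ := hf
  have h1 : x = (x ^ f) ^ u * (x ^ s) ^ p := by
    rw [← zpow_mul, ← zpow_natCast (x ^ s), ← zpow_mul, ← zpow_add₀ hx, mul_comm f u, hus, zpow_one]
  rw [h1]
  exact (h.zpow hp hz hz1 u).pow_mul (zpow_ne_zero _ hx)
end

section
variable {K L : Type*} [Field K] [Field L] [NumberField K] [NumberField L] [Algebra K L]

lemma ram_mul_inertia_le (w : HeightOneSpectrum (𝓞 L)) (r : HeightOneSpectrum (𝓞 K)) [w.asIdeal.LiesOver r.asIdeal] :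
    w.asIdeal.ramificationIdx (𝓞 K) * w.asIdeal.inertiaDeg (𝓞 K) ≤ Module.finrank K L := by
  have : Fintype (r.asIdeal.primesOver (𝓞 L)) := (IsDedekindDomain.primesOver_finite r.asIdeal (𝓞 L)).fintype
  rw [IsFractionRing.finrank_eq (𝓞 K) K (𝓞 L) L, ← Ideal.sum_ramification_inertia_eq_finrank r.asIdeal]
  exact Finset.single_le_sum (f := fun q : r.asIdeal.primesOver (𝓞 L) =>
    q.1.ramificationIdx (𝓞 K) * q.1.inertiaDeg (𝓞 K)) (fun _ _ => Nat.zero_le _)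
    (Finset.mem_univ (⟨w.asIdeal, w.isPrime, inferInstance⟩ : r.asIdeal.primesOver (𝓞 L)))

lemma ram_pos (w : HeightOneSpectrum (𝓞 L)) (r : HeightOneSpectrum (𝓞 K)) [w.asIdeal.LiesOver r.asIdeal] :
    0 < w.asIdeal.ramificationIdx (𝓞 K) := by
  rw [← Ideal.ramificationIdx'_eq_ramificationIdx r.asIdeal w.asIdeal r.ne_bot]
  exact Nat.pos_of_ne_zero (Ideal.IsDedekindDomain.ramificationIdx'_ne_zero_of_liesOver _ r.ne_bot)

/-- A unit of `K` which is a local `p`-th power at a place of an extension of degree `< p` is a local `p`-th power. -/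
lemma Sp_down {p : ℕ} (hp : p.Prime) {z : K} (hz : IsPrimitiveRoot z p) (hd : Module.finrank K L < p) (w : HeightOneSpectrum (𝓞 L))
    (r : HeightOneSpectrum (𝓞 K)) [w.asIdeal.LiesOver r.asIdeal] (hw : r.valuation K (z - 1) = 1)
    {E : K} (hE : r.valuation K E = 1) (h : Sp p (algebraMap K L z) w (algebraMap K L E)) : Sp p z r E := by
  have hz1 : z ≠ 1 := hz.ne_one hp.one_lt
  have hzL := hz.map_of_injective (algebraMap K L).injective
  have hz1L : algebraMap K L z ≠ 1 := hzL.ne_one hp.one_lt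
  let := Ideal.Quotient.field w.asIdeal
  let := Ideal.Quotient.field r.asIdeal
  obtain ⟨e, he⟩ := exists_int r hE.le
  have he1 := val_eq_of_close r he hE
  refine Sp.congr_unit hp.ne_zero hz hz1 hw he1 (by rwa [Valuation.map_sub_swap]) ?_
  have hwL : w.valuation L (algebraMap K L z - 1) = 1 := by
    rw [← map_one (algebraMap K L), ← map_sub, val_eq_one_iff r w]; exact hw
  have hE' : w.valuation L (algebraMap K L E) = 1 := by rw [val_eq_one_iff r w]; exact hE
  have heL : w.valuation L ((algebraMap (𝓞 K) (𝓞 L) e : 𝓞 L) : L) = 1 := by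
    change w.valuation L (algebraMap K L e) = 1
    rw [val_eq_one_iff r w]; exact he1
  have hSp : Sp p (algebraMap K L z) w ((algebraMap (𝓞 K) (𝓞 L) e : 𝓞 L) : L) := by
    refine Sp.congr_unit hp.ne_zero hzL hz1L hwL hE' ?_ h
    change w.valuation L (algebraMap K L e - algebraMap K L E) < 1
    rw [← (algebraMap K L).map_sub, ← map_one (w.valuation L), ← map_one (algebraMap K L), val_lt_iff r w, map_one]
    exact he
  obtain ⟨b, hb⟩ := (Sp_int_iff hp.ne_zero w hwL _ heL).1 hSp
  rw [← Ideal.Quotient.eq, map_mul, map_pow, map_one] at hb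
  have hb' : algebraMap (𝓞 K ⧸ r.asIdeal) (𝓞 L ⧸ w.asIdeal) (Ideal.Quotient.mk _ e) * (Ideal.Quotient.mk _ b) ^ p = 1 := hb
  have hN := congrArg (Algebra.norm (𝓞 K ⧸ r.asIdeal)) hb'
  rw [map_mul, map_pow, map_one, Algebra.norm_algebraMap] at hN
  obtain ⟨f, hf⟩ : ∃ f, f = Module.finrank (𝓞 K ⧸ r.asIdeal) (𝓞 L ⧸ w.asIdeal) := ⟨_, rfl⟩
  rw [← hf] at hN
  have hfeq : f = w.asIdeal.inertiaDeg (𝓞 K) := by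
    rw [hf, Ideal.inertiaDeg_eq_of_isMaximal r.asIdeal]
  have hf1 : f ≤ Module.finrank K L := by
    rw [hfeq]; exact (Nat.le_mul_of_pos_left _ (ram_pos w r)).trans (ram_mul_inertia_le w r)
  have hf0 : 0 < f := by
    rw [hf]; exact Module.finrank_pos
  obtain ⟨c, hc⟩ := Ideal.Quotient.mk_surjective (Algebra.norm (𝓞 K ⧸ r.asIdeal) (Ideal.Quotient.mk w.asIdeal b))
  rw [← hc] at hN
  have hS2 : Sp p z r ((e : K) ^ (f : ℤ)) := by
    rw [zpow_natCast]
    change Sp p z r ((algebraMap (𝓞 K) K e) ^ f)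
    rw [← map_pow]
    refine (Sp_int_iff hp.ne_zero r hw _ ?_).2 ⟨c, ?_⟩
    · change r.valuation K (algebraMap (𝓞 K) K (e ^ f)) = 1
      rw [map_pow, map_pow, he1, one_pow]
    · rw [← Ideal.Quotient.eq, map_mul, map_pow, map_pow, map_one, hN]
  refine hS2.of_zpow hp.ne_zero hz hz1 ?_ ?_
  · intro h0
    change r.valuation K (e : K) = 1 at he1
    rw [h0, map_zero] at he1; exact zero_ne_one he1
  · rw [Nat.isCoprime_iff_coprime]
    exact (hp.coprime_iff_not_dvd.2 (Nat.not_dvd_of_pos_of_lt hf0 (by omega))).symm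
end

end ClRank

/-! ### Local analysis of the defining equation -/

namespace ClRank
set_option linter.unusedSectionVars false
set_option linter.unusedVariables false

open scoped nonZeroDivisors Pointwise WithZero
open IsDedekindDomain HeightOneSpectrum

/-- A root of the minimal polynomial of `y` modulo `r` is the residue of `y` at some place above `r`. -/
lemma exists_place {K L : Type*} [Field K] [Field L] [NumberField K] [NumberField L] [Algebra K L]
    (r : HeightOneSpectrum (𝓞 K)) (y : 𝓞 L) (t : 𝓞 K) (ht : (minpoly (𝓞 K) y).eval t ∈ r.asIdeal) :
    ∃ w : HeightOneSpectrum (𝓞 L), w.asIdeal.LiesOver r.asIdeal ∧ y - algebraMap (𝓞 K) (𝓞 L) t ∈ w.asIdeal := by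
  let : Algebra (Polynomial (𝓞 K)) (𝓞 L) := (Polynomial.aeval y : Polynomial (𝓞 K) →ₐ[𝓞 K] 𝓞 L).toRingHom.toAlgebra
  have hst : IsScalarTower (𝓞 K) (Polynomial (𝓞 K)) (𝓞 L) := IsScalarTower.of_algebraMap_eq fun x => by
    change _ = Polynomial.aeval y (Polynomial.C x)
    rw [Polynomial.aeval_C]
  have hxi : Algebra.IsIntegral (Polynomial (𝓞 K)) (𝓞 L) := Algebra.IsIntegral.tower_top (R := 𝓞 K)
  have hP : (r.asIdeal.comap (Polynomial.evalRingHom t)).IsPrime := Ideal.comap_isPrime _ _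
  obtain ⟨Q, -, hQ, hQP⟩ := Ideal.exists_ideal_over_prime_of_isIntegral (r.asIdeal.comap (Polynomial.evalRingHom t))
    (⊥ : Ideal (𝓞 L)) (by
      intro g hg
      have hg' : Polynomial.aeval y g = 0 := hg
      obtain ⟨h, rfl⟩ := minpoly.isIntegrallyClosed_dvd (Algebra.IsIntegral.isIntegral y) hg'
      rw [Ideal.mem_comap, map_mul]
      exact Ideal.mul_mem_right _ _ ht)
  have hover : r.asIdeal = Q.comap (algebraMap (𝓞 K) (𝓞 L)) := by
    rw [IsScalarTower.algebraMap_eq (𝓞 K) (Polynomial (𝓞 K)) (𝓞 L), ← Ideal.comap_comap, hQP, Ideal.comap_comap]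
    ext x
    simp [Ideal.mem_comap]
  refine ⟨⟨Q, hQ, ?_⟩, ⟨hover⟩, ?_⟩
  · rintro rfl
    apply r.ne_bot
    rw [hover, ← RingHom.ker_eq_comap_bot]
    exact (RingHom.injective_iff_ker_eq_bot _).1 (FaithfulSMul.algebraMap_injective _ _)
  · have h1 : (Polynomial.X - Polynomial.C t : Polynomial (𝓞 K)) ∈ Q.comap (algebraMap (Polynomial (𝓞 K)) (𝓞 L)) := by
      rw [hQP]; simp [Ideal.mem_comap]
    have h2 : algebraMap (Polynomial (𝓞 K)) (𝓞 L) (Polynomial.X - Polynomial.C t) = y - algebraMap (𝓞 K) (𝓞 L) t := by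
      change Polynomial.aeval y _ = _
      simp
    rw [← h2]; exact h1

section
variable {F : Type*} [Field F] [NumberField F]

lemma Un.of_eq_one {p : ℕ} {w : HeightOneSpectrum (𝓞 F)} {x : F} (h : w.valuation F x = 1) : Un p w x :=
  ⟨1, by simpa using h⟩

lemma Un.pow {p : ℕ} {w : HeightOneSpectrum (𝓞 F)} {x : F} (hx : x ≠ 0) : Un p w (x ^ p) :=
  ⟨x⁻¹, by rw [← mul_pow, mul_inv_cancel₀ hx]; simp⟩

lemma Un.zpow {p : ℕ} {w : HeightOneSpectrum (𝓞 F)}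
    {x : F} (h : Un p w x) (k : ℤ) : Un p w (x ^ k) := by
  obtain ⟨δ, hδ⟩ := h
  refine ⟨δ ^ k, ?_⟩
  rw [← zpow_natCast, ← zpow_mul, mul_comm k, zpow_mul, zpow_natCast, ← mul_zpow, map_zpow₀, hδ, one_zpow]

lemma Un.of_zpow {p : ℕ} {w : HeightOneSpectrum (𝓞 F)}
    {x : F} (hx : x ≠ 0) {f : ℤ} (hf : IsCoprime f (p : ℤ)) (h : Un p w (x ^ f)) : Un p w x := by
  obtain ⟨u, s, hus⟩ := hf
  have h1 : x = (x ^ f) ^ u * (x ^ s) ^ p := by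
    rw [← zpow_mul, ← zpow_natCast (x ^ s), ← zpow_mul, ← zpow_add₀ hx, mul_comm f u, hus, zpow_one]
  rw [h1]
  exact (h.zpow u).mul (Un.pow (zpow_ne_zero _ hx))

/-- Divisibility of a valuation by `p` may be tested after multiplication by some `m` prime to `p`. -/
lemma Un.of_val_pow {p : ℕ} {w : HeightOneSpectrum (𝓞 F)} {x a : F} (hx : x ≠ 0) (ha : a ≠ 0) {m : ℕ}
    (hm : m.Coprime p) (h : w.valuation F x ^ m = w.valuation F a ^ p) : Un p w x := by
  refine Un.of_zpow hx (Nat.isCoprime_iff_coprime.2 hm) ?_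
  rw [zpow_natCast]
  refine ⟨a⁻¹, ?_⟩
  have : w.valuation F a ≠ 0 := by simpa using ha
  rw [map_mul, map_pow, map_pow, h, map_inv₀, inv_pow, mul_inv_cancel₀ (pow_ne_zero _ this)]

/-- At the places away from `N`, the valuations of `y`, `y - 1`, `y - v ^ p` are divisible by `p`. -/
lemma away {p m : ℕ} (hp : p.Prime) (hm : 1 ≤ m) (hmp : m + 1 < p) {y a v : F} (ha0 : a ≠ 0) (hv0 : v ≠ 0)
    (hf : (y - 1) ^ m * (y - v ^ p) = a ^ p * y) (w : HeightOneSpectrum (𝓞 F))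
    (hy : w.valuation F y ≤ 1) (ha : w.valuation F a ≤ 1) (hv : w.valuation F v ≤ 1)
    (C1 : w.valuation F v < 1 → w.valuation F (1 - (-1) ^ m * a ^ p) = 1)
    (C2 : w.valuation F a < 1 → w.valuation F (v ^ p - 1) = 1 ∨ w.valuation F (v ^ p - 1) ≤ w.valuation F a ^ p) :
    Un p w y ∧ Un p w (y - 1) ∧ Un p w (y - v ^ p) := by
  set V := w.valuation F with hV
  have hp0 := hp.ne_zero
  have hm0 : m ≠ 0 := by omega
  have hy0 : y ≠ 0 := by
    rintro rfl
    rw [mul_zero, mul_eq_zero] at hf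
    rcases hf with h | h
    · have := pow_eq_zero_iff hm0 |>.1 h; norm_num at this
    · rw [zero_sub, neg_eq_zero, pow_eq_zero_iff hp0] at h; exact hv0 h
  have hy1 : y - 1 ≠ 0 := by
    intro h
    rw [h, zero_pow hm0, zero_mul] at hf
    exact mul_ne_zero (pow_ne_zero _ ha0) hy0 hf.symm
  have hVa0 : V a ≠ 0 := by simpa [hV] using ha0
  have hle1 : ∀ x, V x ≤ 1 → V (x - 1) ≤ 1 := fun x hx => (V.map_sub _ _).trans (max_le hx (map_one V).le)
  have hcm : m.Coprime p := ((hp.coprime_iff_not_dvd.2 (Nat.not_dvd_of_pos_of_lt (by omega) (by omega)))).symm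
  have hcm1 : (m + 1).Coprime p := ((hp.coprime_iff_not_dvd.2 (Nat.not_dvd_of_pos_of_lt (by omega) (by omega)))).symm
  have key : Un p w y ∧ Un p w (y - 1) := by
    rcases hy.lt_or_eq with hylt | hyeq
    · have h1 : V (y - 1) = 1 := by
        rw [Valuation.map_sub_swap, Valuation.map_one_sub_of_lt _ hylt]
      refine ⟨?_, Un.of_eq_one h1⟩
      have h2 : V (y - v ^ p) = V a ^ p * V y := by
        have := congrArg V hf
        rwa [map_mul, map_pow, h1, one_pow, one_mul, map_mul, map_pow] at this
      have h3 : V (v ^ p) ≤ V y := by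
        have : v ^ p = y - (y - v ^ p) := by ring
        rw [this]
        refine (V.map_sub _ _).trans (max_le le_rfl ?_)
        rw [h2]; exact mul_le_of_le_one_left' (pow_le_one' ha p)
      have hv1 : V v < 1 := by
        by_contra hcon
        have : V v = 1 := le_antisymm hv (not_lt.1 hcon)
        rw [map_pow, this, one_pow] at h3
        exact absurd hylt (not_lt.2 h3)
      have h4 := C1 hv1
      have h5 : V ((y - 1) ^ m - a ^ p) = 1 := by
        refine val_eq_of_close w (y := (-1) ^ m * (1 - (-1) ^ m * a ^ p)) ?_ ?_
        · have e1 : (y - 1) ^ m - a ^ p - (-1) ^ m * (1 - (-1) ^ m * a ^ p) = (y - 1) ^ m - (-1) ^ m := by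
            have : ((-1 : F) ^ m) * (-1) ^ m = 1 := by rw [← mul_pow]; norm_num
            linear_combination (a ^ p) * this
          rw [e1, ← (Commute.all _ _).geom_sum₂_mul]
          change V _ < 1
          rw [map_mul, show y - 1 - -1 = y by ring]
          refine lt_of_le_of_lt (mul_le_of_le_one_left' (Valuation.map_sum_le _ fun i _ => ?_)) hylt
          rw [map_mul, map_pow, map_pow, h1, Valuation.map_neg, map_one, one_pow, one_pow, one_mul]
        · change V _ = 1
          rw [map_mul, h4, map_pow, Valuation.map_neg, map_one, one_pow, one_mul]
      refine ⟨v⁻¹, ?_⟩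
      have h6 : V (v ^ p) = V y := by
        have e2 : v ^ p * (y - 1) ^ m = y * ((y - 1) ^ m - a ^ p) := by linear_combination -hf
        have := congrArg V e2
        rwa [map_mul, map_mul, h5, map_pow V (y - 1), h1, one_pow, mul_one, mul_one] at this
      change V _ = 1
      rw [map_mul, ← h6, ← map_mul, ← mul_pow, mul_inv_cancel₀ hv0, one_pow, map_one]
    · refine ⟨Un.of_eq_one hyeq, ?_⟩
      rcases (hle1 y hy).lt_or_eq with hμ | hμ
      swap
      · exact Un.of_eq_one hμ
      have h1 : V (y - 1) ^ m * V (y - v ^ p) = V a ^ p := by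
        have := congrArg V hf
        rwa [map_mul, map_pow, map_mul, map_pow, hyeq, mul_one] at this
      have hμ0 : V (y - 1) ≠ 0 := by simpa [hV] using hy1
      have h2 : V (y - v ^ p) ≤ 1 := by
        refine (V.map_sub _ _).trans (max_le hy ?_)
        rw [map_pow]; exact pow_le_one' hv p
      have h3 : V a < 1 := by
        by_contra hcon
        have : V a = 1 := le_antisymm ha (not_lt.1 hcon)
        rw [this, one_pow] at h1
        have h4 : V (y - 1) ^ m < 1 := pow_lt_one₀ zero_le hμ hm0
        exact absurd h1 (ne_of_lt (lt_of_le_of_lt (mul_le_of_le_one_right' h2) h4))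
      have e1 : y - v ^ p = (y - 1) - (v ^ p - 1) := by ring
      rcases C2 h3 with h4 | h4
      · have h5 : V (y - v ^ p) = 1 := by
          rw [e1, Valuation.map_sub_swap, Valuation.map_sub_eq_of_lt_left _ (by rw [h4]; exact hμ), h4]
        rw [h5, mul_one] at h1
        exact Un.of_val_pow hy1 ha0 hcm h1
      · by_cases h5 : V (v ^ p - 1) < V (y - 1)
        · have h6 : V (y - v ^ p) = V (y - 1) := by
            rw [e1, Valuation.map_sub_eq_of_lt_left _ h5]
          rw [h6, ← pow_succ] at h1
          exact Un.of_val_pow hy1 ha0 hcm1 h1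
        · exfalso
          have h6 : V (y - v ^ p) ≤ V a ^ p := by
            rw [e1]
            exact (V.map_sub _ _).trans (max_le ((not_lt.1 h5).trans h4) h4)
          have h7 : V (y - 1) ^ m * V (y - v ^ p) < V a ^ p := by
            refine lt_of_le_of_lt (mul_le_mul_right h6 _) ?_
            exact mul_lt_of_lt_one_left (pow_pos (zero_lt_iff.2 hVa0) p) (pow_lt_one₀ zero_le hμ hm0)
          exact absurd h1 h7.ne
  refine ⟨key.1, key.2, ?_⟩
  have : y - v ^ p = a ^ p * y * ((y - 1) ^ (m : ℤ))⁻¹ := by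
    rw [← hf, zpow_natCast]; field_simp
  rw [this]
  exact ((Un.pow ha0).mul key.1).mul ((key.2.zpow m).inv)

/-- At the places of `N`, the elements `y` and `y - v ^ p` are local `p`-th powers. -/
lemma near {p m : ℕ} (hp : p.Prime) (hodd : Odd p) (hm : 1 ≤ m) {z y a v n r : F} (hz : IsPrimitiveRoot z p)
    (ha0 : a ≠ 0) (hn0 : n ≠ 0) (hy0 : y ≠ 0) (hy1 : y - 1 ≠ 0)
    (hf : (y - 1) ^ m * (y - v ^ p) = a ^ p * y) (w : HeightOneSpectrum (𝓞 F))
    (hy : w.valuation F y ≤ 1) (hn : w.valuation F n < w.valuation F (z - 1) ^ (p + 1))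
    (hV : v ^ p - 1 = n ^ p * (1 + r)) (hr : w.valuation F r < w.valuation F (z - 1) ^ p)
    (ha : w.valuation F a ≤ w.valuation F n ^ (3 * (m + 1))) :
    Sp p z w y ∧ Sp p z w (y - v ^ p) ∧ w.valuation F (y - 1) ≤ w.valuation F n ^ p := by
  have hp0 := hp.ne_zero
  have hp2 := hp.two_le
  have hz1 : z ≠ 1 := hz.ne_one hp.one_lt
  have hπ1 : w.valuation F (z - 1) ≤ 1 := z_val hp0 hz w
  set V := w.valuation F with hVdef
  have hν1 : V n < 1 := hn.trans_le (pow_le_one' hπ1 _)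
  have hν0 : V n ≠ 0 := by simpa [hVdef] using hn0
  have hνp : V n ^ p < V (z - 1) ^ p := by
    refine pow_lt_pow_left₀ (hn.trans_le ?_) zero_le hp0
    rw [pow_succ]; exact mul_le_of_le_one_left' (pow_le_one' hπ1 _)
  have hr1 : V (1 + r) = 1 := Valuation.map_one_add_of_lt _ (hr.trans_le (pow_le_one' hπ1 p))
  have h3p : V n ^ (3 * p) = V n ^ (2 * p) * V n ^ p := by rw [← pow_add]; congr 1; ring
  have h2p : V n ^ (2 * p) ≤ V n ^ p := pow_le_pow_right_of_le_one' hν1.le (by omega)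
  have h3p' : V n ^ (3 * p) ≤ V n ^ p := pow_le_pow_right_of_le_one' hν1.le (by omega)
  have hsmall : ∀ x, V x ≤ V n ^ (3 * p) → V (x / n ^ p) < V (z - 1) ^ p := by
    intro x hx
    rw [map_div₀, map_pow]
    refine lt_of_le_of_lt (div_le_of_le_mul₀ zero_le zero_le (h3p ▸ hx)) (h2p.trans_lt hνp)
  have hprod : V (y - 1) ^ m * V (y - v ^ p) ≤ (V n ^ (3 * p)) ^ m * V n ^ (3 * p) := by
    have := congrArg V hf
    rw [map_mul, map_pow, map_mul, map_pow] at this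
    rw [this, ← pow_succ, ← pow_mul]
    refine (mul_le_of_le_one_right' hy).trans ?_
    refine (pow_le_pow_left₀ zero_le ha p).trans (le_of_eq ?_)
    rw [← pow_mul]; congr 1; ring
  have hsplit : V (y - 1) ≤ V n ^ (3 * p) ∨ V (y - v ^ p) ≤ V n ^ (3 * p) := by
    by_contra! hcon
    have h1 := pow_lt_pow_left₀ hcon.1 zero_le (by omega : m ≠ 0)
    exact absurd hprod (not_le.2 (mul_lt_mul'' h1 hcon.2 zero_le zero_le))
  have hSpy : V (y - 1) ≤ V n ^ p → Sp p z w y := fun h => ⟨1, by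
    rw [one_pow, mul_one]; exact h.trans_lt hνp⟩
  rcases hsplit with h | h
  · refine ⟨hSpy (h.trans h3p'), ⟨(-n)⁻¹, ?_⟩, h.trans h3p'⟩
    have : (y - v ^ p) * (-n)⁻¹ ^ p - 1 = r - (y - 1) / n ^ p := by
      rw [inv_pow, hodd.neg_pow]; field_simp; linear_combination hV
    rw [this]
    exact lt_of_le_of_lt (Valuation.map_sub _ _ _) (max_lt hr (hsmall _ h))
  · have hy1n : V (y - 1) ≤ V n ^ p := by
      rw [show y - 1 = n ^ p * (1 + r) + (y - v ^ p) by rw [← hV]; ring]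
      refine (V.map_add _ _).trans (max_le ?_ (h.trans h3p'))
      rw [map_mul, hr1, mul_one, map_pow]
    have hS1 : Sp p z w (y - 1) := by
      refine ⟨n⁻¹, ?_⟩
      have : (y - 1) * n⁻¹ ^ p - 1 = r + (y - v ^ p) / n ^ p := by
        rw [inv_pow]; field_simp; linear_combination hV
      rw [this]
      exact Valuation.map_add_lt _ hr (hsmall _ h)
    refine ⟨hSpy hy1n, ?_, hy1n⟩
    have : y - v ^ p = y * ((y - 1) ^ (m : ℤ))⁻¹ * a ^ p := by
      rw [zpow_natCast]; field_simp; linear_combination hf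
    rw [this]
    exact (((hSpy hy1n).mul hp0 hz ((hS1.zpow hp0 hz hz1 m).inv hp0 hz))).pow_mul ha0
end

end ClRank

/-! ### The resolvent `G` -/

namespace ClRank
set_option linter.unusedSectionVars false
set_option linter.unusedVariables false

open scoped nonZeroDivisors Pointwise WithZero
open IsDedekindDomain HeightOneSpectrum

/-- The product `∏ (z^j X - c)^j`, a Kummer-type resolvent for `X^p - c^p`. -/
def G {F : Type*} [Field F] (p : ℕ) (z c X : F) : F := ∏ j ∈ Finset.range p, (z ^ j * X - c) ^ j

lemma map_G {F E : Type*} [Field F] [Field E] (f : F →+* E) (p : ℕ) (z c X : F) :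
    f (G p z c X) = G p (f z) (f c) (f X) := by
  simp [G]

section
variable {F : Type*} [Field F] [NumberField F] {p : ℕ} (hp : p.Prime) (hodd : Odd p) {z : F}
  (hz : IsPrimitiveRoot z p)

include hp hodd hz

lemma prod_shift (X c : F) : ∏ j ∈ Finset.range p, (z ^ j * X - c) = X ^ p - c ^ p := by
  by_cases hX : X = 0
  · simp [hX, hodd.neg_pow, hp.ne_zero]
  · have h := prod_sub_zeta hp.ne_zero hz (c / X)
    have h1 : ∏ j ∈ Finset.range p, (z ^ j * X - c) = ∏ j ∈ Finset.range p, ((-X) * (c / X - z ^ j)) := by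
      refine Finset.prod_congr rfl fun j _ => ?_
      field_simp
      ring
    rw [h1, Finset.prod_mul_distrib, ← h, Finset.prod_const, Finset.card_range, hodd.neg_pow, div_pow]
    have := pow_ne_zero p hX
    field_simp
    ring

/-- Replacing `X` by `z X` multiplies `G` by `(X - c) ^ p / (X ^ p - c ^ p)`; thus if the
`X ^ p - c ^ p` combine to a `p`-th power, the class of `G` modulo `p`-th powers is Galois-invariant. -/
lemma G_shift (X c : F) : G p z c (z * X) * (X ^ p - c ^ p) = G p z c X * (X - c) ^ p := by
  have h1 : ∏ j ∈ Finset.range p, (z ^ (j + 1) * X - c) = X ^ p - c ^ p := by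
    rw [← prod_shift hp hodd hz]
    obtain ⟨q, rfl⟩ := Nat.exists_eq_succ_of_ne_zero hp.ne_zero
    rw [Finset.prod_range_succ, Finset.prod_range_succ', show z ^ (q + 1) = 1 from hz.pow_eq_one, pow_zero]
  have h2 : G p z c (z * X) = ∏ j ∈ Finset.range p, (z ^ (j + 1) * X - c) ^ j := by
    refine Finset.prod_congr rfl fun j _ => ?_
    rw [pow_succ, mul_assoc]
  rw [h2, ← h1, ← Finset.prod_mul_distrib]
  have h3 : ∏ j ∈ Finset.range p, (z ^ (j + 1) * X - c) ^ j * (z ^ (j + 1) * X - c) =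
      ∏ j ∈ Finset.range (p + 1), (z ^ j * X - c) ^ j := by
    rw [Finset.prod_range_succ', pow_zero, mul_one]
    exact Finset.prod_congr rfl fun j _ => (pow_succ _ _).symm
  rw [h3, Finset.prod_range_succ, hz.pow_eq_one, one_mul]
  rfl

omit hp in
lemma sum_id : ∑ j ∈ Finset.range p, j = p * ((p - 1) / 2) := by
  obtain ⟨k, rfl⟩ := hodd
  rw [Finset.sum_range_id]
  have : 2 * k + 1 - 1 = 2 * k := by omega
  rw [this, Nat.mul_div_cancel_left _ (by norm_num : 0 < 2), show (2 * k + 1) * (2 * k) = 2 * ((2 * k + 1) * k) by ring,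
    Nat.mul_div_cancel_left _ (by norm_num : 0 < 2)]

omit hp in
/-- The exponents `0, …, p - 1` in `G` sum to a multiple of `p`, so `G` is homogeneous of degree `0`
modulo `p`-th powers. -/
lemma G_scale (c X d : F) : G p z (d * c) (d * X) = (d ^ ((p - 1) / 2)) ^ p * G p z c X := by
  have h2 : G p z (d * c) (d * X) = ∏ j ∈ Finset.range p, d ^ j * (z ^ j * X - c) ^ j := by
    refine Finset.prod_congr rfl fun j _ => ?_
    rw [← mul_pow]; congr 1; ring
  rw [h2, Finset.prod_mul_distrib, Finset.prod_pow_eq_pow_sum, sum_id hodd hz, ← pow_mul, mul_comm p]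
  rfl

omit hodd in
lemma val_root_sub (w : HeightOneSpectrum (𝓞 F)) {i j : ℕ} (hi : i < p) (hj : j < p) (hij : i ≠ j) :
    w.valuation F (z - 1) ≤ w.valuation F (z ^ i - z ^ j) := by
  have hv : ∀ k, w.valuation F (z ^ k) = 1 := fun k => by
    have : w.valuation F (z ^ k) ^ p = 1 := by
      rw [← map_pow, ← pow_mul, mul_comm, pow_mul, hz.pow_eq_one, one_pow, map_one]
    exact (pow_eq_one_iff_of_nonneg zero_le hp.ne_zero).1 this
  wlog h : i < j generalizing i j
  · rw [Valuation.map_sub_swap _ (z ^ i)]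
    exact this hj hi hij.symm (by omega)
  · by_contra hcon
    rw [not_le] at hcon
    have h1 : z ^ i - z ^ j = - (z ^ i * (z ^ (j - i) - 1)) := by
      rw [mul_sub, ← pow_add, show i + (j - i) = j by omega]; ring
    rw [h1, Valuation.map_neg, map_mul, hv, one_mul] at hcon
    have h2 := root_eq_one hp hz hcon
    have := Nat.le_of_dvd (by omega) ((hz.pow_eq_one_iff_dvd _).1 h2)
    omega

omit hodd in
lemma val_root (w : HeightOneSpectrum (𝓞 F)) (k : ℕ) : w.valuation F (z ^ k) = 1 := by
  have : w.valuation F (z ^ k) ^ p = 1 := by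
    rw [← map_pow, ← pow_mul, mul_comm, pow_mul, hz.pow_eq_one, one_pow, map_one]
  exact (pow_eq_one_iff_of_nonneg zero_le hp.ne_zero).1 this

omit hodd in
/-- The values of `G` at two points agree up to a local `p`-th power if their factors are close. -/
lemma Sp_G_congr {w : HeightOneSpectrum (𝓞 F)} {c X c' u : F}
    (h : ∀ j, 1 ≤ j → j < p → w.valuation F ((z ^ j * X - c) - (z ^ j * u - c')) <
      w.valuation F (z ^ j * u - c') * w.valuation F (z - 1) ^ p) :
    Sp p z w (G p z c X / G p z c' u) := by
  have hz1 := hz.ne_one hp.one_lt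
  rw [G, G, ← Finset.prod_div_distrib]
  refine Finset.prod_induction _ (Sp p z w) (fun a b ha hb => ha.mul hp.ne_zero hz hb) (Sp.one hz1) ?_
  intro j hj
  rw [Finset.mem_range] at hj
  rw [← div_pow]
  rcases Nat.eq_zero_or_pos j with rfl | hj0
  · rw [pow_zero]; exact Sp.one hz1
  · have h1 := h j hj0 hj
    have hne : z ^ j * u - c' ≠ 0 := by
      intro h0
      rw [h0, map_zero, zero_mul] at h1
      exact not_lt_zero h1
    have : Sp p z w ((z ^ j * X - c) / (z ^ j * u - c')) := by
      refine ⟨1, ?_⟩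
      rw [one_pow, mul_one, div_sub_one hne, map_div₀]
      have hpos : 0 < w.valuation F (z ^ j * u - c') := (Valuation.pos_iff _).2 hne
      rw [div_lt_iff₀ hpos, mul_comm (_ ^ p)]
      exact h1
    have := this.zpow hp.ne_zero hz hz1 (j : ℤ)
    rwa [zpow_natCast] at this

omit hodd in
/-- If `X ^ p` is very close to `1`, then so is `X` up to a root of unity. -/
lemma close' {w : HeightOneSpectrum (𝓞 F)} {X : F}
    (h : w.valuation F (X ^ p - 1) < w.valuation F (z - 1) ^ (p * (p + 1))) :
    ∃ k, w.valuation F (z ^ k * X - 1) < w.valuation F (z - 1) ^ (p + 1) := by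
  have hπ := z_val hp.ne_zero hz w
  have hz1 := hz.ne_one hp.one_lt
  have hπ0 : w.valuation F (z - 1) ≠ 0 := (Valuation.ne_zero_iff _).2 (sub_ne_zero.2 hz1)
  obtain ⟨i, hi, hc⟩ := exists_close hp.ne_zero hz (h.trans_le
    (pow_le_pow_right_of_le_one' hπ (by nlinarith [hp.pos])))
  have h1 : w.valuation F (X - z ^ i) * w.valuation F (z - 1) ^ (p - 1) ≤ w.valuation F (X ^ p - 1) := by
    rw [prod_sub_zeta hp.ne_zero hz, map_prod, ← Finset.mul_prod_erase _ _ (Finset.mem_range.2 hi)]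
    refine mul_le_mul_right ?_ _
    have : (Finset.range p).card - 1 = p - 1 := by simp
    rw [← this, ← Finset.card_erase_of_mem (Finset.mem_range.2 hi), ← Finset.prod_const]
    refine Finset.prod_le_prod' fun j hj => ?_
    rw [Finset.mem_erase, Finset.mem_range] at hj
    by_contra hcon
    rw [not_le] at hcon
    refine absurd (val_root_sub hp hz w hj.2 hi hj.1) (not_le.2 ?_)
    have : z ^ j - z ^ i = (X - z ^ i) - (X - z ^ j) := by ring
    rw [this]
    exact (Valuation.map_sub_lt _ hc hcon)
  refine ⟨p - i, ?_⟩
  have h2 : z ^ (p - i) * X - 1 = z ^ (p - i) * (X - z ^ i) := by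
    rw [mul_sub, ← pow_add, show p - i + i = p by omega, hz.pow_eq_one]
  rw [h2, map_mul, val_root hp hz, one_mul]
  have h3 : w.valuation F (X - z ^ i) * w.valuation F (z - 1) ^ (p - 1) <
      w.valuation F (z - 1) ^ (p + 1) * w.valuation F (z - 1) ^ (p - 1) := by
    rw [← pow_add]
    refine (h1.trans_lt h).trans_le (pow_le_pow_right_of_le_one' hπ ?_)
    have := hp.two_le
    obtain ⟨q, rfl⟩ := Nat.exists_eq_add_of_le this
    have : 2 + q - 1 = 1 + q := by omega
    rw [this]; nlinarith
  exact lt_of_mul_lt_mul_right h3 zero_le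

omit hp hodd hz in
lemma Un.of_val {w : HeightOneSpectrum (𝓞 F)} {x y : F} (h : w.valuation F x = w.valuation F y) (hy : Un p w y) :
    Un p w x := by
  obtain ⟨δ, hδ⟩ := hy
  exact ⟨δ, by rw [map_mul, h, ← map_mul, hδ]⟩

/-- Away from `p`, at most one of the factors `z ^ j Y - 1` is not a unit when `Y` is integral, so their
valuations are divisible by `p` as soon as that of their product `Y ^ p - 1` is. -/
lemma Un_G_one {w : HeightOneSpectrum (𝓞 F)} (hw : w.valuation F (z - 1) = 1) {Y : F}
    (h : Un p w (Y ^ p - 1)) : Un p w (G p z 1 Y) := by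
  rcases lt_or_ge 1 (w.valuation F Y) with hY | hY
  · have hY0 : Y ≠ 0 := by rintro rfl; simp at hY
    have h1 := G_scale (z := z) hodd hz Y⁻¹ 1 Y
    rw [mul_inv_cancel₀ hY0, mul_one] at h1
    rw [h1]
    refine (Un.pow (pow_ne_zero _ hY0)).mul (Un.of_eq_one ?_)
    rw [G, map_prod]
    refine Finset.prod_eq_one fun j _ => ?_
    have : w.valuation F (z ^ j - Y⁻¹) = 1 := by
      have hlt : w.valuation F Y⁻¹ < w.valuation F (z ^ j) := by
        rw [val_root hp hz, map_inv₀]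
        exact inv_lt_one_of_one_lt₀ hY
      rw [(w.valuation F).map_sub_eq_of_lt_left hlt, val_root hp hz]
    rw [mul_one, map_pow, this, one_pow]
  · have hle : ∀ j, w.valuation F (z ^ j * Y - 1) ≤ 1 := fun j => by
      refine (Valuation.map_sub _ _ _).trans (max_le ?_ (by simp))
      rw [map_mul, val_root hp hz, one_mul]; exact hY
    refine Finset.prod_induction _ (Un p w) (fun a b ha hb => ha.mul hb) Un.one ?_
    intro i hi
    have : Un p w (z ^ i * Y - 1) := by
      rcases (hle i).lt_or_eq with hlt | heq
      · refine Un.of_val ?_ h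
        have h1 := prod_shift hp hodd hz Y 1
        rw [one_pow] at h1
        rw [← h1, ← Finset.mul_prod_erase _ _ hi, map_mul, map_prod, Finset.prod_eq_one, mul_one]
        intro j hj
        rw [Finset.mem_erase, Finset.mem_range] at hj
        rw [Finset.mem_range] at hi
        refine le_antisymm (hle j) ?_
        by_contra hcon
        rw [not_le] at hcon
        refine absurd (val_root_sub hp hz w hj.2 hi hj.1) (not_le.2 ?_)
        have : z ^ j - z ^ i = z ^ i * (z ^ j * Y - 1) - z ^ j * (z ^ i * Y - 1) := by ring
        rw [this, hw]
        refine Valuation.map_sub_lt _ ?_ ?_ <;> rwa [map_mul, val_root hp hz, one_mul]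
      · exact Un.of_eq_one heq
    have := this.zpow (i : ℤ)
    rwa [zpow_natCast] at this

lemma Un_G {w : HeightOneSpectrum (𝓞 F)} (hw : w.valuation F (z - 1) = 1) {c X : F} (hc : c ≠ 0)
    (h : Un p w (X ^ p - c ^ p)) : Un p w (G p z c X) := by
  have h1 := G_scale (z := z) hodd hz 1 (X / c) c
  rw [mul_one, mul_div_cancel₀ _ hc] at h1
  rw [h1]
  refine (Un.pow (pow_ne_zero _ hc)).mul (Un_G_one hp hodd hz hw ?_)
  have : (X / c) ^ p - 1 = (X ^ p - c ^ p) * (c ^ p)⁻¹ := by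
    have := pow_ne_zero p hc
    rw [div_pow, sub_mul, mul_inv_cancel₀ this, div_eq_mul_inv]
  rw [this]
  exact h.mul (Un.pow hc).inv

end
end ClRank

/-! ### The third Kummer generator -/

namespace ClRank
set_option linter.unusedSectionVars false
set_option linter.unusedVariables false

open scoped nonZeroDivisors Pointwise WithZero
open IsDedekindDomain HeightOneSpectrum

lemma exists_over {L : Type*} (M : Type*) [Field L] [Field M] [NumberField L] [NumberField M] [Algebra L M]
    (w : HeightOneSpectrum (𝓞 L)) : ∃ P : HeightOneSpectrum (𝓞 M), P.asIdeal.LiesOver w.asIdeal := by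
  have := w.isMaximal
  obtain ⟨Q, hQ, hQw⟩ := Ideal.exists_maximal_ideal_liesOver_of_isIntegral w.asIdeal (S := 𝓞 M)
  refine ⟨⟨Q, hQ.isPrime, ?_⟩, hQw⟩
  have := w.ne_bot
  exact Ideal.ne_bot_of_liesOver_of_ne_bot this Q

/-- The extension `L(y^{1/p})`, packaged with what is needed about it. The last clause says that its
Galois group acts faithfully on each `p`-th root of `y`. -/
lemma exists_kummer.{u} {L : Type u} [Field L] [NumberField L] {p : ℕ} (hp : p.Prime) {z : L}
    (hz : IsPrimitiveRoot z p) {y : L} (hpow : ∀ b : L, b ^ p ≠ y) :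
    ∃ (M : Type u) (_ : Field M) (_ : Algebra L M), IsGalois L M ∧ NumberField M ∧ Module.finrank L M = p ∧
      (∃ X : M, X ^ p = algebraMap L M y) ∧ ∀ X : M, X ^ p = algebraMap L M y → ∀ σ : M ≃ₐ[L] M, σ X = X → σ = 1 := by
  have hp0 := hp.ne_zero
  have hirr : Irreducible (Polynomial.X ^ p - Polynomial.C y) := X_pow_sub_C_irreducible_of_prime hp hpow
  have hprim : (primitiveRoots p L).Nonempty := ⟨z, (mem_primitiveRoots hp.pos).2 hz⟩
  let M := (Polynomial.X ^ p - Polynomial.C y).SplittingField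
  have : NeZero p := ⟨hp0⟩
  have : IsGalois L M := isGalois_of_isSplittingField_X_pow_sub_C hprim hirr M
  have : NumberField M := NumberField.of_module_finite L M
  have hfM : Module.finrank L M = p := finrank_of_isSplittingField_X_pow_sub_C hprim hirr M
  refine ⟨M, inferInstance, inferInstance, inferInstance, inferInstance, hfM, ⟨_, rootOfSplitsXPowSubC_pow y M⟩, ?_⟩
  · intro X hX σ hσ
    have htop := Algebra.adjoin_root_eq_top_of_isSplittingField hprim hirr hX
    ext x
    have hx : x ∈ Algebra.adjoin L {X} := by rw [htop]; trivial
    have : Algebra.adjoin L {X} ≤ AlgHom.equalizer (σ : M →ₐ[L] M) (AlgHom.id L M) := by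
      refine Algebra.adjoin_le ?_
      rintro _ rfl
      exact hσ
    exact this hx

/-- The third Kummer generator: it descends `∏ (ζ^j X - 1)^(j m) ∏ (ζ^j X - v)^j`, `X^p = y`,
from `L(X)` to `L` up to `p`-th powers. -/
lemma exists_alpha {L : Type*} [Field L] [NumberField L] {p m : ℕ} (hp : p.Prime) (hodd : Odd p) {z : L}
    (hz : IsPrimitiveRoot z p) {y a v : L} (ha0 : a ≠ 0) (hv0 : v ≠ 0)
    (hf : (y - 1) ^ m * (y - v ^ p) = a ^ p * y) (hy1 : y ≠ 1) (hpow : ∀ b : L, b ^ p ≠ y) :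
    ∃ α : L, α ≠ 0 ∧
      (∀ w : HeightOneSpectrum (𝓞 L), w.valuation L (z - 1) = 1 → Un p w y → Un p w (y - 1) →
        Un p w (y - v ^ p) → Un p w α) ∧
      (∀ w : HeightOneSpectrum (𝓞 L), w.valuation L (y - 1) < w.valuation L (z - 1) ^ (p * (p + 1)) →
        w.valuation L (v - 1) < w.valuation L (z - 1) ^ (p + 1) → Sp p z w α) ∧
      (∀ w : HeightOneSpectrum (𝓞 L), w.valuation L (z - 1) = 1 → w.valuation L v = 1 →
        w.valuation L (v ^ p - 1) = 1 → w.valuation L (y - v ^ p) < 1 →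
        Sp p z w (α / (G p z 1 v / G p z 1 1) ^ m)) := by
  have hp0 := hp.ne_zero
  have hz1 := hz.ne_one hp.one_lt
  have hy0 : y ≠ 0 := by rintro rfl; exact hpow 0 (zero_pow hp0)
  have hyv : y - v ^ p ≠ 0 := by
    intro h; rw [h, mul_zero] at hf; exact mul_ne_zero (pow_ne_zero _ ha0) hy0 hf.symm
  obtain ⟨M, iF, iA, iG, iN, hfM, ⟨X, hX⟩, hfaith'⟩ := exists_kummer hp hz hpow
  have hfaith := hfaith' X hX
  have hirr : Irreducible (Polynomial.X ^ p - Polynomial.C y) := X_pow_sub_C_irreducible_of_prime hp hpow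
  have hzM := hz.map_of_injective (algebraMap L M).injective
  obtain ⟨Z, hZ⟩ : ∃ Z, Z = algebraMap L M z := ⟨_, rfl⟩
  rw [← hZ] at hzM
  obtain ⟨u, hu⟩ : ∃ u, u = algebraMap L M v := ⟨_, rfl⟩
  have hZ1 : Z ≠ 1 := hzM.ne_one hp.one_lt
  have hX0 : X ≠ 0 := by
    rintro rfl; rw [zero_pow hp0] at hX; exact hy0 ((algebraMap L M).injective (by rw [← hX, map_zero]))
  have hu0 : u ≠ 0 := by rw [hu]; simpa using hv0
  obtain ⟨σ, hσ⟩ : ∃ σ : M ≃ₐ[L] M, σ X = Z * X := by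
    have hmonic : (Polynomial.X ^ p - Polynomial.C y).Monic := Polynomial.monic_X_pow_sub_C y hp0
    have h1 : minpoly L X = Polynomial.X ^ p - Polynomial.C y :=
      (minpoly.eq_of_irreducible_of_monic hirr (by simp [hX]) hmonic).symm
    obtain ⟨σ, hσ⟩ := minpoly.exists_algEquiv_of_root' (K := L) (x := Z * X) (y := X)
      (Algebra.IsAlgebraic.isAlgebraic X) (by simp [h1, mul_pow, hzM.pow_eq_one, hX])
    exact ⟨σ, hσ⟩
  have hσZ : σ Z = Z := by rw [hZ, σ.commutes]
  have hσu : σ u = u := by rw [hu, σ.commutes]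
  have hσk : ∀ k : ℕ, (σ ^ k) X = Z ^ k * X := by
    intro k
    induction k with
    | zero => simp
    | succ k ih => rw [pow_succ', AlgEquiv.mul_apply, ih, map_mul, map_pow, hσZ, hσ]; ring
  have hord : orderOf σ = p := by
    have : Fact p.Prime := ⟨hp⟩
    refine orderOf_eq_prime (hfaith _ ?_) ?_
    · rw [hσk, hzM.pow_eq_one, one_mul]
    · rintro rfl
      have : (1 : M) * X = Z * X := by rw [← hσ]; simp
      exact hZ1 (mul_right_cancel₀ hX0 this).symm
  have hG0 : ∀ c x : M, x ^ p - c ^ p ≠ 0 → G p Z c x ≠ 0 := by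
    intro c x h
    rw [← prod_shift hp hodd hzM, Finset.prod_ne_zero_iff] at h
    rw [G, Finset.prod_ne_zero_iff]
    exact fun j hj => pow_ne_zero _ (h j hj)
  have hX1 : X ^ p - 1 ^ p ≠ 0 := by
    rw [hX, one_pow, ← map_one (algebraMap L M), ← (algebraMap L M).map_sub]
    exact (map_ne_zero _).2 (sub_ne_zero.2 hy1)
  have hXu : X ^ p - u ^ p ≠ 0 := by
    rw [hX, hu, ← (algebraMap L M).map_pow, ← (algebraMap L M).map_sub]
    exact (map_ne_zero _).2 hyv
  have hg1 : G p Z 1 1 ≠ 0 := by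
    rw [G, Finset.prod_ne_zero_iff]
    intro j hj h
    rw [Finset.mem_range] at hj
    rcases Nat.eq_zero_or_pos j with rfl | hj0
    · simp at h
    · rw [mul_one] at h
      exact hzM.pow_ne_one_of_pos_of_lt hj0.ne' hj (sub_eq_zero.1 (pow_eq_zero_iff hj0.ne' |>.1 h))
  obtain ⟨γ, hγ⟩ : ∃ γ, γ = G p Z 1 X ^ m * G p Z u X := ⟨_, rfl⟩
  have hγ0 : γ ≠ 0 := by
    rw [hγ]; exact mul_ne_zero (pow_ne_zero _ (hG0 _ _ hX1)) (hG0 _ _ hXu)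
  obtain ⟨A, hA⟩ : ∃ A, A = algebraMap L M a := ⟨_, rfl⟩
  have hA0 : A ≠ 0 := by rw [hA]; simpa using ha0
  have hfM' : (X ^ p - 1 ^ p) ^ m * (X ^ p - u ^ p) = A ^ p * X ^ p := by
    rw [hX, hu, hA, one_pow]
    have := congrArg (algebraMap L M) hf
    simpa using this
  obtain ⟨η, hη⟩ : ∃ η, η = (X - 1) ^ m * (X - u) / (A * X) := ⟨_, rfl⟩
  have hσγ : σ γ = γ * η ^ p := by
    have e1 : σ (G p Z 1 X) = G p Z 1 (Z * X) := by
      have := map_G (σ : M →+* M) p Z 1 X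
      rw [map_one] at this
      change σ _ = G p (σ Z) 1 (σ X) at this
      rw [this, hσZ, hσ]
    have e2 : σ (G p Z u X) = G p Z u (Z * X) := by
      have := map_G (σ : M →+* M) p Z u X
      change σ _ = G p (σ Z) (σ u) (σ X) at this
      rw [this, hσZ, hσ, hσu]
    have s1 := eq_div_of_mul_eq hX1 (G_shift hp hodd hzM X 1)
    have s2 := eq_div_of_mul_eq hXu (G_shift hp hodd hzM X u)
    rw [hγ, map_mul, map_pow, e1, e2, s1, s2, hη, div_pow _ (A * X), mul_pow A, ← hfM', mul_pow ((X - 1) ^ m), ← pow_mul, mul_comm m p, pow_mul, div_pow _ (X ^ p - 1 ^ p), mul_pow _ _ m]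
    field_simp
  have hηprod : ∏ i ∈ Finset.range p, (σ ^ i) η = 1 := by
    have hc : ∀ i, (σ ^ i) η = (Z ^ i * X - 1) ^ m * (Z ^ i * X - u) / (Z ^ i * (A * X) - 0) := by
      intro i
      rw [hη, map_div₀, map_mul, map_pow, map_sub, map_sub, map_mul, hσk, map_one, hu, hA, AlgEquiv.commutes,
        AlgEquiv.commutes]
      congr 1; ring
    rw [Finset.prod_congr rfl fun i _ => hc i, Finset.prod_div_distrib, Finset.prod_mul_distrib,
      Finset.prod_pow, prod_shift hp hodd hzM, prod_shift hp hodd hzM, prod_shift hp hodd hzM, hfM', zero_pow hp0,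
      sub_zero, mul_pow, div_self]
    exact mul_ne_zero (pow_ne_zero _ hA0) (pow_ne_zero _ hX0)
  obtain ⟨κ, hκ0, hκ⟩ := hilbert90 σ p hord hp0 η hηprod
  obtain ⟨α, hα⟩ := fixed_mem σ (hord.trans hfM.symm) (γ / (G p Z 1 1 ^ (m + 1) * κ ^ p)) (by
    have e1 : σ (G p Z 1 1) = G p Z 1 1 := by
      have := map_G (σ : M →+* M) p Z 1 1
      rw [map_one] at this
      change σ _ = G p (σ Z) 1 1 at this
      rw [this, hσZ]
    have hη0 : η ≠ 0 := by
      rintro rfl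
      rw [zero_mul] at hκ
      exact hκ0 ((map_eq_zero _).1 hκ)
    rw [map_div₀, map_mul, map_pow, map_pow, e1, hσγ, hκ, mul_pow]
    field_simp)
  -- The formula for `α` holds for every conjugate `z ^ k X` of `X`; locally the best one is used.
  have hconj : ∀ k : ℕ, ∃ κ' : M, κ' ≠ 0 ∧ algebraMap L M α =
      (G p Z 1 (Z ^ k * X) / G p Z 1 1) ^ m * (G p Z u (Z ^ k * X) / G p Z 1 1) * κ' ^ p := by
    intro k
    refine ⟨((σ ^ k) κ)⁻¹, inv_ne_zero ((map_ne_zero _).2 hκ0), ?_⟩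
    have hZk : (σ ^ k) Z = Z := by rw [hZ, AlgEquiv.commutes]
    have huk : (σ ^ k) u = u := by rw [hu, AlgEquiv.commutes]
    have hG : ∀ c x, (σ ^ k) (G p Z c x) = G p Z ((σ ^ k) c) ((σ ^ k) x) := fun c x => by
      have := map_G ((σ ^ k : M ≃ₐ[L] M) : M →+* M) p Z c x
      change (σ ^ k) _ = G p ((σ ^ k) Z) ((σ ^ k) c) ((σ ^ k) x) at this
      rw [this, hZk]
    rw [← (σ ^ k).commutes α, hα, hγ, map_div₀, map_mul, map_mul, map_pow, map_pow, map_pow, hG, hG, hG, map_one, huk, hσk]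
    rw [pow_succ, div_pow, inv_pow]
    field_simp
  have hα0 : α ≠ 0 := by
    rintro rfl
    rw [map_zero, eq_comm, div_eq_zero_iff] at hα
    rcases hα with h | h
    · exact hγ0 h
    · exact mul_ne_zero (pow_ne_zero _ hg1) (pow_ne_zero _ hκ0) h
  have hvZ : ∀ w : HeightOneSpectrum (𝓞 L), ∀ P : HeightOneSpectrum (𝓞 M), P.asIdeal.LiesOver w.asIdeal →
      w.valuation L (z - 1) = 1 → P.valuation M (Z - 1) = 1 := by
    intro w P hP h
    rw [hZ, ← map_one (algebraMap L M), ← (algebraMap L M).map_sub]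
    exact (val_eq_one_iff w P _).2 h
  refine ⟨α, hα0, ?_, ?_, ?_⟩
  · intro w hw h1 h2 h3
    obtain ⟨P, hP⟩ := exists_over M w
    refine Un.descent w P (inertia_trivial w P hp hz hX hfaith h1 hw) hp0 ?_
    have hw' := hvZ w P hP hw
    rw [hα, hγ]
    have k1 : Un p P (G p Z 1 X) := by
      refine Un_G hp hodd hzM hw' one_ne_zero ?_
      have := Un.map w P h2
      rw [(algebraMap L M).map_sub, map_one, ← hX] at this
      rwa [one_pow]
    have k2 : Un p P (G p Z u X) := by
      refine Un_G hp hodd hzM hw' hu0 ?_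
      have := Un.map w P h3
      rwa [(algebraMap L M).map_sub, map_pow, ← hX, ← hu] at this
    have k3 : Un p P (G p Z 1 1) := by
      refine Un.of_eq_one ?_
      rw [G, map_prod]
      refine Finset.prod_eq_one fun j hj => ?_
      rw [Finset.mem_range] at hj
      rw [map_pow]
      rcases Nat.eq_zero_or_pos j with rfl | hj0
      · rw [pow_zero]
      · have h1 := val_root_sub hp hzM P hj hp.pos hj0.ne'
        rw [hw', pow_zero] at h1
        rw [mul_one, le_antisymm _ h1, one_pow]
        refine (Valuation.map_sub _ _ _).trans (by simp [val_root hp hzM])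
    have e1 := (k1.zpow m).mul k2
    have e2 := ((k3.zpow (m + 1 : ℕ)).mul (Un.pow hκ0)).inv
    rw [zpow_natCast] at e1 e2
    rw [div_eq_mul_inv]
    exact e1.mul e2
  · intro w h1 h2
    obtain ⟨P, hP⟩ := exists_over M w
    have hπ := z_val hp0 hz w
    have hSy : Sp p z w y := ⟨1, by
      rw [one_pow, mul_one]
      exact h1.trans_le (pow_le_pow_right_of_le_one' hπ (by nlinarith [hp.pos]))⟩
    refine Sp.descent w P (stab_trivial w P hp hz hX hfaith hSy) hp0 hz hz1 ?_
    rw [← hZ]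
    obtain ⟨k, hk⟩ := close' hp hzM (w := P) (X := X) (by
      rw [hX, hZ, ← map_one (algebraMap L M), ← (algebraMap L M).map_sub, ← (algebraMap L M).map_sub,
        ← Valuation.map_pow, ← (algebraMap L M).map_pow, val_lt_iff w P, Valuation.map_pow]
      exact h1)
    have hu1 : P.valuation M (u - 1) < P.valuation M (Z - 1) ^ (p + 1) := by
      rw [hu, hZ, ← map_one (algebraMap L M), ← (algebraMap L M).map_sub, ← (algebraMap L M).map_sub,
        ← Valuation.map_pow, ← (algebraMap L M).map_pow, val_lt_iff w P, Valuation.map_pow]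
      exact h2
    obtain ⟨κ', hκ', hform⟩ := hconj k
    have hroot : ∀ j, 1 ≤ j → j < p → P.valuation M (Z - 1) ^ (p + 1) ≤
        P.valuation M (Z ^ j * 1 - 1) * P.valuation M (Z - 1) ^ p := by
      intro j hj1 hj
      rw [pow_succ', mul_one]
      refine mul_le_mul_left ?_ _
      have := val_root_sub hp hzM P hj hp.pos (by omega)
      rwa [pow_zero] at this
    have k1 : Sp p Z P (G p Z 1 (Z ^ k * X) / G p Z 1 1) := by
      refine Sp_G_congr hp hzM fun j hj1 hj => lt_of_lt_of_le ?_ (hroot j hj1 hj)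
      have : Z ^ j * (Z ^ k * X) - 1 - (Z ^ j * 1 - 1) = Z ^ j * (Z ^ k * X - 1) := by ring
      rw [this, map_mul, val_root hp hzM, one_mul]
      exact hk
    have k2 : Sp p Z P (G p Z u (Z ^ k * X) / G p Z 1 1) := by
      refine Sp_G_congr hp hzM fun j hj1 hj => lt_of_lt_of_le ?_ (hroot j hj1 hj)
      have : Z ^ j * (Z ^ k * X) - u - (Z ^ j * 1 - 1) = Z ^ j * (Z ^ k * X - 1) - (u - 1) := by ring
      rw [this]
      refine Valuation.map_sub_lt _ ?_ hu1
      rw [map_mul, val_root hp hzM, one_mul]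
      exact hk
    rw [hform]
    have k3 := k1.zpow hp0 hzM hZ1 m
    rw [zpow_natCast] at k3
    exact (k3.mul hp0 hzM k2).pow_mul hκ'
  · intro w hw hv hv1 hyw
    obtain ⟨P, hP⟩ := exists_over M w
    have hyV : w.valuation L (y * v⁻¹ ^ p - 1) < 1 := by
      have : y * v⁻¹ ^ p - 1 = (y - v ^ p) * v⁻¹ ^ p := by
        rw [sub_mul, ← mul_pow, mul_inv_cancel₀ hv0, one_pow]
      rw [this, map_mul, map_pow, map_inv₀, hv, inv_one, one_pow, mul_one]
      exact hyw
    have hSy : Sp p z w y := ⟨v⁻¹, by rw [hw, one_pow]; exact hyV⟩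
    refine Sp.descent w P (stab_trivial w P hp hz hX hfaith hSy) hp0 hz hz1 ?_
    rw [← hZ]
    have hw' := hvZ w P hP hw
    have hu' : P.valuation M u = 1 := by rw [hu]; exact (val_eq_one_iff w P _).2 hv
    have hup : P.valuation M (u ^ p - 1) = 1 := by
      rw [hu, ← map_one (algebraMap L M), ← (algebraMap L M).map_pow, ← (algebraMap L M).map_sub]
      exact (val_eq_one_iff w P _).2 hv1
    obtain ⟨k, hk⟩ := close' hp hzM (w := P) (X := X * u⁻¹) (by
      rw [hw', one_pow, mul_pow, hX, hu, ← map_one (P.valuation M), ← map_one (algebraMap L M),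
        ← map_inv₀, ← (algebraMap L M).map_pow, ← (algebraMap L M).map_mul, ← (algebraMap L M).map_sub,
        val_lt_iff w P, map_one (w.valuation L)]
      exact hyV)
    obtain ⟨κ', hκ', hform⟩ := hconj k
    have hk' : P.valuation M (Z ^ k * X - u) < 1 := by
      have : Z ^ k * X - u = (Z ^ k * (X * u⁻¹) - 1) * u := by field_simp
      rw [this, map_mul, hu', mul_one]
      rwa [hw', one_pow] at hk
    have hjk : ∀ j, P.valuation M (Z ^ j * (Z ^ k * X) - Z ^ j * u) < 1 := fun j => by
      rw [← mul_sub, map_mul, val_root hp hzM, one_mul]; exact hk'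
    have hfac : ∀ j < p, P.valuation M (Z ^ j * u - 1) = 1 := by
      have hle : ∀ j, P.valuation M (Z ^ j * u - 1) ≤ 1 := fun j =>
        (Valuation.map_sub _ _ _).trans (by simp [val_root hp hzM, hu'])
      intro j hj
      refine le_antisymm (hle j) ?_
      have h1 := prod_shift hp hodd hzM u 1
      rw [one_pow] at h1
      rw [← hup, ← h1, ← Finset.mul_prod_erase _ _ (Finset.mem_range.2 hj), map_mul, map_prod]
      exact mul_le_of_le_one_right' (Finset.prod_le_one' fun i _ => hle i)
    have k1 : Sp p Z P (G p Z 1 (Z ^ k * X) / G p Z 1 u) := by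
      refine Sp_G_congr hp hzM fun j hj1 hj => ?_
      rw [hw', one_pow, mul_one, hfac j hj, sub_sub_sub_cancel_right]
      exact hjk j
    have k2 : Sp p Z P (G p Z u (Z ^ k * X) / G p Z u u) := by
      refine Sp_G_congr hp hzM fun j hj1 hj => ?_
      have h1 := val_root_sub hp hzM P hj hp.pos (by omega)
      rw [hw', pow_zero] at h1
      rw [hw', one_pow, mul_one, sub_sub_sub_cancel_right]
      refine (hjk j).trans_le ?_
      have : Z ^ j * u - u = (Z ^ j - 1) * u := by ring
      rw [this, map_mul, hu', mul_one]
      exact h1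
    have hgu := G_scale (z := Z) hodd hzM 1 1 u
    rw [mul_one] at hgu
    have hGu : G p Z 1 u ≠ 0 := by
      refine hG0 _ _ ?_
      intro h; rw [one_pow] at h; rw [h] at hup; simp at hup
    have hGuu : G p Z u u ≠ 0 := by
      rw [hgu]
      exact mul_ne_zero (pow_ne_zero _ (pow_ne_zero _ hu0)) hg1
    have hmapG : algebraMap L M (G p z 1 v) = G p Z 1 u := by
      rw [map_G, ← hZ, ← hu, map_one]
    have hmapg : algebraMap L M (G p z 1 1) = G p Z 1 1 := by
      rw [map_G, ← hZ, map_one]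
    rw [map_div₀, map_pow, map_div₀, hmapG, hmapg, hform]
    have e : (G p Z 1 (Z ^ k * X) / G p Z 1 1) ^ m * (G p Z u (Z ^ k * X) / G p Z 1 1) * κ' ^ p /
        (G p Z 1 u / G p Z 1 1) ^ m = ((G p Z 1 (Z ^ k * X) / G p Z 1 u) ^ m *
          (G p Z u (Z ^ k * X) / G p Z u u)) * (κ' * u ^ ((p - 1) / 2)) ^ p := by
      rw [mul_pow κ']
      generalize (u ^ ((p - 1) / 2)) ^ p = T at *
      rw [hgu] at hGuu ⊢
      have hT : T ≠ 0 := left_ne_zero_of_mul hGuu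
      simp only [div_pow]
      field_simp
    rw [e]
    have k3 := k1.zpow hp0 hzM hZ1 m
    rw [zpow_natCast] at k3
    exact (k3.mul hp0 hzM k2).pow_mul (mul_ne_zero hκ' (pow_ne_zero _ hu0))

end ClRank

/-! ### A totally ramified place -/

namespace ClRank
set_option linter.unusedSectionVars false
set_option linter.unusedVariables false

open scoped nonZeroDivisors Pointwise WithZero
open IsDedekindDomain HeightOneSpectrum

/-- A place at which the equation for `y` is Eisenstein-like is totally ramified; this gives both the
degree and a prime divisor of the discriminant. -/
lemma degree_discr {K L : Type*} [Field K] [Field L] [NumberField K] [NumberField L] [Algebra K L]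
    {p m : ℕ} (hp : p.Prime) (hm : 1 ≤ m) (hmp : m + 1 < p) (hL : Module.finrank K L ≤ m + 1)
    {y : 𝓞 L} {a v : K} (hf : ((y : L) - 1) ^ m * ((y : L) - algebraMap K L v ^ p) = algebraMap K L a ^ p * y)
    (r : HeightOneSpectrum (𝓞 K)) (ha : r.valuation K a = WithZero.exp (-1 : ℤ))
    (hV : r.valuation K (v ^ p - 1) ≤ r.valuation K a ^ p) {q : ℕ} (hq : q.Prime) (hqr : (q : 𝓞 K) ∈ r.asIdeal) :
    Module.finrank K L = m + 1 ∧ (q : ℤ) ∣ discr L := by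
  obtain ⟨w, hw⟩ := exists_over L r
  have hp0 := hp.ne_zero
  set e := w.asIdeal.ramificationIdx (𝓞 K) with he
  have hval : ∀ x : K, r.valuation K x ^ e = w.valuation L (algebraMap K L x) := by
    intro x
    rw [he, ← Ideal.ramificationIdx'_eq_ramificationIdx r.asIdeal w.asIdeal r.ne_bot]
    exact valuation_liesOver L r w x
  have he0 : 0 < e := ram_pos w r
  have hein := ram_mul_inertia_le w r
  have hin0 : 0 < w.asIdeal.inertiaDeg (𝓞 K) := Ideal.inertiaDeg_pos _ _
  have hele : e ≤ Module.finrank K L := (Nat.le_mul_of_pos_right _ hin0).trans hein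
  -- `A` is the value of `a ^ p`
  obtain ⟨A, hA⟩ : ∃ A, A = w.valuation L (algebraMap K L a ^ p) := ⟨_, rfl⟩
  have hAe : A = WithZero.exp (-1 : ℤ) ^ (e * p) := by
    rw [hA, map_pow, ← hval, ha, pow_mul]
  have hexp1 : (WithZero.exp (-1 : ℤ)) < 1 := by
    rw [← WithZero.exp_zero, WithZero.exp_lt_exp]; norm_num
  have hA1 : A < 1 := by
    rw [hAe]; exact pow_lt_one₀ zero_le hexp1 (Nat.mul_ne_zero he0.ne' hp0)
  have hA0 : A ≠ 0 := by rw [hAe]; exact pow_ne_zero _ WithZero.exp_ne_zero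
  have hVA : w.valuation L (algebraMap K L v ^ p - 1) ≤ A := by
    have := hval (v ^ p - 1)
    rw [(algebraMap K L).map_sub, map_one, (algebraMap K L).map_pow] at this
    rw [← this, hA, map_pow, ← hval, ← pow_mul, mul_comm e p, pow_mul]
    exact pow_le_pow_left₀ zero_le hV _
  have hy1 : w.valuation L (y : L) ≤ 1 := w.valuation_le_one y
  obtain ⟨x, hx⟩ : ∃ x : L, x = (y : L) - 1 := ⟨_, rfl⟩
  have hyV : (y : L) - algebraMap K L v ^ p = x - (algebraMap K L v ^ p - 1) := by rw [hx]; ring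
  rw [hyV, ← hx] at hf
  obtain ⟨U, hU⟩ : ∃ U : L, U = algebraMap K L v ^ p - 1 := ⟨_, rfl⟩
  rw [← hU] at hf hVA
  have hfv : w.valuation L x ^ m * w.valuation L (x - U) = A * w.valuation L (y : L) := by
    rw [hA, ← map_pow, ← map_mul, ← map_mul, hf]
  have hx1 : w.valuation L x < 1 := by
    by_contra h
    have h1 : 1 ≤ w.valuation L x := not_lt.1 h
    have h2 : w.valuation L (x - U) = w.valuation L x := Valuation.map_sub_eq_of_lt_left _
      ((hVA.trans_lt hA1).trans_le h1)
    rw [h2, ← pow_succ] at hfv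
    have : A * w.valuation L (y : L) < 1 := lt_of_le_of_lt (mul_le_of_le_one_right' hy1) hA1
    rw [← hfv] at this
    exact absurd this (not_lt.2 (one_le_pow_of_one_le' h1 _))
  have hy : w.valuation L (y : L) = 1 := val_eq_of_close w (y := (1 : L)) (by rw [← hx]; exact hx1) (map_one _)
  rw [hy, mul_one] at hfv
  have hxA : A < w.valuation L x := by
    by_contra h
    have h := not_lt.1 h
    have h2 : w.valuation L (x - U) ≤ A := (Valuation.map_sub _ _ _).trans (max_le h hVA)
    have h3 : w.valuation L x ^ m < 1 := pow_lt_one₀ zero_le hx1 (by omega)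
    have h4 : w.valuation L x ^ m * w.valuation L (x - U) < A := by
      calc _ ≤ w.valuation L x ^ m * A := mul_le_mul_right h2 _
        _ < 1 * A := mul_lt_mul_of_pos_right h3 (zero_lt_iff.2 hA0)
        _ = A := one_mul _
    exact absurd hfv h4.ne
  rw [Valuation.map_sub_eq_of_lt_left _ (hVA.trans_lt hxA), ← pow_succ, hAe] at hfv
  have hlog := congrArg WithZero.log hfv
  rw [WithZero.log_pow, WithZero.log_pow, WithZero.log_exp] at hlog
  have hdvd : m + 1 ∣ e * p := by
    have : ((m + 1 : ℕ) : ℤ) ∣ ((e * p : ℕ) : ℤ) := by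
      refine ⟨- WithZero.log (w.valuation L x), ?_⟩
      rw [nsmul_eq_mul, nsmul_eq_mul] at hlog
      linarith
    exact_mod_cast this
  have hcop : Nat.Coprime (m + 1) p :=
    (hp.coprime_iff_not_dvd.2 (Nat.not_dvd_of_pos_of_lt (by omega) hmp)).symm
  have hde := Nat.le_of_dvd he0 (hcop.dvd_of_dvd_mul_right hdvd)
  refine ⟨by omega, ?_⟩
  by_contra hnd
  rw [NumberField.not_dvd_discr_iff_forall_mem L (𝓞 L) (Nat.prime_iff_prime_int.1 hq)] at hnd
  have hqw : ((q : ℤ) : 𝓞 L) ∈ w.asIdeal := by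
    have : (q : 𝓞 K) ∈ w.asIdeal.comap (algebraMap (𝓞 K) (𝓞 L)) := by
      have h := hw.over; rw [Ideal.under] at h; rw [← h]; exact hqr
    simpa using this
  have hun := hnd w.asIdeal w.isPrime hqw
  have h1 := Ideal.ramificationIdx_eq_one w.asIdeal ℤ
  have h2 := Ideal.ramificationIdx_tower (R := ℤ) r.asIdeal w.asIdeal
  rw [h1, ← he] at h2
  have := Nat.eq_one_of_mul_eq_one_left h2.symm
  omega

end ClRank

/-! ### Independence modulo `p`-th powers -/

namespace ClRank
set_option linter.unusedSectionVars false
set_option linter.unusedVariables false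

open scoped nonZeroDivisors Pointwise WithZero
open IsDedekindDomain HeightOneSpectrum

section
variable {F : Type*} [Field F] [NumberField F]

lemma Sp.zpow_dvd {p : ℕ} {z : F} (hz1 : z ≠ 1) {w : HeightOneSpectrum (𝓞 F)}
    {x : F} (hx : x ≠ 0) {k : ℤ} (hk : (p : ℤ) ∣ k) : Sp p z w (x ^ k) := by
  obtain ⟨c, rfl⟩ := hk
  rw [mul_comm, zpow_mul, zpow_natCast, ← one_mul ((x ^ c) ^ p)]
  exact (Sp.one hz1).pow_mul (zpow_ne_zero _ hx)

lemma Sp.of_mul_left {p : ℕ} (hp : p ≠ 0) {z : F} (hz : IsPrimitiveRoot z p) {w : HeightOneSpectrum (𝓞 F)}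
    {x y : F} (hx : x ≠ 0) (h : Sp p z w x) (hxy : Sp p z w (x * y)) : Sp p z w y := by
  have := (h.inv hp hz).mul hp hz hxy
  rwa [inv_mul_cancel_left₀ hx] at this

lemma isCoprime_of_not_dvd {p : ℕ} (hp : p.Prime) {k : ℤ} (h : ¬ (p : ℤ) ∣ k) : IsCoprime k (p : ℤ) :=
  (((Nat.prime_iff_prime_int.1 hp).coprime_iff_not_dvd).2 h).symm

/-- Independence modulo `p`-th powers, tested at three places in turn. -/
lemma indep {p m : ℕ} (hp : p.Prime) (hm : ¬ p ∣ m) {z : F} (hz : IsPrimitiveRoot z p)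
    {y u α V g : F} (hy0 : y ≠ 0) (hu0 : u ≠ 0) (hα0 : α ≠ 0) (hV0 : V ≠ 0) (hg0 : g ≠ 0)
    {w1 w2 w3 : HeightOneSpectrum (𝓞 F)}
    (hy1 : Sp p z w1 y) (hu1 : Sp p z w1 (u * V ^ m)) (hα1 : Sp p z w1 (α / g ^ m)) (hg1 : Sp p z w1 g)
    (hV1 : ¬ Sp p z w1 V)
    (hy2 : Sp p z w2 y) (hα2 : Sp p z w2 (α / g ^ m)) (hg2 : ¬ Sp p z w2 g)
    (hy3 : ¬ Sp p z w3 y) {i j k : ℤ} {β : F} (h : y ^ i * u ^ j * α ^ k = β ^ p) :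
    (p : ℤ) ∣ i ∧ (p : ℤ) ∣ j ∧ (p : ℤ) ∣ k := by
  have hp0 := hp.ne_zero
  have hz1 := hz.ne_one hp.one_lt
  have hyi := zpow_ne_zero i hy0
  have huj := zpow_ne_zero j hu0
  have hαk := zpow_ne_zero k hα0
  have hβ : β ≠ 0 := by
    rintro rfl
    rw [zero_pow hp0] at h
    exact mul_ne_zero (mul_ne_zero hyi huj) hαk h
  have hSβ : ∀ w, Sp p z w (y ^ i * (u ^ j * α ^ k)) := by
    intro w
    rw [← mul_assoc, h, ← one_mul (β ^ p)]
    exact (Sp.one hz1).pow_mul hβ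
  have hgm := pow_ne_zero m hg0
  have hVm := pow_ne_zero m hV0
  have hj : (p : ℤ) ∣ j := by
    by_contra hj
    have h1 : Sp p z w1 α := by
      have := hα1.mul hp0 hz (hg1.zpow hp0 hz hz1 m)
      rwa [zpow_natCast, div_mul_cancel₀ _ hgm] at this
    have h2 := Sp.of_mul_left hp0 hz hyi (hy1.zpow hp0 hz hz1 i) (hSβ w1)
    rw [mul_comm] at h2
    have h3 := Sp.of_mul_left hp0 hz hαk (h1.zpow hp0 hz hz1 k) h2
    have h4 := Sp.of_zpow hp0 hz hz1 hu0 (isCoprime_of_not_dvd hp hj) h3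
    have h5 := Sp.of_mul_left hp0 hz hu0 h4 hu1
    rw [← zpow_natCast] at h5
    exact hV1 (Sp.of_zpow hp0 hz hz1 hV0 (isCoprime_of_not_dvd hp (by exact_mod_cast hm)) h5)
  have hk : (p : ℤ) ∣ k := by
    by_contra hk
    have h2 := Sp.of_mul_left hp0 hz hyi (hy2.zpow hp0 hz hz1 i) (hSβ w2)
    have h3 := Sp.of_mul_left hp0 hz huj (Sp.zpow_dvd hz1 hu0 hj) h2
    have h4 := Sp.of_zpow hp0 hz hz1 hα0 (isCoprime_of_not_dvd hp hk) h3
    have h5 : Sp p z w2 (g ^ m) := by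
      have := (hα2.inv hp0 hz).mul hp0 hz h4
      rwa [inv_div, div_mul_cancel₀ _ hα0] at this
    rw [← zpow_natCast] at h5
    exact hg2 (Sp.of_zpow hp0 hz hz1 hg0 (isCoprime_of_not_dvd hp (by exact_mod_cast hm)) h5)
  refine ⟨?_, hj, hk⟩
  by_contra hi
  have h2 := hSβ w3
  rw [mul_comm] at h2
  have h3 := Sp.of_mul_left hp0 hz (mul_ne_zero huj hαk)
    ((Sp.zpow_dvd hz1 hu0 hj).mul hp0 hz (Sp.zpow_dvd hz1 hα0 hk)) h2
  exact hy3 (Sp.of_zpow hp0 hz hz1 hy0 (isCoprime_of_not_dvd hp hi) h3)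

/-- Local behaviour at a place where `y` vanishes. -/
lemma Sp_at_zero {p m : ℕ} (hp : p.Prime) {z : F} (hz : IsPrimitiveRoot z p) {y a v : F} (hv0 : v ≠ 0)
    (hf : (y - 1) ^ m * (y - v ^ p) = a ^ p * y) (w : HeightOneSpectrum (𝓞 F))
    (hw : w.valuation F (z - 1) = 1) (hy : w.valuation F y < 1)
    (hE : w.valuation F (1 - (-1) ^ m * a ^ p) = 1) (hS : Sp p z w y) : Sp p z w (1 - (-1) ^ m * a ^ p) := by
  have hp0 := hp.ne_zero
  have hz1 := hz.ne_one hp.one_lt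
  obtain ⟨E, hEd⟩ : ∃ E : F, E = 1 - (-1) ^ m * a ^ p := ⟨_, rfl⟩
  rw [← hEd] at hE ⊢
  obtain ⟨c, hc⟩ : ∃ c : F, c = (1 - y) ^ m := ⟨_, rfl⟩
  have h1 : ((-1) ^ m : F) * (-1) ^ m = 1 := by rw [← mul_pow]; norm_num
  have hf1 : y * (c - (-1) ^ m * a ^ p) = c * v ^ p := by
    have : (y - 1) ^ m = (-1) ^ m * c := by rw [hc, ← mul_pow]; congr 1; ring
    rw [this] at hf
    linear_combination (-1) ^ m * hf + (- c * (y - v ^ p)) * h1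
  have hc1 : w.valuation F (1 - c) < 1 := by
    have : 1 - c = y * ∑ i ∈ Finset.range m, (1 - y) ^ i := by
      have := mul_neg_geom_sum (1 - y) m
      rw [sub_sub_cancel] at this
      rw [this, hc]
    rw [this, map_mul]
    refine lt_of_le_of_lt (mul_le_of_le_one_right' (Valuation.map_sum_le _ fun i _ => ?_)) hy
    rw [map_pow]
    exact pow_le_one' ((Valuation.map_sub _ _ _).trans (max_le (map_one _).le hy.le)) _
  have hcv : w.valuation F c = 1 := val_eq_of_close w (by rwa [Valuation.map_sub_swap]) (map_one _)
  have hc0 : c ≠ 0 := by rintro rfl; simp at hcv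
  have hE0 : E ≠ 0 := by rintro rfl; simp at hE
  have hD : c - (-1) ^ m * a ^ p = E - (1 - c) := by rw [hEd]; ring
  rw [hD] at hf1
  have hDv : w.valuation F (E - (1 - c)) = 1 := val_eq_of_close w (by rwa [sub_sub_cancel_left, Valuation.map_neg]) hE
  have hD0 : E - (1 - c) ≠ 0 := by intro h; rw [h, map_zero] at hDv; exact zero_ne_one hDv
  have h2 : Sp p z w (c / (E - (1 - c))) := by
    have := hS.pow_mul (inv_ne_zero hv0)
    have h3 : y * v⁻¹ ^ p = c / (E - (1 - c)) := by
      rw [inv_pow, eq_div_iff hD0, mul_right_comm, hf1, mul_assoc, mul_inv_cancel₀ (pow_ne_zero _ hv0), mul_one]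
    rwa [h3] at this
  have h3 := h2.inv hp0 hz
  rw [inv_div] at h3
  refine h3.congr_unit hp0 hz hz1 hw (by rw [map_div₀, hcv, hDv, div_one]) ?_
  have : E - (E - (1 - c)) / c = (1 - c) * (1 - E) / c := by
    rw [eq_div_iff hc0, sub_mul, div_mul_cancel₀ _ hc0]; ring
  rw [this, map_div₀, hcv, div_one, map_mul]
  exact lt_of_le_of_lt (mul_le_of_le_one_right' ((Valuation.map_sub _ _ _).trans (max_le (map_one _).le hE.le))) hc1

/-- Local behaviour at a place where `y ≡ v ^ p`. -/
lemma Sp_at_v {p m : ℕ} (hp : p.Prime) {z : F} (hz : IsPrimitiveRoot z p) {y a v : F} (hy0 : y ≠ 0) (ha0 : a ≠ 0)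
    (hf : (y - 1) ^ m * (y - v ^ p) = a ^ p * y) (w : HeightOneSpectrum (𝓞 F))
    (hw : w.valuation F (z - 1) = 1) (hv : w.valuation F v = 1) (hV : w.valuation F (v ^ p - 1) = 1)
    (hy : w.valuation F (y - v ^ p) < 1) : Sp p z w y ∧ Sp p z w ((y - v ^ p) * (v ^ p - 1) ^ m) := by
  have hp0 := hp.ne_zero
  have hz1 := hz.ne_one hp.one_lt
  have hv0 : v ≠ 0 := by rintro rfl; simp at hv
  have hVp : Sp p z w (v ^ p) := by
    rw [← one_mul (v ^ p)]; exact (Sp.one hz1).pow_mul hv0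
  have hS : Sp p z w y := hVp.congr_unit hp0 hz hz1 hw (by rw [map_pow, hv, one_pow]) hy
  refine ⟨hS, ?_⟩
  have h1 : Sp p z w ((y - v ^ p) * (y - 1) ^ m) := by
    rw [mul_comm, hf, mul_comm]
    exact hS.pow_mul ha0
  have hd : w.valuation F ((y - 1) - (v ^ p - 1)) < 1 := by rwa [sub_sub_sub_cancel_right]
  have hy1 : w.valuation F (y - 1) = 1 := val_eq_of_close w hd hV
  have hy10 : y - 1 ≠ 0 := by intro h; rw [h, map_zero] at hy1; exact zero_ne_one hy1
  have h2 : Sp p z w ((v ^ p - 1) / (y - 1)) := by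
    refine (Sp.one hz1).congr_unit hp0 hz hz1 hw (map_one _) ?_
    rw [div_sub_one hy10, map_div₀, hy1, div_one, Valuation.map_sub_swap]
    exact hd
  have := h1.mul hp0 hz (h2.zpow hp0 hz hz1 m)
  rw [zpow_natCast, div_pow] at this
  rwa [mul_assoc, mul_div_cancel₀ _ (pow_ne_zero _ hy10)] at this
end

end ClRank

/-! ### Class rank from local conditions -/

namespace ClRank
set_option linter.unusedSectionVars false
set_option linter.unusedVariables false

open scoped nonZeroDivisors Pointwise WithZero
open IsDedekindDomain HeightOneSpectrum Polynomial

/-- The polynomial `(Y - 1)^m (Y - V) - A Y`. -/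
noncomputable def fpoly {R : Type*} [CommRing R] (m : ℕ) (V A : R) : R[X] :=
  (X - C 1) ^ m * (X - C V) - C A * X

lemma fpoly_monic {R : Type*} [CommRing R] [Nontrivial R] {m : ℕ} (hm : 1 ≤ m) (V A : R) :
    (fpoly m V A).Monic ∧ (fpoly m V A).natDegree = m + 1 := by
  have h1 : ((X - C 1 : R[X]) ^ m * (X - C V)).Monic := ((monic_X_sub_C 1).pow m).mul (monic_X_sub_C V)
  have h2 : ((X - C 1 : R[X]) ^ m * (X - C V)).natDegree = m + 1 := by
    rw [((monic_X_sub_C 1).pow m).natDegree_mul (monic_X_sub_C V), (monic_X_sub_C 1).natDegree_pow, natDegree_X_sub_C,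
      natDegree_X_sub_C, mul_one]
  have h3 : (C A * X : R[X]).degree < ((X - C 1 : R[X]) ^ m * (X - C V)).degree := by
    rw [degree_eq_natDegree h1.ne_zero, h2]
    refine (degree_C_mul_X_le A).trans_lt ?_
    exact_mod_cast (by omega : 1 < m + 1)
  refine ⟨h1.sub_of_left h3, ?_⟩
  rw [fpoly, natDegree_sub_eq_left_of_natDegree_lt, h2]
  rw [h2]
  exact (natDegree_C_mul_le A X).trans_lt (natDegree_X_le.trans_lt (by omega))

lemma aeval_fpoly {R S : Type*} [CommRing R] [CommRing S] [Algebra R S] (m : ℕ) (V A : R) (y : S) :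
    aeval y (fpoly m V A) = (y - 1) ^ m * (y - algebraMap R S V) - algebraMap R S A * y := by
  simp [fpoly]

lemma eval_fpoly {R : Type*} [CommRing R] (m : ℕ) (V A : R) (t : R) :
    (fpoly m V A).eval t = (t - 1) ^ m * (t - V) - A * t := by
  simp [fpoly]

lemma minpoly_eq_fpoly {K L : Type*} [Field K] [Field L] [NumberField K] [NumberField L] [Algebra K L] {m : ℕ}
    (hm : 1 ≤ m) (hL : Module.finrank K L = m + 1) {y : 𝓞 L} (hgen : IntermediateField.adjoin K {(y : L)} = ⊤)
    {V A : 𝓞 K} (hy : aeval y (fpoly m V A) = 0) : minpoly (𝓞 K) y = fpoly m V A := by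
  have hxi : IsIntegral (𝓞 K) y := Algebra.IsIntegral.isIntegral y
  have hintK : IsIntegral K (y : L) := Algebra.IsIntegral.isIntegral _
  have h1 : minpoly K (algebraMap (𝓞 L) L y) = (minpoly (𝓞 K) y).map (algebraMap (𝓞 K) K) :=
    minpoly.isIntegrallyClosed_eq_field_fractions K L hxi
  have h2 : (minpoly (𝓞 K) y).natDegree = m + 1 := by
    rw [← (minpoly.monic hxi).natDegree_map (algebraMap (𝓞 K) K), ← h1,
      ← IntermediateField.adjoin.finrank (K := K) (x := algebraMap (𝓞 L) L y) hintK, ← hL]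
    change Module.finrank K (IntermediateField.adjoin K {(y : L)}) = _
    rw [hgen, IntermediateField.finrank_top']
  exact (eq_of_monic_of_dvd_of_natDegree_le (minpoly.monic hxi) (fpoly_monic hm V A).1
    (minpoly.isIntegrallyClosed_dvd hxi hy) (by rw [h2, (fpoly_monic hm V A).2])).symm

section
variable {F : Type*} [Field F] [NumberField F] {p : ℕ}

/-- `G p z 1 v` is a unit where `v ^ p - 1` is. -/
lemma val_G (hp : p.Prime) (hodd : Odd p) {z : F} (hz : IsPrimitiveRoot z p) {w : HeightOneSpectrum (𝓞 F)} {v : F}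
    (hv : w.valuation F v ≤ 1) (hV : w.valuation F (v ^ p - 1) = 1) : w.valuation F (G p z 1 v) = 1 := by
  have hle : ∀ j, w.valuation F (z ^ j * v - 1) ≤ 1 := by
    intro j
    refine (Valuation.map_sub _ _ _).trans (max_le ?_ (map_one _).le)
    rw [map_mul, val_root hp hz, one_mul]; exact hv
  have h1 := prod_shift hp hodd hz v 1
  rw [one_pow] at h1
  have h2 : ∀ j ∈ Finset.range p, w.valuation F (z ^ j * v - 1) = 1 := by
    intro j hj
    refine le_antisymm (hle j) ?_
    rw [← hV, ← h1, ← Finset.mul_prod_erase _ _ hj, map_mul]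
    refine mul_le_of_le_one_right' ?_
    rw [map_prod]
    exact Finset.prod_le_one' fun i _ => hle i
  rw [G, map_prod]
  refine Finset.prod_eq_one fun j hj => ?_
  rw [map_pow, h2 j hj, one_pow]

lemma val_G_one (hp : p.Prime) {z : F} (hz : IsPrimitiveRoot z p) {w : HeightOneSpectrum (𝓞 F)}
    (hw : w.valuation F (z - 1) = 1) : w.valuation F (G p z 1 1) = 1 := by
  rw [G, map_prod]
  refine Finset.prod_eq_one fun j hj => ?_
  rcases eq_or_ne j 0 with rfl | hj0
  · simp
  have h1 := val_root_sub hp hz w (Finset.mem_range.1 hj) hp.pos hj0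
  have h2 : w.valuation F (z ^ j - z ^ 0) ≤ 1 := by
    refine (Valuation.map_sub _ _ _).trans (max_le ?_ ?_) <;> rw [val_root hp hz]
  rw [map_pow, mul_one, ← pow_zero z, le_antisymm h2 (hw ▸ h1), one_pow]
end

/-- Local conditions on the parameters `a`, `v` of the polynomial `(Y - 1)^m (Y - v^p) - a^p Y`.
The integer `n` is divisible by all places over `p` and lies in ideals representing all classes of `K`.
`near` makes the Kummer generators local `p`-th powers at the places dividing `n`, while `far`, `c₁`
and `c₂` make their valuations divisible by `p` elsewhere. The places `r₁`, `r₂`, `r₃`, prime to `n`,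
serve to test the second, third and first Kummer generators for independence. -/
structure LocalData {K : Type*} [Field K] [NumberField K] (p m : ℕ) (z : K) (a v n : 𝓞 K)
    (r₁ r₂ r₃ : HeightOneSpectrum (𝓞 K)) : Prop where
  ha : a ≠ 0
  hv : v ≠ 0
  hn : n ≠ 0
  near : ∀ r : HeightOneSpectrum (𝓞 K), n ∈ r.asIdeal →
    r.valuation K n < r.valuation K (z - 1) ^ (p + 1) ∧
    r.valuation K (((v : K) ^ p - 1) / (n : K) ^ p - 1) < r.valuation K (z - 1) ^ p ∧
    r.valuation K ((v : K) - 1) < r.valuation K (z - 1) ^ (p + 1) ∧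
    r.valuation K a ≤ r.valuation K n ^ (3 * (m + 1))
  far : ∀ r : HeightOneSpectrum (𝓞 K), n ∉ r.asIdeal → r.valuation K (z - 1) = 1
  c₁ : ∀ r : HeightOneSpectrum (𝓞 K), n ∉ r.asIdeal → v ∈ r.asIdeal →
    r.valuation K (1 - (-1) ^ m * (a : K) ^ p) = 1
  c₂ : ∀ r : HeightOneSpectrum (𝓞 K), n ∉ r.asIdeal → a ∈ r.asIdeal →
    r.valuation K ((v : K) ^ p - 1) = 1 ∨ r.valuation K ((v : K) ^ p - 1) ≤ r.valuation K a ^ p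
  cls : ∀ c : ClassGroup (𝓞 K), ∃ I : (Ideal (𝓞 K))⁰, ClassGroup.mk0 I = c ∧ n ∈ (I : Ideal (𝓞 K))
  hr₁ : n ∉ r₁.asIdeal
  hr₂ : n ∉ r₂.asIdeal
  hr₃ : n ∉ r₃.asIdeal
  ha₁ : a ∈ r₁.asIdeal
  ha₂ : a ∈ r₂.asIdeal
  hv₁ : r₁.valuation K v = 1
  hv₂ : r₂.valuation K v = 1
  hV₁ : r₁.valuation K ((v : K) ^ p - 1) = 1
  hV₂ : r₂.valuation K ((v : K) ^ p - 1) = 1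
  hS₁ : ¬ Sp p z r₁ ((v : K) ^ p - 1)
  hG₁ : Sp p z r₁ (G p z 1 (v : K) / G p z 1 1)
  hG₂ : ¬ Sp p z r₂ (G p z 1 (v : K) / G p z 1 1)
  hv₃ : v ∈ r₃.asIdeal
  hS₃ : ¬ Sp p z r₃ (1 - (-1) ^ m * (a : K) ^ p)

lemma coe_algebraMap {K L : Type*} [Field K] [Field L] [Algebra K L] (x : 𝓞 K) :
    ((algebraMap (𝓞 K) (𝓞 L) x : 𝓞 L) : L) = algebraMap K L x := rfl

lemma mem_iff_val {K : Type*} [Field K] [NumberField K] (r : HeightOneSpectrum (𝓞 K)) (x : 𝓞 K) :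
    x ∈ r.asIdeal ↔ r.valuation K (x : K) < 1 := (r.valuation_lt_one_iff_mem x).symm

/-- The class rank of `L = K(y)` for parameters satisfying `LocalData`: `y`, `y - v ^ p` and the element
`α` of `exists_alpha` satisfy the hypotheses of `rank_main`, with `N` the set of places dividing `n`. -/
theorem rank_of_data {K L : Type*} [Field K] [Field L] [NumberField K] [NumberField L] [Algebra K L]
    {p m : ℕ} (hp : p.Prime) (hp3 : 3 ≤ p) (hm : 1 ≤ m) (hmp : m + 1 < p) {z : K} (hz : IsPrimitiveRoot z p)
    {a v n : 𝓞 K} {r₁ r₂ r₃ : HeightOneSpectrum (𝓞 K)} (D : LocalData p m z a v n r₁ r₂ r₃)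
    (hL : Module.finrank K L = m + 1) {y : 𝓞 L} (hgen : IntermediateField.adjoin K {(y : L)} = ⊤)
    (hy : aeval y (fpoly m (v ^ p) (a ^ p)) = 0) :
    3 + nRank p (ClassGroup (𝓞 K)) ≤ nRank p (ClassGroup (𝓞 L)) := by
  have hp0 := hp.ne_zero
  have hodd : Odd p := hp.odd_of_ne_two (by omega)
  have hz1 := hz.ne_one hp.one_lt
  have hinj := (algebraMap K L).injective
  have hzL := hz.map_of_injective hinj
  have hmin := minpoly_eq_fpoly hm hL hgen hy
  obtain ⟨ζ, hζ⟩ : ∃ ζ : L, ζ = algebraMap K L z := ⟨_, rfl⟩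
  rw [← hζ] at hzL
  have hζ1 := hzL.ne_one hp.one_lt
  obtain ⟨Y, hYd⟩ : ∃ Y : L, Y = (y : L) := ⟨_, rfl⟩
  obtain ⟨a', ha'⟩ : ∃ a' : L, a' = algebraMap K L a := ⟨_, rfl⟩
  obtain ⟨v', hv'⟩ : ∃ v' : L, v' = algebraMap K L v := ⟨_, rfl⟩
  obtain ⟨n', hn'⟩ : ∃ n' : L, n' = algebraMap K L n := ⟨_, rfl⟩
  have ha0 : a' ≠ 0 := by
    rw [ha', Ne, FaithfulSMul.algebraMap_eq_zero_iff]; exact RingOfIntegers.coe_ne_zero_iff.2 D.ha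
  have hv0 : v' ≠ 0 := by
    rw [hv', Ne, FaithfulSMul.algebraMap_eq_zero_iff]; exact RingOfIntegers.coe_ne_zero_iff.2 D.hv
  have hn0 : n' ≠ 0 := by
    rw [hn', Ne, FaithfulSMul.algebraMap_eq_zero_iff]; exact RingOfIntegers.coe_ne_zero_iff.2 D.hn
  have hf : (Y - 1) ^ m * (Y - v' ^ p) = a' ^ p * Y := by
    rw [aeval_fpoly, map_pow, map_pow, sub_eq_zero] at hy
    have := congrArg (algebraMap (𝓞 L) L) hy
    rw [map_mul, map_pow, map_sub, map_sub, map_mul, map_pow, map_pow, map_one] at this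
    rw [hYd, ha', hv']; exact this
  have hY0 : Y ≠ 0 := by
    intro h0
    rw [h0, mul_zero, zero_sub, zero_sub] at hf
    exact mul_ne_zero (pow_ne_zero _ (neg_ne_zero.2 one_ne_zero)) (neg_ne_zero.2 (pow_ne_zero _ hv0)) hf
  have hY1 : Y ≠ 1 := by
    intro h0
    rw [h0, sub_self, zero_pow (by omega), zero_mul, mul_one] at hf
    exact pow_ne_zero _ ha0 hf.symm
  have hu0 : Y - v' ^ p ≠ 0 := by
    intro h0
    rw [h0, mul_zero] at hf
    exact mul_ne_zero (pow_ne_zero _ ha0) hY0 hf.symm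
  have hval1 : ∀ (w : HeightOneSpectrum (𝓞 L)) (r : HeightOneSpectrum (𝓞 K)), w.asIdeal.LiesOver r.asIdeal →
      ∀ x : K, (w.valuation L (algebraMap K L x) = 1 ↔ r.valuation K x = 1) := fun w r h x => val_eq_one_iff r w x
  have hvallt : ∀ (w : HeightOneSpectrum (𝓞 L)) (r : HeightOneSpectrum (𝓞 K)), w.asIdeal.LiesOver r.asIdeal →
      ∀ x y : K, (w.valuation L (algebraMap K L x) < w.valuation L (algebraMap K L y) ↔
        r.valuation K x < r.valuation K y) := fun w r h x y => val_lt_iff r w x y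
  have hvallt1 : ∀ (w : HeightOneSpectrum (𝓞 L)) (r : HeightOneSpectrum (𝓞 K)), w.asIdeal.LiesOver r.asIdeal →
      ∀ x : K, (w.valuation L (algebraMap K L x) < 1 ↔ r.valuation K x < 1) := by
    intro w r h x
    have := hvallt w r h x 1
    rwa [map_one, map_one, map_one] at this
  have hvalle : ∀ (w : HeightOneSpectrum (𝓞 L)) (r : HeightOneSpectrum (𝓞 K)), w.asIdeal.LiesOver r.asIdeal →
      ∀ x y : K, (w.valuation L (algebraMap K L x) ≤ w.valuation L (algebraMap K L y) ↔
        r.valuation K x ≤ r.valuation K y) := fun w r h x y => by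
    rw [← not_lt, hvallt w r h, not_lt]
  have hltp : ∀ (w : HeightOneSpectrum (𝓞 L)) (r : HeightOneSpectrum (𝓞 K)), w.asIdeal.LiesOver r.asIdeal →
      ∀ (x y : K) (k : ℕ), (w.valuation L (algebraMap K L x) < w.valuation L (algebraMap K L y) ^ k ↔
        r.valuation K x < r.valuation K y ^ k) := fun w r h x y k => by
    rw [← (w.valuation L).map_pow, ← (algebraMap K L).map_pow, hvallt w r h, (r.valuation K).map_pow]
  have hlep : ∀ (w : HeightOneSpectrum (𝓞 L)) (r : HeightOneSpectrum (𝓞 K)), w.asIdeal.LiesOver r.asIdeal →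
      ∀ (x y : K) (k : ℕ), (w.valuation L (algebraMap K L x) ≤ w.valuation L (algebraMap K L y) ^ k ↔
        r.valuation K x ≤ r.valuation K y ^ k) := fun w r h x y k => by
    rw [← (w.valuation L).map_pow, ← (algebraMap K L).map_pow, hvalle w r h, (r.valuation K).map_pow]
  have hzs : algebraMap K L (z - 1) = ζ - 1 := by rw [hζ, (algebraMap K L).map_sub, map_one]
  have hVs : algebraMap K L ((v : K) ^ p - 1) = v' ^ p - 1 := by
    rw [hv', (algebraMap K L).map_sub, map_one, map_pow]
  have hEs : algebraMap K L (1 - (-1) ^ m * (a : K) ^ p) = 1 - (-1) ^ m * a' ^ p := by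
    rw [ha']; simp
  have hGs : algebraMap K L (G p z 1 (v : K) / G p z 1 1) = G p ζ 1 v' / G p ζ 1 1 := by
    rw [map_div₀, map_G, map_G, map_one, hζ, hv']
  have hzr : ∀ r : HeightOneSpectrum (𝓞 K), n ∉ r.asIdeal → ∀ w : HeightOneSpectrum (𝓞 L),
      w.asIdeal.LiesOver r.asIdeal → w.valuation L (ζ - 1) = 1 := by
    intro r hr w hw
    rw [← hzs, hval1 w r hw]; exact D.far r hr
  have hdown : ∀ r : HeightOneSpectrum (𝓞 K), n ∉ r.asIdeal → ∀ w : HeightOneSpectrum (𝓞 L),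
      w.asIdeal.LiesOver r.asIdeal → ∀ x : K, r.valuation K x = 1 → Sp p ζ w (algebraMap K L x) → Sp p z r x := by
    intro r hr w hw x hx h
    rw [hζ] at h
    exact Sp_down hp hz (by rw [hL]; exact hmp) w r (D.far r hr) hx h
  -- The reductions of the polynomial at `r₃`, `r₁`, `r₂` have the roots `0`, `v ^ p`, `v ^ p`.
  have hroot : ∀ (r : HeightOneSpectrum (𝓞 K)) (t : 𝓞 K), (t - 1) ^ m * (t - v ^ p) - a ^ p * t ∈ r.asIdeal →
      ∃ w : HeightOneSpectrum (𝓞 L), w.asIdeal.LiesOver r.asIdeal ∧ w.valuation L (Y - algebraMap K L t) < 1 := by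
    intro r t ht
    obtain ⟨w, hw, hwt⟩ := exists_place r y t (by rw [hmin, eval_fpoly]; exact ht)
    refine ⟨w, hw, ?_⟩
    rw [mem_iff_val] at hwt
    rw [hYd]; exact hwt
  obtain ⟨w₃, hw₃, hy₃⟩ := hroot r₃ 0 (by
    rw [mul_zero, sub_zero, zero_sub (v ^ p)]
    exact Ideal.mul_mem_left _ _ (neg_mem (Ideal.pow_mem_of_mem _ D.hv₃ _ hp.pos)))
  have hcoe0 : ((0 : 𝓞 K) : K) = 0 := rfl
  rw [hcoe0, map_zero, sub_zero] at hy₃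
  have hrv : ∀ r : HeightOneSpectrum (𝓞 K), a ∈ r.asIdeal → ∃ w : HeightOneSpectrum (𝓞 L),
      w.asIdeal.LiesOver r.asIdeal ∧ w.valuation L (Y - v' ^ p) < 1 := by
    intro r hr
    obtain ⟨w, hw, h⟩ := hroot r (v ^ p) (by
      rw [sub_self, mul_zero, zero_sub]
      exact neg_mem (Ideal.mul_mem_right _ _ (Ideal.pow_mem_of_mem _ hr _ hp.pos)))
    refine ⟨w, hw, ?_⟩
    rw [hv', ← map_pow]
    exact_mod_cast h
  obtain ⟨w₁, hw₁, hy₁⟩ := hrv r₁ D.ha₁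
  obtain ⟨w₂, hw₂, hy₂⟩ := hrv r₂ D.ha₂
  have hE₃ : r₃.valuation K (1 - (-1) ^ m * (a : K) ^ p) = 1 := D.c₁ r₃ D.hr₃ D.hv₃
  have hSy₃ : ¬ Sp p ζ w₃ Y := by
    intro h
    refine D.hS₃ (hdown r₃ D.hr₃ w₃ hw₃ _ hE₃ ?_)
    rw [hEs]
    refine Sp_at_zero hp hzL hv0 hf w₃ (hzr r₃ D.hr₃ w₃ hw₃) hy₃ ?_ h
    rw [← hEs, hval1 w₃ r₃ hw₃]; exact hE₃
  have hpow : ∀ b, b ^ p ≠ Y := by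
    rintro b rfl
    have hb : b ≠ 0 := by rintro rfl; exact hY0 (zero_pow hp0)
    refine hSy₃ ?_
    rw [← one_mul (b ^ p)]
    exact (Sp.one hζ1).pow_mul hb
  obtain ⟨α, hα0, hαU, hαS, hαG⟩ := exists_alpha hp hodd hzL ha0 hv0 hf hY1 hpow
  have hYi : ∀ w : HeightOneSpectrum (𝓞 L), w.valuation L Y ≤ 1 := fun w => by rw [hYd]; exact w.valuation_le_one y
  have hai : ∀ w : HeightOneSpectrum (𝓞 L), w.valuation L a' ≤ 1 := fun w => by
    rw [ha', ← coe_algebraMap]; exact w.valuation_le_one _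
  have hvi : ∀ w : HeightOneSpectrum (𝓞 L), w.valuation L v' ≤ 1 := fun w => by
    rw [hv', ← coe_algebraMap]; exact w.valuation_le_one _
  have hbelow : ∀ w : HeightOneSpectrum (𝓞 L), ∃ r : HeightOneSpectrum (𝓞 K), w.asIdeal.LiesOver r.asIdeal := by
    intro w
    refine ⟨⟨w.asIdeal.under (𝓞 K), inferInstance, ?_⟩, ⟨rfl⟩⟩
    have := w.ne_bot
    exact Ideal.under_ne_bot _ this
  have hmem : ∀ (w : HeightOneSpectrum (𝓞 L)) (r : HeightOneSpectrum (𝓞 K)), w.asIdeal.LiesOver r.asIdeal →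
      ∀ x : 𝓞 K, (x ∈ r.asIdeal ↔ w.valuation L (algebraMap K L x) < 1) := by
    intro w r h x
    rw [hvallt1 w r h, mem_iff_val]
  obtain ⟨N, hN⟩ : ∃ N : Set (HeightOneSpectrum (𝓞 L)), ∀ w, w ∈ N ↔ w.valuation L n' < 1 :=
    ⟨{w | w.valuation L n' < 1}, fun w => Iff.rfl⟩
  have hNr : ∀ (w : HeightOneSpectrum (𝓞 L)) (r : HeightOneSpectrum (𝓞 K)), w.asIdeal.LiesOver r.asIdeal →
      (w ∈ N ↔ n ∈ r.asIdeal) := by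
    intro w r h
    rw [hN, hmem w r h, hn']
  have hnear : ∀ w ∈ N, Sp p ζ w Y ∧ Sp p ζ w (Y - v' ^ p) ∧ Sp p ζ w α := by
    intro w hw
    obtain ⟨r, hr⟩ := hbelow w
    obtain ⟨h1, h2, h3, h4⟩ := D.near r ((hNr w r hr).1 hw)
    have hnK : (n : K) ≠ 0 := RingOfIntegers.coe_ne_zero_iff.2 D.hn
    have h1' : w.valuation L n' < w.valuation L (ζ - 1) ^ (p + 1) := by
      rw [hn', ← hzs, hltp w r hr]; exact h1
    obtain ⟨k1, k2, k3⟩ := near (r := algebraMap K L (((v : K) ^ p - 1) / (n : K) ^ p - 1)) hp hodd hm hzL ha0 hn0 hY0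
      (sub_ne_zero.2 hY1) hf w (hYi w) h1' (by
        rw [(algebraMap K L).map_sub, map_one, add_sub_cancel, map_div₀, hVs, (algebraMap K L).map_pow, ← hn',
          mul_div_cancel₀ _ (pow_ne_zero _ hn0)]) (by
        rw [← hzs, hltp w r hr]; exact h2) (by
        rw [ha', hn', hlep w r hr]; exact h4)
    refine ⟨k1, k2, hαS w ?_ ?_⟩
    · refine k3.trans_lt ?_
      rw [mul_comm, pow_mul]
      exact pow_lt_pow_left₀ h1' zero_le hp0
    · have : v' - 1 = algebraMap K L ((v : K) - 1) := by rw [(algebraMap K L).map_sub, map_one, hv']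
      rw [this, ← hzs, hltp w r hr]; exact h3
  have hfar : ∀ w ∉ N, w.valuation L (ζ - 1) = 1 := by
    intro w hw
    obtain ⟨r, hr⟩ := hbelow w
    exact hzr r (fun h => hw ((hNr w r hr).2 h)) w hr
  have haway : ∀ w ∉ N, Un p w Y ∧ Un p w (Y - v' ^ p) ∧ Un p w α := by
    intro w hw
    obtain ⟨r, hr⟩ := hbelow w
    have hnr : n ∉ r.asIdeal := fun h => hw ((hNr w r hr).2 h)
    obtain ⟨k1, k2, k3⟩ := away hp hm hmp ha0 hv0 hf w (hYi w) (hai w) (hvi w) (by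
        intro h
        rw [← hEs, hval1 w r hr]
        rw [hv', ← hmem w r hr] at h
        exact D.c₁ r hnr h) (by
        intro h
        rw [ha', ← hmem w r hr] at h
        rw [← hVs, hval1 w r hr, ha', hlep w r hr]
        exact D.c₂ r hnr h)
    exact ⟨k1, k3, hαU w (hfar w hw) k1 k2 k3⟩
  have hz₁ := hzr r₁ D.hr₁ w₁ hw₁
  have hz₂ := hzr r₂ D.hr₂ w₂ hw₂
  have hv₁ : w₁.valuation L v' = 1 := by rw [hv', hval1 w₁ r₁ hw₁]; exact D.hv₁
  have hv₂ : w₂.valuation L v' = 1 := by rw [hv', hval1 w₂ r₂ hw₂]; exact D.hv₂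
  have hV₁ : w₁.valuation L (v' ^ p - 1) = 1 := by rw [← hVs, hval1 w₁ r₁ hw₁]; exact D.hV₁
  have hV₂ : w₂.valuation L (v' ^ p - 1) = 1 := by rw [← hVs, hval1 w₂ r₂ hw₂]; exact D.hV₂
  have hV0 : v' ^ p - 1 ≠ 0 := by intro h; rw [h, map_zero] at hV₁; exact zero_ne_one hV₁
  have hGr : ∀ r : HeightOneSpectrum (𝓞 K), n ∉ r.asIdeal → r.valuation K ((v : K) ^ p - 1) = 1 →
      r.valuation K (G p z 1 (v : K) / G p z 1 1) = 1 := by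
    intro r hr h
    rw [map_div₀, val_G hp hodd hz (r.valuation_le_one v) h, val_G_one hp hz (D.far r hr), div_one]
  have hG₂ := hGr r₂ D.hr₂ D.hV₂
  have hg0 : G p ζ 1 v' / G p ζ 1 1 ≠ 0 := by
    rw [← hGs, Ne, FaithfulSMul.algebraMap_eq_zero_iff]
    intro h; rw [h, map_zero] at hG₂; exact zero_ne_one hG₂
  obtain ⟨s₁, t₁⟩ := Sp_at_v hp hzL hY0 ha0 hf w₁ hz₁ hv₁ hV₁ hy₁
  obtain ⟨s₂, -⟩ := Sp_at_v hp hzL hY0 ha0 hf w₂ hz₂ hv₂ hV₂ hy₂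
  have hmdvd : ¬ p ∣ m := Nat.not_dvd_of_pos_of_lt (by omega) (by omega)
  refine rank_main p hp hp3 ζ hzL (by rw [hL]; exact Nat.not_dvd_of_pos_of_lt (by omega) hmp) N hfar ?_
    ![Y, Y - v' ^ p, α] ?_ ?_ ?_ ?_
  · intro c
    obtain ⟨I, rfl, hI⟩ := D.cls c
    rw [ClassGroup.extendedHom_mk0]
    refine mk0_mem _ _ _ fun w hw => Subgroup.subset_closure ⟨w, ?_, rfl⟩
    have h1 : algebraMap (𝓞 K) (𝓞 L) n ∈ w.asIdeal := hw (Ideal.mem_map_of_mem _ hI)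
    rw [mem_iff_val] at h1
    rw [hN, hn']; exact h1
  · intro i; fin_cases i
    exacts [hY0, hu0, hα0]
  · intro i w hw; fin_cases i
    exacts [(hnear w hw).1, (hnear w hw).2.1, (hnear w hw).2.2]
  · intro i w hw; fin_cases i
    exacts [(haway w hw).1, (haway w hw).2.1, (haway w hw).2.2]
  · rintro e ⟨β, hβ⟩
    rw [Fin.prod_univ_three] at hβ
    obtain ⟨d1, d2, d3⟩ := indep (V := v' ^ p - 1) (g := G p ζ 1 v' / G p ζ 1 1) hp hmdvd hzL hY0 hu0 hα0 hV0 hg0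
      s₁ t₁ (hαG w₁ hz₁ hv₁ hV₁ hy₁) (by rw [← hGs, hζ]; exact D.hG₁.map r₁ w₁)
      (fun h => D.hS₁ (hdown r₁ D.hr₁ w₁ hw₁ _ D.hV₁ (by rw [hVs]; exact h)))
      s₂ (hαG w₂ hz₂ hv₂ hV₂ hy₂) (fun h => D.hG₂ (hdown r₂ D.hr₂ w₂ hw₂ _ hG₂ (by rw [hGs]; exact h))) hSy₃ hβ
    intro i; fin_cases i
    exacts [d1, d2, d3]

end ClRank

/-! ### Existence of parameters -/

namespace ClRank
set_option linter.unusedSectionVars false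
set_option linter.unusedVariables false

open scoped nonZeroDivisors Pointwise WithZero
open IsDedekindDomain HeightOneSpectrum Polynomial

/-- There are places of arbitrarily large residue characteristic prime to a given integer `n`. -/
lemma exists_big {K : Type*} [Field K] [NumberField K] {n : 𝓞 K} (hn : n ≠ 0) (B : ℕ) :
    ∃ q : ℕ, q.Prime ∧ B < q ∧ ∃ r : HeightOneSpectrum (𝓞 K), (q : 𝓞 K) ∈ r.asIdeal ∧ n ∉ r.asIdeal ∧
      B < Nat.card (𝓞 K ⧸ r.asIdeal) := by
  have hN : Ideal.absNorm (Ideal.span {n}) ≠ 0 := by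
    rw [Ne, Ideal.absNorm_eq_zero_iff]
    simpa using hn
  obtain ⟨q, hq, hqp⟩ := Nat.exists_infinite_primes (B + Ideal.absNorm (Ideal.span {n}) + 1)
  have hmax : (Ideal.span {(q : ℤ)}).IsMaximal :=
    PrincipalIdealRing.isMaximal_of_irreducible (Nat.prime_iff_prime_int.1 hqp).irreducible
  obtain ⟨Q, hQ, hQl⟩ := Ideal.exists_maximal_ideal_liesOver_of_isIntegral (S := 𝓞 K) (Ideal.span {(q : ℤ)})
  have hqQ : (q : 𝓞 K) ∈ Q := by
    have := (Ideal.mem_of_liesOver Q (Ideal.span {(q : ℤ)}) (q : ℤ)).1 (Ideal.mem_span_singleton_self _)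
    simpa using this
  have hQ0 : Q ≠ ⊥ := by
    rintro rfl
    simp [hqp.ne_zero] at hqQ
  have hdvd : ∀ k : ℕ, (k : 𝓞 K) ∈ Q → q ∣ k := by
    intro k hk
    have := (Ideal.mem_of_liesOver Q (Ideal.span {(q : ℤ)}) (k : ℤ)).2 (by simpa using hk)
    exact_mod_cast Ideal.mem_span_singleton.1 this
  refine ⟨q, hqp, by omega, ⟨Q, hQ.isPrime, hQ0⟩, hqQ, fun hnQ => ?_, ?_⟩
  · have := hdvd _ ((Ideal.span_singleton_le_iff_mem Q).2 hnQ (Ideal.absNorm_mem _))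
    have := Nat.le_of_dvd (Nat.pos_of_ne_zero hN) this
    omega
  · have h1 := hdvd _ (Ideal.absNorm_mem Q)
    have h2 := Nat.le_of_dvd (Nat.pos_of_ne_zero (by rwa [Ne, Ideal.absNorm_eq_zero_iff])) h1
    have h3 : Ideal.absNorm Q = Nat.card (𝓞 K ⧸ Q) := rfl
    change B < Nat.card (𝓞 K ⧸ Q)
    omega

section
variable {F : Type*} [Field F] [NumberField F] {p : ℕ}

/-- At a tame place with large residue field there are `t₁`, `t₂` realizing the two independent local
conditions on `t ^ p - 1` and on the quotient of the values of `G` at `t` and `1`. -/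
lemma exists_t12 (hp : p.Prime) (hp3 : 3 ≤ p) {z : F} (hz : IsPrimitiveRoot z p) (w : HeightOneSpectrum (𝓞 F))
    (hw : w.valuation F (z - 1) = 1) (hbig : p ^ 2 < Nat.card (𝓞 F ⧸ w.asIdeal)) :
    (∃ t : 𝓞 F, w.valuation F t = 1 ∧ w.valuation F ((t : F) ^ p - 1) = 1 ∧ ¬ Sp p z w ((t : F) ^ p - 1) ∧
      Sp p z w (G p z 1 (t : F) / G p z 1 1)) ∧
    (∃ t : 𝓞 F, w.valuation F t = 1 ∧ w.valuation F ((t : F) ^ p - 1) = 1 ∧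
      ¬ Sp p z w (G p z 1 (t : F) / G p z 1 1)) := by
  have hp0 := hp.ne_zero
  have hz1 : z ≠ 1 := hz.ne_one hp.one_lt
  have hodd : Odd p := hp.odd_of_ne_two (by omega)
  have := Fact.mk hp
  obtain ⟨t, ht, htV, htS⟩ := exists_t hp0 hodd hz w hw hbig
  obtain ⟨ζ, rfl⟩ : ∃ ζ : 𝓞 F, (ζ : F) = z := ⟨⟨z, hz.isIntegral hp.pos⟩, rfl⟩
  set z : F := (ζ : F) with hzdef
  have htV' : w.valuation F ((t : F) ^ p - 1) = 1 := by rw [Valuation.map_sub_swap, htV]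
  have htS' : ¬ Sp p z w ((t : F) ^ p - 1) := by
    intro h
    refine htS ?_
    have := h.pow_mul (β := -1) (by simp)
    rwa [hodd.neg_one_pow, mul_neg_one, neg_sub] at this
  let s : ℕ → F := fun k => z ^ k * t
  have hXv : ∀ k, w.valuation F (s k) = 1 := fun k => by simp only [s]; rw [map_mul, ht, mul_one, val_root hp hz]
  have hXp : ∀ k, s k ^ p = (t : F) ^ p := fun k => by simp only [s]; rw [mul_pow, ← pow_mul, mul_comm k, pow_mul, hz.pow_eq_one, one_pow, one_mul]
  have hX1 : ∀ k, s k - 1 ≠ 0 := by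
    intro k hk
    rw [← hXp k, sub_eq_zero.1 hk] at htV'
    simp at htV'
  let g : ℕ → F := fun k => G p z 1 (s k) / G p z 1 1
  have hg : ∀ k, w.valuation F (g k) = 1 := by
    intro k
    simp only [g]
    rw [map_div₀, val_G hp hodd hz (hXv k).le (by rw [hXp, htV']), val_G_one hp hz hw, div_one]
  have hV0 : (t : F) ^ p - 1 ≠ 0 := by intro h; rw [h] at htV'; simp at htV'
  have hstep : ∀ k, g (k + 1) = g k * ((t : F) ^ p - 1)⁻¹ * (s k - 1) ^ p := by
    intro k
    have h := G_shift hp hodd hz (s k) 1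
    have hXs : z * s k = s (k + 1) := by simp only [s]; ring
    rw [hXs, hXp, one_pow] at h
    simp only [g]
    rw [eq_div_of_mul_eq hV0 h]
    field_simp
  have hpow : ∀ k, ∃ c : F, c ≠ 0 ∧ g k = g 0 * ((t : F) ^ p - 1)⁻¹ ^ k * c ^ p := by
    intro k
    induction k with
    | zero => exact ⟨1, one_ne_zero, by simp⟩
    | succ k ih =>
      obtain ⟨c, hc, h⟩ := ih
      exact ⟨c * (s k - 1), mul_ne_zero hc (hX1 k), by rw [hstep, h, mul_pow]; ring⟩
  obtain ⟨k, hk⟩ := Sp_shift hz w hw (hg 0) (B := ((t : F) ^ p - 1)⁻¹) (by rw [map_inv₀, htV', inv_one])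
    (fun h => htS' (by simpa using h.inv hp0 hz))
  obtain ⟨c, hc, hgc⟩ := hpow k
  have hgk : Sp p z w (g k) := by rw [hgc]; exact hk.pow_mul hc
  have hgk1 : ¬ Sp p z w (g (k + 1)) := by
    intro h
    have h1 := (h.pow_mul (inv_ne_zero (hX1 k))).mul hp0 hz (hgk.inv hp0 hz)
    refine htS' ?_
    have h0 : g k ≠ 0 := by intro h; have := hg k; rw [h] at this; simp at this
    have : g (k + 1) * (s k - 1)⁻¹ ^ p * (g k)⁻¹ = ((t : F) ^ p - 1)⁻¹ := by
      rw [hstep, inv_pow]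
      have := pow_ne_zero p (hX1 k)
      field_simp
    rw [this] at h1
    simpa using h1.inv hp0 hz
  have hcoe : ∀ k, ((ζ ^ k * t : 𝓞 F) : F) = s k := fun k => by simp [s, hzdef]
  refine ⟨⟨ζ ^ k * t, ?_, ?_, ?_, ?_⟩, ⟨ζ ^ (k + 1) * t, ?_, ?_, ?_⟩⟩
  · exact (congrArg _ (hcoe k)).trans (hXv k)
  · rw [hcoe, hXp, htV']
  · rw [hcoe, hXp]; exact htS'
  · rw [hcoe]; exact hgk
  · exact (congrArg _ (hcoe (k + 1))).trans (hXv (k + 1))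
  · rw [hcoe, hXp, htV']
  · rw [hcoe]; exact hgk1

end
end ClRank

namespace ClRank
set_option linter.unusedSectionVars false
set_option linter.unusedVariables false

open scoped nonZeroDivisors Pointwise WithZero
open IsDedekindDomain HeightOneSpectrum Polynomial

/-- A nonzero integer `n` divisible by all places over `p` and lying in ideals from every class, together
with `ε` such that `(1 + ε) ^ p - 1` is close to `n ^ p` at all places dividing `n`. -/
lemma exists_base {K : Type*} [Field K] [NumberField K] {p : ℕ} (hp : p.Prime) {z : K} (hz : IsPrimitiveRoot z p) :
    ∃ n ε : 𝓞 K, n ≠ 0 ∧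
      (∀ r : HeightOneSpectrum (𝓞 K), n ∈ r.asIdeal → r.valuation K n < r.valuation K (z - 1) ^ (p + 1)) ∧
      (∀ r : HeightOneSpectrum (𝓞 K), n ∈ r.asIdeal → ∀ u : 𝓞 K,
        r.valuation K ((u - (1 + ε) : 𝓞 K) : K) ≤ r.valuation K n ^ (p + 1) →
          r.valuation K (((u : K) ^ p - 1) / (n : K) ^ p - 1) < r.valuation K (z - 1) ^ p ∧
          r.valuation K ((u : K) - 1) < r.valuation K (z - 1) ^ (p + 1)) ∧
      (∀ r : HeightOneSpectrum (𝓞 K), n ∉ r.asIdeal → r.valuation K (z - 1) = 1) ∧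
      (∀ c : ClassGroup (𝓞 K), ∃ I : (Ideal (𝓞 K))⁰, ClassGroup.mk0 I = c ∧ n ∈ (I : Ideal (𝓞 K))) := by
  classical
  have hz1 : z ≠ 1 := hz.ne_one hp.one_lt
  obtain ⟨ζ, rfl⟩ : ∃ ζ : 𝓞 K, (ζ : K) = z := ⟨⟨z, hz.isIntegral hp.pos⟩, rfl⟩
  obtain ⟨π, hπdef⟩ : ∃ x₁ : 𝓞 K, x₁ = ζ - 1 := ⟨_, rfl⟩
  have hπK : ((π : 𝓞 K) : K) = (ζ : K) - 1 := by simp [hπdef]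
  have hπ0 : π ≠ 0 := by
    intro h
    rw [h] at hπK
    exact sub_ne_zero.2 hz1 (by rw [← hπK]; simp)
  rw [← hπK]
  have hI : ∀ c : ClassGroup (𝓞 K), ∃ I : (Ideal (𝓞 K))⁰, ClassGroup.mk0 I = c ∧
      ∃ x : 𝓞 K, x ≠ 0 ∧ x ∈ (I : Ideal (𝓞 K)) := by
    intro c
    obtain ⟨I, hI⟩ := ClassGroup.mk0_surjective c
    obtain ⟨x, hx, hx0⟩ := Submodule.exists_mem_ne_zero_of_ne_bot (nonZeroDivisors.coe_ne_zero I)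
    exact ⟨I, hI, x, hx0, hx⟩
  choose I hIc x hx0 hxI using hI
  obtain ⟨n₀, hn₀⟩ : ∃ x₁ : 𝓞 K, x₁ = ∏ c, x c := ⟨_, rfl⟩
  have hn₀0 : n₀ ≠ 0 := hn₀ ▸ Finset.prod_ne_zero_iff.2 fun c _ => hx0 c
  have hp0 : (p : 𝓞 K) ≠ 0 := by exact_mod_cast hp.ne_zero
  obtain ⟨n₁, hn₁⟩ : ∃ x₁ : 𝓞 K, x₁ = p * π ^ (p + 2) * n₀ := ⟨_, rfl⟩
  obtain ⟨n, hn⟩ : ∃ x₁ : 𝓞 K, x₁ = p * n₁ := ⟨_, rfl⟩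
  have hn₁0 : n₁ ≠ 0 := hn₁ ▸ mul_ne_zero (mul_ne_zero hp0 (pow_ne_zero _ hπ0)) hn₀0
  have hn0 : n ≠ 0 := hn ▸ mul_ne_zero hp0 hn₁0
  have hle : ∀ (r : HeightOneSpectrum (𝓞 K)) (a b : 𝓞 K), a ∣ b → r.valuation K b ≤ r.valuation K a := by
    rintro r a _ ⟨b, rfl⟩
    rw [show ((a * b : 𝓞 K) : K) = (a : K) * b by simp, map_mul]
    exact mul_le_of_le_one_right' (r.valuation_le_one b)
  have hnn₁ : ∀ r : HeightOneSpectrum (𝓞 K), r.valuation K n ≤ r.valuation K n₁ := fun r =>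
    hle r _ _ (hn ▸ Dvd.intro_left _ rfl)
  have hv₁ : ∀ r : HeightOneSpectrum (𝓞 K), n ∈ r.asIdeal → r.valuation K n₁ < r.valuation K π ^ (p + 1) := by
    intro r hr
    rcases (r.valuation_le_one (K := K) π).lt_or_eq with h | h
    · calc r.valuation K n₁ ≤ r.valuation K ((π ^ (p + 2) : 𝓞 K) : K) := hle r _ _ ⟨p * n₀, by rw [hn₁]; ring⟩
        _ = r.valuation K π ^ (p + 2) := by simp
        _ < r.valuation K π ^ (p + 1) := by
          rw [pow_succ _ (p + 1)]
          refine mul_lt_of_lt_one_right ?_ h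
          exact pow_pos ((Valuation.pos_iff _).2 (by simpa using hπ0)) _
    · change r.valuation K (π : K) = 1 at h
      rw [h, one_pow, ← mem_iff_val]
      rcases r.isPrime.mem_or_mem (hn ▸ hr) with h | h
      · rw [hn₁, mul_assoc]; exact Ideal.mul_mem_right _ _ h
      · exact h
  have hπle : ∀ r : HeightOneSpectrum (𝓞 K), r.valuation K π ^ (p + 1) ≤ r.valuation K π ^ p := fun r =>
    pow_le_pow_right_of_le_one' (r.valuation_le_one π) (Nat.le_succ p)
  obtain ⟨q, rfl⟩ : ∃ q, p = q + 2 := ⟨p - 2, by have := hp.two_le; omega⟩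
  obtain ⟨ε, hε⟩ : ∃ x₁ : 𝓞 K, x₁ = (q + 2 : ℕ) ^ (q + 1) * n₁ ^ (q + 2) := ⟨_, rfl⟩
  refine ⟨n, ε, hn0, fun r hr => (hnn₁ r).trans_lt (hv₁ r hr), fun r hr u hu => ?_, fun r hr => ?_, fun c => ?_⟩
  · obtain ⟨η, hη⟩ : ∃ η, η = u - (1 + ε) := ⟨_, rfl⟩
    obtain rfl : u = 1 + (ε + η) := by rw [hη]; ring
    rw [← hη] at hu
    have hvn0 : r.valuation K n ≠ 0 := by simpa using hn0
    have hη1 : r.valuation K η ≤ r.valuation K n ^ (q + 2) * r.valuation K n₁ := by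
      refine hu.trans ?_
      rw [pow_succ]
      exact mul_le_mul_right (hnn₁ r) _
    have hη2 : r.valuation K η ≤ r.valuation K n₁ := hη1.trans
      (mul_le_of_le_one_left' (pow_le_one' (r.valuation_le_one n) _))
    obtain ⟨k, hk⟩ := Polynomial.powAddExpansion 1 (ε + η) (q + 2)
    have hε2 : ε ^ 2 = n ^ (q + 2) * n₁ * ((q + 2 : ℕ) ^ q * n₁ ^ (q + 1)) := by
      rw [hε, hn]; ring
    have hε3 : (q + 2 : ℕ) * ε = n ^ (q + 2) := by rw [hε, hn]; ring
    have key : (1 + (ε + η)) ^ (q + 2) - 1 - n ^ (q + 2) =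
        η * ((q + 2 : ℕ) + k * (2 * ε + η)) + n ^ (q + 2) * n₁ * ((q + 2 : ℕ) ^ q * n₁ ^ (q + 1) * k) := by
      rw [one_pow, one_pow, mul_one] at hk
      rw [hk, ← hε3, mul_assoc _ n₁]
      rw [← hε3, mul_assoc] at hε2
      linear_combination k * hε2
    constructor
    · have hnK : ((n : 𝓞 K) : K) ≠ 0 := by simpa using hn0
      have hrw : (((1 + (ε + η) : 𝓞 K) : K) ^ (q + 2) - 1) / (n : K) ^ (q + 2) - 1 =
          (((1 + (ε + η)) ^ (q + 2) - 1 - n ^ (q + 2) : 𝓞 K) : K) / (n : K) ^ (q + 2) := by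
        have := pow_ne_zero (q + 2) hnK
        field_simp
        simp
      rw [hrw, key, map_div₀, map_pow]
      refine lt_of_le_of_lt ?_ ((hv₁ r hr).trans_le (hπle r))
      refine div_le_of_le_mul₀ zero_le zero_le ?_
      rw [show ((η * ((q + 2 : ℕ) + k * (2 * ε + η)) + n ^ (q + 2) * n₁ * ((q + 2 : ℕ) ^ q * n₁ ^ (q + 1) * k) : 𝓞 K) : K)
        = (η : K) * (((q + 2 : ℕ) + k * (2 * ε + η) : 𝓞 K) : K) + (n : K) ^ (q + 2) * n₁ * (((q + 2 : ℕ) ^ q * n₁ ^ (q + 1) * k : 𝓞 K) : K) by simp]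
      refine (Valuation.map_add _ _ _).trans (max_le ?_ ?_)
      · rw [map_mul, mul_comm (r.valuation K (n₁ : K))]
        exact (mul_le_of_le_one_right' (r.valuation_le_one _)).trans hη1
      · rw [map_mul, map_mul, map_pow, mul_comm (r.valuation K (n₁ : K))]
        exact (mul_le_of_le_one_right' (r.valuation_le_one _))
    · rw [show ((1 + (ε + η) : 𝓞 K) : K) - 1 = (ε : K) + η by simp]
      refine lt_of_le_of_lt ?_ (hv₁ r hr)
      refine (Valuation.map_add _ _ _).trans (max_le (hle r _ _ ?_) hη2)
      rw [hε]
      exact (dvd_pow_self _ (by omega)).mul_left _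
  · refine le_antisymm (r.valuation_le_one π) (not_lt.1 fun h => hr ?_)
    rw [← mem_iff_val] at h
    rw [hn, hn₁, pow_succ]
    exact Ideal.mul_mem_left _ _ (Ideal.mul_mem_right _ _ (Ideal.mul_mem_left _ _ (Ideal.mul_mem_left _ _ h)))
  · refine ⟨I c, hIc c, ?_⟩
    rw [hn, hn₁]
    refine Ideal.mul_mem_left _ _ (Ideal.mul_mem_left _ _ ?_)
    rw [hn₀, ← Finset.mul_prod_erase _ _ (Finset.mem_univ c)]
    exact Ideal.mul_mem_right _ _ (hxI c)

end ClRank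

namespace ClRank
set_option linter.unusedSectionVars false
set_option linter.unusedVariables false

open scoped nonZeroDivisors Pointwise WithZero
open IsDedekindDomain HeightOneSpectrum Polynomial

section
variable {K : Type*} [Field K] [NumberField K] {p : ℕ}

lemma val_le_of_dvd (r : HeightOneSpectrum (𝓞 K)) {x y : 𝓞 K} (h : x ∣ y) :
    r.valuation K y ≤ r.valuation K x := by
  obtain ⟨b, rfl⟩ := h
  rw [show ((x * b : 𝓞 K) : K) = (x : K) * b by simp, map_mul]
  exact mul_le_of_le_one_right' (r.valuation_le_one b)

lemma val_pow_sub (r : HeightOneSpectrum (𝓞 K)) (x y : 𝓞 K) (k : ℕ) :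
    r.valuation K ((x : K) ^ k - (y : K) ^ k) ≤ r.valuation K ((x : K) - y) := by
  have := val_le_of_dvd r (sub_dvd_pow_sub_pow x y k)
  simpa using this

/-- At a tame place the class of `G p z 1 x` modulo local `p`-th powers depends on `x` modulo the place only. -/
lemma Sp_G_transfer (hp : p.Prime) (hodd : Odd p) {z : K} (hz : IsPrimitiveRoot z p) {r : HeightOneSpectrum (𝓞 K)}
    (hr : r.valuation K (z - 1) = 1) {x y : 𝓞 K} (hxy : r.valuation K ((x : K) - y) < 1)
    (hy : r.valuation K ((y : K) ^ p - 1) = 1) (h : Sp p z r (G p z 1 (y : K) / G p z 1 1)) :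
    Sp p z r (G p z 1 (x : K) / G p z 1 1) := by
  have hGy : G p z 1 (y : K) ≠ 0 := by
    have := val_G hp hodd hz (r.valuation_le_one y) hy
    intro h0
    change r.valuation K (G p z 1 (y : K)) = 1 at this
    rw [h0] at this
    simp at this
  have h1 : Sp p z r (G p z 1 (x : K) / G p z 1 (y : K)) := by
    refine Sp_G_congr hp hz fun j _ _ => ?_
    rw [hr, one_pow, mul_one, sub_sub_sub_cancel_right, ← mul_sub, map_mul, val_root hp hz, one_mul]
    obtain ⟨ζ, rfl⟩ : ∃ ζ : 𝓞 K, (ζ : K) = z := ⟨⟨z, hz.isIntegral hp.pos⟩, rfl⟩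
    have h2 := val_pow_sub r (ζ ^ j * y) 1 p
    have h3 : ((ζ ^ j * y : 𝓞 K) : K) ^ p = (y : K) ^ p := by
      have : ((ζ ^ j * y : 𝓞 K) : K) = (ζ : K) ^ j * y := by simp
      rw [this, mul_pow, ← pow_mul, mul_comm j, pow_mul, hz.pow_eq_one, one_pow, one_mul]
    rw [h3] at h2
    have h4 : ((1 : 𝓞 K) : K) = 1 := by simp
    rw [h4, one_pow, hy] at h2
    refine hxy.trans_le (h2.trans_eq ?_)
    simp
  have h2 := h1.mul hp.ne_zero hz h
  rwa [div_mul_div_cancel₀ hGy] at h2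

/-- Parameters satisfying `LocalData`, together with a place `l` of large residue characteristic where
`degree_discr` applies. First `a` is chosen by the Chinese remainder theorem, and then `v`, whose
conditions depend on `a` and on `1 - (-1) ^ m * a ^ p`. -/
theorem exists_data (hp : p.Prime) (hp3 : 3 ≤ p) (m : ℕ) {z : K} (hz : IsPrimitiveRoot z p) (B : ℕ) :
    ∃ (a v n : 𝓞 K) (r₁ r₂ r₃ : HeightOneSpectrum (𝓞 K)), LocalData p m z a v n r₁ r₂ r₃ ∧
      ∃ (l : HeightOneSpectrum (𝓞 K)) (q : ℕ), q.Prime ∧ B < q ∧ (q : 𝓞 K) ∈ l.asIdeal ∧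
        l.valuation K (a : K) = WithZero.exp (-1 : ℤ) ∧
        l.valuation K ((v : K) ^ p - 1) ≤ l.valuation K (a : K) ^ p := by
  classical
  have hp0 := hp.ne_zero
  have hz1 : z ≠ 1 := hz.ne_one hp.one_lt
  have hodd : Odd p := hp.odd_of_ne_two (by omega)
  obtain ⟨n, ε, hn, hnear, hε, hfar, hcls⟩ := exists_base hp hz
  have hcast : ∀ {q : ℕ}, q.Prime → (q : 𝓞 K) ≠ 0 := fun hq => by exact_mod_cast hq.ne_zero
  obtain ⟨q, hq, hBq, l, hql, hnl, -⟩ := exists_big hn B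
  have hn1 := mul_ne_zero hn (hcast hq)
  obtain ⟨q₁, hq₁, -, r₁, hqr₁, hnr₁, hc₁⟩ := exists_big hn1 (p ^ 2)
  have hn2 := mul_ne_zero hn1 (hcast hq₁)
  obtain ⟨q₂, hq₂, -, r₂, hqr₂, hnr₂, hc₂⟩ := exists_big hn2 (p ^ 2)
  have hn3 := mul_ne_zero hn2 (hcast hq₂)
  obtain ⟨q₃, hq₃, -, r₃, hqr₃, hnr₃, hc₃⟩ := exists_big hn3 (p ^ 2)
  -- The four auxiliary places are distinct because their residue characteristics are.
  have hr₁l : r₁ ≠ l := by rintro rfl; exact hnr₁ (Ideal.mul_mem_left _ _ hql)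
  have hr₂l : r₂ ≠ l := by
    rintro rfl; exact hnr₂ (Ideal.mul_mem_right _ _ (Ideal.mul_mem_left _ _ hql))
  have hr₃l : r₃ ≠ l := by
    rintro rfl; exact hnr₃ (Ideal.mul_mem_right _ _ (Ideal.mul_mem_right _ _ (Ideal.mul_mem_left _ _ hql)))
  have hr₂₁ : r₂ ≠ r₁ := by rintro rfl; exact hnr₂ (Ideal.mul_mem_left _ _ hqr₁)
  have hr₃₁ : r₃ ≠ r₁ := by
    rintro rfl; exact hnr₃ (Ideal.mul_mem_right _ _ (Ideal.mul_mem_left _ _ hqr₁))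
  have hr₃₂ : r₃ ≠ r₂ := by rintro rfl; exact hnr₃ (Ideal.mul_mem_left _ _ hqr₂)
  have hn₁ : n ∉ r₁.asIdeal := fun h => hnr₁ (Ideal.mul_mem_right _ _ h)
  have hn₂ : n ∉ r₂.asIdeal := fun h => hnr₂ (Ideal.mul_mem_right _ _ (Ideal.mul_mem_right _ _ h))
  have hn₃ : n ∉ r₃.asIdeal := fun h =>
    hnr₃ (Ideal.mul_mem_right _ _ (Ideal.mul_mem_right _ _ (Ideal.mul_mem_right _ _ h)))
  have hw₁ := hfar r₁ hn₁
  have hw₂ := hfar r₂ hn₂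
  have hw₃ := hfar r₃ hn₃
  obtain ⟨t₁, ht₁, hT₁, hTS₁, hTG₁⟩ := (exists_t12 hp hp3 hz r₁ hw₁ hc₁).1
  obtain ⟨t₂, ht₂, hT₂, hTG₂⟩ := (exists_t12 hp hp3 hz r₂ hw₂ hc₂).2
  obtain ⟨t₃, ht₃, hT₃, hTS₃⟩ := exists_t hp0 hodd hz r₃ hw₃ hc₃
  obtain ⟨ϖ, hϖ⟩ := valuation_exists_uniformizer' K l
  have hexp : (WithZero.exp (-1 : ℤ) : ℤᵐ⁰) < 1 := by
    rw [← WithZero.exp_zero, WithZero.exp_lt_exp]; norm_num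
  have hvn0 : ∀ r : HeightOneSpectrum (𝓞 K), r.valuation K (n : K) ≠ 0 := fun r => by simpa using hn
  obtain ⟨a, ha⟩ := crt ({r : HeightOneSpectrum (𝓞 K) | n ∈ r.asIdeal} ∪ {l, r₁, r₂, r₃})
    ((finite_dvd n hn).union (by simp))
    (fun r => if r = l then ϖ else if r = r₃ then (-1) ^ m * t₃ else 0)
    (fun r => if n ∈ r.asIdeal then r.valuation K n ^ (3 * (m + 1)) else if r = l then WithZero.exp (-2 : ℤ) else
      WithZero.exp (-1 : ℤ)) (fun r _ => by
        split_ifs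
        · exact pow_ne_zero _ (hvn0 r)
        · exact WithZero.exp_ne_zero
        · exact WithZero.exp_ne_zero)
  have hal : l.valuation K (a : K) = WithZero.exp (-1 : ℤ) := by
    have := ha l (by simp)
    rw [if_pos rfl, if_neg hnl, if_pos rfl, map_sub] at this
    have h2 : l.valuation K ((a : K) - ϖ) < l.valuation K (ϖ : K) :=
      (this.trans_lt (WithZero.exp_lt_exp.2 (by norm_num))).trans_eq hϖ.symm
    rw [show (a : K) = ϖ + (a - ϖ) by ring, Valuation.map_add_eq_of_lt_left _ h2]
    exact hϖ
  have han : ∀ r : HeightOneSpectrum (𝓞 K), n ∈ r.asIdeal → r.valuation K a ≤ r.valuation K n ^ (3 * (m + 1)) := by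
    intro r hr
    have hrl : r ≠ l := by rintro rfl; exact hnl hr
    have hr₃ : r ≠ r₃ := by rintro rfl; exact hn₃ hr
    have := ha r (Or.inl hr)
    rw [if_neg hrl, if_neg hr₃, if_pos hr, sub_zero] at this
    exact this
  have hamem : ∀ r : HeightOneSpectrum (𝓞 K), r = r₁ ∨ r = r₂ → a ∈ r.asIdeal := by
    intro r hr
    rw [mem_iff_val]
    refine lt_of_le_of_lt ?_ hexp
    rcases hr with rfl | rfl
    · have := ha r (by simp)
      rwa [if_neg hr₁l, if_neg hr₃₁.symm, if_neg hn₁, if_neg hr₁l, sub_zero] at this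
    · have := ha r (by simp)
      rwa [if_neg hr₂l, if_neg hr₃₂.symm, if_neg hn₂, if_neg hr₂l, sub_zero] at this
  have haa₃ : r₃.valuation K ((a : K) - (-1) ^ m * t₃) < 1 := by
    have := ha r₃ (by simp)
    rw [if_neg hr₃l, if_pos rfl, if_neg hn₃, if_neg hr₃l] at this
    refine lt_of_le_of_lt ?_ hexp
    simpa using this
  have hsq : ((-1) ^ m * (-1) ^ m : K) = 1 := by rw [← mul_pow]; simp
  have ha₃ : r₃.valuation K ((1 - (-1) ^ m * (a : K) ^ p) - (1 - (t₃ : K) ^ p)) < 1 := by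
    have h1 := val_pow_sub r₃ t₃ ((-1) ^ m * a) p
    have h2 : (((-1) ^ m * a : 𝓞 K) : K) = (-1) ^ m * a := by simp
    have h3 : (t₃ : K) - (-1) ^ m * a = -((-1) ^ m * ((a : K) - (-1) ^ m * t₃)) := by
      linear_combination (-t₃ : K) * hsq
    have h4 : ((-1 : K) ^ m * a) ^ p = (-1) ^ m * (a : K) ^ p := by
      rw [mul_pow, ← pow_mul, mul_comm, mul_comm m, pow_mul, hodd.neg_one_pow, mul_comm]
    rw [h2, h3, h4, Valuation.map_neg, map_mul, map_pow, Valuation.map_neg, map_one, one_pow, one_mul] at h1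
    rw [sub_sub_sub_cancel_left]
    exact h1.trans_lt haa₃
  obtain ⟨E, hE⟩ : ∃ E : 𝓞 K, E = 1 - (-1) ^ m * a ^ p := ⟨_, rfl⟩
  have hEK : (E : K) = 1 - (-1) ^ m * (a : K) ^ p := by rw [hE]; simp
  rw [← hEK] at ha₃
  have hE₃ : r₃.valuation K (E : K) = 1 := val_eq_of_close r₃ ha₃ hT₃
  have ha0 : a ≠ 0 := by
    rintro rfl
    have h1 : ((0 : 𝓞 K) : K) = 0 := by simp
    rw [h1, map_zero] at hal
    exact WithZero.exp_ne_zero hal.symm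
  have hE0 : E ≠ 0 := by
    rintro rfl
    have h1 : ((0 : 𝓞 K) : K) = 0 := by simp
    rw [h1, map_zero] at hE₃
    exact zero_ne_one hE₃
  have hva0 : ∀ r : HeightOneSpectrum (𝓞 K), r.valuation K (a : K) ≠ 0 := fun r => by simpa using ha0
  obtain ⟨v, hv⟩ := crt ({r : HeightOneSpectrum (𝓞 K) | n * a * E ∈ r.asIdeal} ∪ {r₁, r₂, r₃})
    ((finite_dvd _ (mul_ne_zero (mul_ne_zero hn ha0) hE0)).union (by simp))
    (fun r => if n ∈ r.asIdeal then 1 + ε else if r = r₁ then t₁ else if r = r₂ then t₂ else if r = r₃ then 0 else 1)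
    (fun r => if n ∈ r.asIdeal then r.valuation K n ^ (p + 1) else
      r.valuation K a ^ p * WithZero.exp (-1 : ℤ)) (fun r _ => by
        split_ifs
        · exact pow_ne_zero _ (hvn0 r)
        · exact mul_ne_zero (pow_ne_zero _ (hva0 r)) WithZero.exp_ne_zero)
  have hlt : ∀ r : HeightOneSpectrum (𝓞 K), r.valuation K a ^ p * WithZero.exp (-1 : ℤ) < 1 := fun r =>
    (mul_le_of_le_one_left' (pow_le_one' (r.valuation_le_one a) _)).trans_lt hexp
  have hvt₁ : r₁.valuation K ((v : K) - t₁) < 1 := by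
    have := hv r₁ (by simp)
    rw [if_neg hn₁, if_pos rfl, if_neg hn₁] at this
    refine lt_of_le_of_lt ?_ (hlt r₁)
    simpa using this
  have hvt₂ : r₂.valuation K ((v : K) - t₂) < 1 := by
    have := hv r₂ (by simp)
    rw [if_neg hn₂, if_neg hr₂₁, if_pos rfl, if_neg hn₂] at this
    refine lt_of_le_of_lt ?_ (hlt r₂)
    simpa using this
  have hv₃ : v ∈ r₃.asIdeal := by
    rw [mem_iff_val]
    have := hv r₃ (by simp)
    rw [if_neg hn₃, if_neg hr₃₁, if_neg hr₃₂, if_pos rfl, if_neg hn₃, sub_zero] at this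
    exact lt_of_le_of_lt this (hlt r₃)
  have helse : ∀ r : HeightOneSpectrum (𝓞 K), n ∉ r.asIdeal → n * a * E ∈ r.asIdeal → r ≠ r₁ → r ≠ r₂ → r ≠ r₃ →
      r.valuation K ((v : K) - 1) ≤ r.valuation K a ^ p * WithZero.exp (-1 : ℤ) := by
    intro r hr hr' h₁ h₂ h₃
    have := hv r (Or.inl hr')
    rw [if_neg hr, if_neg h₁, if_neg h₂, if_neg h₃, if_neg hr] at this
    simpa using this
  have helse' : ∀ r : HeightOneSpectrum (𝓞 K), n ∉ r.asIdeal → a ∈ r.asIdeal → r ≠ r₁ → r ≠ r₂ → r ≠ r₃ →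
      r.valuation K ((v : K) ^ p - 1) ≤ r.valuation K a ^ p := by
    intro r hr hr' h₁ h₂ h₃
    have h := helse r hr (Ideal.mul_mem_right _ _ (Ideal.mul_mem_left _ _ hr')) h₁ h₂ h₃
    have h1 := val_pow_sub r v 1 p
    have h4 : ((1 : 𝓞 K) : K) = 1 := by simp
    rw [h4, one_pow] at h1
    exact h1.trans (h.trans (mul_le_of_le_one_right' hexp.le))
  have hvv₁ : r₁.valuation K (v : K) = 1 := val_eq_of_close r₁ hvt₁ ht₁
  have hvv₂ : r₂.valuation K (v : K) = 1 := val_eq_of_close r₂ hvt₂ ht₂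
  have hclose : ∀ (r : HeightOneSpectrum (𝓞 K)) (t : 𝓞 K), r.valuation K ((v : K) - t) < 1 →
      r.valuation K (((v : K) ^ p - 1) - ((t : K) ^ p - 1)) < 1 := by
    intro r t h
    rw [sub_sub_sub_cancel_right]
    exact (val_pow_sub r v t p).trans_lt h
  have hV₁ := val_eq_of_close r₁ (hclose r₁ t₁ hvt₁) hT₁
  have hV₂ := val_eq_of_close r₂ (hclose r₂ t₂ hvt₂) hT₂
  have hv0 : v ≠ 0 := by
    rintro rfl
    have h1 : ((0 : 𝓞 K) : K) = 0 := by simp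
    rw [h1, map_zero] at hvv₁
    exact zero_ne_one hvv₁
  have ha₃' : a ∉ r₃.asIdeal := by
    intro h
    rw [mem_iff_val] at h
    refine h.ne (val_eq_of_close r₃ haa₃ ?_)
    rw [map_mul, map_pow, Valuation.map_neg, map_one, one_pow, one_mul, ht₃]
  refine ⟨a, v, n, r₁, r₂, r₃, ?_, l, q, hq, hBq, hql, hal,
    helse' l hnl ?_ hr₁l.symm hr₂l.symm hr₃l.symm⟩
  · exact
    { ha := ha0
      hv := hv0
      hn := hn
      near := fun r hr => by
        have hvr := hv r (Or.inl (Ideal.mul_mem_right _ _ (Ideal.mul_mem_right _ _ hr)))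
        rw [if_pos hr, if_pos hr] at hvr
        have h := hε r hr v hvr
        exact ⟨hnear r hr, h.1, h.2, han r hr⟩
      far := hfar
      c₁ := fun r hr hvr => by
        by_contra hcon
        rw [← hEK] at hcon
        have hEr : E ∈ r.asIdeal := by
          rw [mem_iff_val]
          exact lt_of_le_of_ne (r.valuation_le_one E) hcon
        rw [mem_iff_val] at hvr
        have h₁ : r ≠ r₁ := by rintro rfl; exact hvr.ne hvv₁
        have h₂ : r ≠ r₂ := by rintro rfl; exact hvr.ne hvv₂
        have h₃ : r ≠ r₃ := by rintro rfl; exact hcon hE₃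
        have h := (helse r hr (Ideal.mul_mem_left _ _ hEr) h₁ h₂ h₃).trans_lt (hlt r)
        exact hvr.ne (val_eq_of_close r h (map_one _))
      c₂ := fun r hr har => by
        by_cases h₁ : r = r₁
        · exact Or.inl (h₁ ▸ hV₁)
        by_cases h₂ : r = r₂
        · exact Or.inl (h₂ ▸ hV₂)
        exact Or.inr (helse' r hr har h₁ h₂ (by rintro rfl; exact ha₃' har))
      cls := hcls
      hr₁ := hn₁
      hr₂ := hn₂
      hr₃ := hn₃
      ha₁ := hamem r₁ (Or.inl rfl)
      ha₂ := hamem r₂ (Or.inr rfl)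
      hv₁ := hvv₁
      hv₂ := hvv₂
      hV₁ := hV₁
      hV₂ := hV₂
      hS₁ := fun h => hTS₁ (h.congr_unit hp0 hz hz1 hw₁ hV₁ (by
        rw [Valuation.map_sub_swap]; exact hclose r₁ t₁ hvt₁))
      hG₁ := Sp_G_transfer hp hodd hz hw₁ hvt₁ hT₁ hTG₁
      hG₂ := fun h => hTG₂ (Sp_G_transfer hp hodd hz hw₂ (by rwa [Valuation.map_sub_swap]) hV₂ h)
      hv₃ := hv₃
      hS₃ := fun h => hTS₃ ((hEK ▸ h).congr_unit hp0 hz hz1 hw₃ hE₃ (by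
        rwa [Valuation.map_sub_swap])) }
  · rw [mem_iff_val]
    exact hal.trans_lt hexp

end
end ClRank

/-! ### Infinitely many fields -/

namespace ClRank
set_option linter.unusedSectionVars false
set_option linter.unusedVariables false

open scoped nonZeroDivisors Pointwise WithZero
open IsDedekindDomain HeightOneSpectrum Polynomial

/-- Extensions of degree `m + 1` with large class rank exist with arbitrarily large discriminant. -/
theorem exists_ext {K : Type*} [Field K] [NumberField K] {p m : ℕ} (hp : p.Prime) (hp3 : 3 ≤ p) (hm : 1 ≤ m)
    (hmp : m + 1 < p) {z : K} (hz : IsPrimitiveRoot z p) (B : ℕ) :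
    ∃ (L : IntermediateField K (AlgebraicClosure K)) (_ : NumberField L), Module.finrank K L = m + 1 ∧
      3 + nRank p (ClassGroup (𝓞 K)) ≤ nRank p (ClassGroup (𝓞 L)) ∧ B < (discr L).natAbs := by
  obtain ⟨a, v, n, r₁, r₂, r₃, D, l, q, hq, hBq, hql, hal, hvl⟩ := exists_data hp hp3 m hz B
  obtain ⟨hmon, hdeg⟩ := fpoly_monic (R := 𝓞 K) hm (v ^ p) (a ^ p)
  let f : K[X] := fpoly m ((v : K) ^ p) ((a : K) ^ p)
  obtain ⟨hmonf, hdegf⟩ : f.Monic ∧ f.natDegree = m + 1 := fpoly_monic hm _ _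
  obtain ⟨x, hx⟩ := IsAlgClosed.exists_aeval_eq_zero (AlgebraicClosure K) f
    (by rw [Polynomial.degree_eq_natDegree hmonf.ne_zero, hdegf]; exact_mod_cast Nat.succ_ne_zero m)
  have hxint : IsIntegral K x := Algebra.IsIntegral.isIntegral x
  let L : IntermediateField K (AlgebraicClosure K) := IntermediateField.adjoin K {x}
  have hfin : Module.Finite K L := IntermediateField.adjoin.finiteDimensional hxint
  have hNF : NumberField L := NumberField.of_module_finite K L
  have hle : Module.finrank K L ≤ m + 1 := by
    rw [show Module.finrank K L = _ from IntermediateField.adjoin.finrank hxint, ← hdegf]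
    exact Polynomial.natDegree_le_of_dvd (minpoly.dvd K x hx) hmonf.ne_zero
  let y₀ : L := IntermediateField.AdjoinSimple.gen K x
  have hy₀ : (y₀ : AlgebraicClosure K) = x := IntermediateField.AdjoinSimple.coe_gen K x
  have hgen : IntermediateField.adjoin K {y₀} = ⊤ := by
    apply IntermediateField.lift_injective L
    rw [IntermediateField.lift_adjoin_simple, IntermediateField.lift_top, hy₀]
  have hfy : aeval y₀ f = 0 := by
    apply (algebraMap L (AlgebraicClosure K)).injective
    rw [← Polynomial.aeval_algebraMap_apply, map_zero]
    exact hx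
  have hfy' : (y₀ - 1) ^ m * (y₀ - algebraMap K L v ^ p) = algebraMap K L a ^ p * y₀ := by
    rw [aeval_fpoly, map_pow, map_pow] at hfy
    exact sub_eq_zero.1 hfy
  have hyint : IsIntegral (𝓞 K) y₀ := by
    refine ⟨fpoly m (v ^ p) (a ^ p), hmon, ?_⟩
    rw [← Polynomial.aeval_def, aeval_fpoly, map_pow, map_pow, sub_eq_zero]
    exact hfy'
  have : IsScalarTower ℤ (𝓞 K) L := IsScalarTower.of_algebraMap_eq' (RingHom.ext_int _ _)
  have hyint' : IsIntegral ℤ y₀ := isIntegral_trans (A := 𝓞 K) _ hyint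
  let y : 𝓞 L := ⟨y₀, hyint'⟩
  have hyc : (y : L) = y₀ := rfl
  obtain ⟨hL, hdisc⟩ := degree_discr hp hm hmp hle (y := y) hfy' l hal hvl hq hql
  refine ⟨L, hNF, hL, ?_, ?_⟩
  · refine rank_of_data hp hp3 hm hmp hz D hL (y := y) hgen ?_
    apply FaithfulSMul.algebraMap_injective (𝓞 L) L
    rw [aeval_fpoly, map_zero, map_sub, sub_eq_zero]
    simp only [map_mul, map_pow, map_sub, map_one]
    exact hfy'
  · refine hBq.trans_le (Nat.le_of_dvd (Int.natAbs_pos.2 (discr_ne_zero L)) ?_)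
    exact Int.natCast_dvd.1 hdisc

end ClRank

/-- Let `p ≥ 3` be prime, `2 ≤ d ≤ p-1`, and let `K` be a number field containing a
primitive `p`-th root of unity.  Then there are infinitely many pairwise non-isomorphic
extensions `L/K` of degree `d` (inside a fixed algebraic closure of `K`) with
`rank_p Cl(L) ≥ 3 + rank_p Cl(K)`. -/
theorem infinitely_many_deg_d_ext_with_large_p_class_rank
    (p : ℕ) (hp : p.Prime) (hp3 : 3 ≤ p) (d : ℕ) (hd2 : 2 ≤ d) (hdp : d ≤ p - 1)
    (K : Type*) [Field K] [NumberField K] (ζ : K) (hζ : IsPrimitiveRoot ζ p) :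
    ∃ S : Set (IntermediateField K (AlgebraicClosure K)), S.Infinite ∧
      (∀ L₁ ∈ S, ∀ L₂ ∈ S, L₁ ≠ L₂ → IsEmpty (L₁ ≃ₐ[K] L₂)) ∧
      ∀ L ∈ S, Module.finrank K L = d ∧
        3 + nRank p (ClassGroup (𝓞 K)) ≤ nRank p (ClassGroup (𝓞 L)) := by
  choose L hNF hdeg hrank hdisc using fun B =>
    ClRank.exists_ext hp hp3 (m := d - 1) (by omega) (by omega) hζ B
  let D : ℕ → ℕ := fun B => (discr (L B)).natAbs
  -- Each field is chosen with discriminant exceeding that of its predecessor.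
  let b : ℕ → ℕ := fun k => Nat.rec 0 (fun _ B => D B) k
  have hmono : StrictMono fun k => D (b k) := strictMono_nat_of_lt_succ fun k => hdisc (b (k + 1))
  have hiso : ∀ i j, (L (b i) ≃ₐ[K] L (b j)) → i = j := fun i j e =>
    hmono.injective (congrArg Int.natAbs (discr_eq_discr_of_ringEquiv _ e.toRingEquiv))
  refine ⟨Set.range fun k => L (b k), Set.infinite_range_of_injective fun i j h => ?_, ?_, ?_⟩
  · exact hiso i j (IntermediateField.equivOfEq h)
  · rintro _ ⟨i, rfl⟩ _ ⟨j, rfl⟩ hne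
    exact ⟨fun e => hne (by rw [hiso i j e])⟩
  · rintro _ ⟨k, rfl⟩
    exact ⟨(hdeg _).trans (by omega), hrank _⟩
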